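/- Let Γ = ℤ^5 ⋊ ℤ/4 where the generator of ℤ/4 acts on ℤ^5 by the matrix [[-1,0,0,0,0],[0,-1,0,0,0],[0,0,0,0,-1],[0,0,1,0,1],[0,0,0,-1,1]]. Then H^1(Γ,ℤ) ≅ ℤ; H^2(Γ,ℤ) ≅ ℤ^2 ⊕ ℤ/4 ⊕ (ℤ/2)^2; H^3(Γ,ℤ) ≅ ℤ^2 ⊕ (ℤ/4)^2 ⊕ ℤ/2; H^4(Γ,ℤ) ≅ ℤ ⊕ (ℤ/4)^2 ⊕ (ℤ/2)^5; H^5(Γ,ℤ) ≅ ℤ ⊕ ℤ/4 ⊕ (ℤ/2)^6; and H^i(Γ,ℤ) ≅ (ℤ/4)^2 ⊕ (ℤ/2)^6 for all i ≥ 6. -/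

import Mathlib

open Matrix

namespace Crystal

/-- The lattice `ℤ^n`, written multiplicatively so that it can be a factor of a semidirect
product of groups. -/
abbrev Lat (n : ℕ) : Type := Multiplicative (Fin n → ℤ)

/-- The invertible integer matrix determined by `M` with `M ^ (m + 1) = 1`. -/
def matUnit {n : ℕ} (M : Matrix (Fin n) (Fin n) ℤ) (m : ℕ) (hm : M ^ (m + 1) = 1) :
    (Matrix (Fin n) (Fin n) ℤ)ˣ :=
  ⟨M, M ^ m, by rw [← pow_succ']; exact hm, by rw [← pow_succ]; exact hm⟩

/-- Linear automorphisms of `ℤ^n` as multiplicative automorphisms of the multiplicative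
version of `ℤ^n`. -/
def linToAut (n : ℕ) : ((Fin n → ℤ) ≃ₗ[ℤ] (Fin n → ℤ)) →* MulAut (Lat n) :=
  MonoidHom.mk' (fun e => AddEquiv.toMultiplicative e.toAddEquiv) (fun _ _ => rfl)

/-- An invertible integer matrix acts on the (multiplicative) lattice `ℤ^n` by (left)
matrix-vector multiplication. -/
def glToAut (n : ℕ) : (Matrix (Fin n) (Fin n) ℤ)ˣ →* MulAut (Lat n) :=
  (linToAut n).comp
    ((LinearMap.GeneralLinearGroup.generalLinearEquiv ℤ (Fin n → ℤ)).toMonoidHom.comp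
      (Matrix.GeneralLinearGroup.toLin).toMonoidHom)

/-- The homomorphism from `ℤ/m` (written multiplicatively) to a group `G` sending the
generator `1` to a chosen element `α` satisfying `α ^ m = 1`. -/
def zmodHom {G : Type*} [Group G] (m : ℕ) [NeZero m] (α : G) (hα : α ^ m = 1) :
    Multiplicative (ZMod m) →* G :=
  MonoidHom.mk' (fun g => α ^ (g.toAdd.val)) (by
    intro a b
    show α ^ (ZMod.val (a.toAdd + b.toAdd)) = α ^ (ZMod.val a.toAdd) * α ^ (ZMod.val b.toAdd)
    rw [ZMod.val_add, ← pow_eq_pow_mod _ hα, pow_add])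

/-- The action of `ℤ/q` on the lattice `ℤ^n` in which the generator `1` of `ℤ/q` acts by left
multiplication by the integer matrix `M`; `M` is required to satisfy `M ^ q = 1`. -/
def matAction {n : ℕ} (q : ℕ) [NeZero q] (M : Matrix (Fin n) (Fin n) ℤ)
    (hq : M ^ q = 1) : Multiplicative (ZMod q) →* MulAut (Lat n) :=
  zmodHom q (glToAut n (matUnit M (q - 1) (by
      rwa [Nat.sub_add_cancel (Nat.one_le_iff_ne_zero.2 (NeZero.ne q))])))
    (by
      rw [← map_pow]
      convert map_one (glToAut n)
      ext i j
      rw [Units.val_pow_eq_pow_val]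
      simp [matUnit, hq])

/-- The crystallographic group `ℤ^n ⋊ ℤ/q` in which the generator `1` of `ℤ/q` acts on the
lattice `ℤ^n` by left multiplication by the integer matrix `M` (with `M ^ q = 1`). -/
abbrev Crys {n : ℕ} (q : ℕ) [NeZero q] (M : Matrix (Fin n) (Fin n) ℤ) (hq : M ^ q = 1) : Type :=
  SemidirectProduct (Lat n) (Multiplicative (ZMod q)) (matAction q M hq)


open CategoryTheory groupCohomology

variable {k : Type} [CommRing k]

lemma comp_contractNth {G H : Type*} [Monoid G] [Monoid H] (f : G →* H) {n : ℕ}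
    (j : Fin (n + 1)) (g : Fin (n + 1) → G) (i : Fin n) :
    f (Fin.contractNth j (· * ·) g i) = Fin.contractNth j (· * ·) (fun l => f (g l)) i := by
  rcases lt_trichotomy (i : ℕ) j with h | h | h
  · rw [Fin.contractNth_apply_of_lt _ _ _ _ h, Fin.contractNth_apply_of_lt _ _ _ _ h]
  · rw [Fin.contractNth_apply_of_eq _ _ _ _ h, Fin.contractNth_apply_of_eq _ _ _ _ h,
      _root_.map_mul]
  · rw [Fin.contractNth_apply_of_gt _ _ _ _ h, Fin.contractNth_apply_of_gt _ _ _ _ h]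

/-- The map of inhomogeneous cochain complexes induced (contravariantly in the group,
covariantly in the coefficients) by a group homomorphism `f : H →* G` together with a
compatible linear map `τ : A → B` of coefficients. -/
def cochainsMap {G H : Type} [Group G] [Group H] (A : Rep k G) (B : Rep k H)
    (f : H →* G) (τ : A →ₗ[k] B)
    (hcomp : ∀ (h : H) (a : A), τ (A.ρ (f h) a) = B.ρ h (τ a)) :
    inhomogeneousCochains A ⟶ inhomogeneousCochains B where
  f n := ModuleCat.ofHom
    { toFun := fun F v => τ (F (fun i => f (v i)))
      map_add' := fun x y => by funext v; simp
      map_smul' := fun r x => by funext v; simp }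
  comm' i j hij := by
    have hij' : i + 1 = j := hij
    subst hij'
    rw [inhomogeneousCochains.d_def, inhomogeneousCochains.d_def]
    ext F v
    show (inhomogeneousCochains.d B i).hom (fun w => τ (F (fun l => f (w l)))) v
      = τ ((inhomogeneousCochains.d A i).hom F (fun l => f (v l)))
    simp only [inhomogeneousCochains.d_hom_apply, map_add, map_sum, _root_.map_smul]
    congr 1
    · exact (hcomp (v 0) _).symm
    · refine Finset.sum_congr rfl fun j' _ => ?_
      have hc : (fun l => f (j'.contractNth (· * ·) v l))
          = j'.contractNth (· * ·) (fun l => f (v l)) := by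
        funext l
        exact comp_contractNth f j' v l
      rw [hc]

lemma cochainsMap_eq_id {G : Type} [Group G] (A : Rep k G) (f : G →* G) (τ : A →ₗ[k] A)
    (hcomp : ∀ (h : G) (a : A), τ (A.ρ (f h) a) = A.ρ h (τ a))
    (hf : ∀ x, f x = x) (hτ : ∀ a, τ a = a) :
    cochainsMap A A f τ hcomp = 𝟙 _ := by
  apply HomologicalComplex.Hom.ext
  funext n
  ext F v
  show τ (F (fun i => f (v i))) = F v
  simp only [hf, hτ]

lemma cochainsMap_comp {G H K : Type} [Group G] [Group H] [Group K]
    (A : Rep k G) (B : Rep k H) (C : Rep k K)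
    (f₁ : H →* G) (τ₁ : A →ₗ[k] B) (h₁ : ∀ (h : H) (a : A), τ₁ (A.ρ (f₁ h) a) = B.ρ h (τ₁ a))
    (f₂ : K →* H) (τ₂ : B →ₗ[k] C) (h₂ : ∀ (h : K) (a : B), τ₂ (B.ρ (f₂ h) a) = C.ρ h (τ₂ a))
    (f₃ : K →* G) (τ₃ : A →ₗ[k] C) (h₃ : ∀ (h : K) (a : A), τ₃ (A.ρ (f₃ h) a) = C.ρ h (τ₃ a))
    (hf : ∀ x, f₁ (f₂ x) = f₃ x) (hτ : ∀ a, τ₂ (τ₁ a) = τ₃ a) :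
    cochainsMap A B f₁ τ₁ h₁ ≫ cochainsMap B C f₂ τ₂ h₂ = cochainsMap A C f₃ τ₃ h₃ := by
  apply HomologicalComplex.Hom.ext
  funext n
  ext F v
  show τ₂ (τ₁ (F (fun i => f₁ (f₂ (v i))))) = τ₃ (F (fun i => f₃ (v i)))
  simp only [hf]
  exact hτ _

/-- Given an action `φ` of a group `G` on a group `L` and a representation `ψ` of `G` on a
`k`-module `V`, this is `H^j(L, V)` (with `L` acting trivially on the coefficients `V`),
endowed with the `G`-action functorially induced by the action of `G` on `L` and on `V`:
`g` acts via the conjugation automorphism `φ g⁻¹` of `L` and via `ψ g` on `V`. -/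
noncomputable def cohRep {G L V : Type} [Group G] [Group L] [AddCommGroup V] [Module k V]
    (φ : G →* MulAut L) (ψ : Representation k G V) (j : ℕ) : Rep k G :=
  Rep.of (X := groupCohomology (Rep.trivial k L V) j)
    { toFun := fun g => ModuleCat.Hom.hom <| HomologicalComplex.homologyMap
        (cochainsMap (Rep.trivial k L V) (Rep.trivial k L V) (φ g⁻¹).toMonoidHom (ψ g)
          (fun _ _ => rfl)) j
      map_one' := by
        have h := cochainsMap_eq_id (Rep.trivial k L V) (φ 1⁻¹).toMonoidHom (ψ 1)
          (fun _ _ => rfl) (fun x => by simp) (fun a => by simp)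
        exact congrArg ModuleCat.Hom.hom
          ((congrArg (fun m => HomologicalComplex.homologyMap m j) h).trans
            (HomologicalComplex.homologyMap_id _ j))
      map_mul' := fun g₁ g₂ => by
        have h := cochainsMap_comp (Rep.trivial k L V) (Rep.trivial k L V) (Rep.trivial k L V)
          (φ g₂⁻¹).toMonoidHom (ψ g₂) (fun _ _ => rfl)
          (φ g₁⁻¹).toMonoidHom (ψ g₁) (fun _ _ => rfl)
          (φ (g₁ * g₂)⁻¹).toMonoidHom (ψ (g₁ * g₂)) (fun _ _ => rfl)
          (fun x => by simp [_root_.mul_inv_rev]) (fun a => by simp)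
        exact congrArg ModuleCat.Hom.hom
          ((congrArg (fun m => HomologicalComplex.homologyMap m j) h.symm).trans
            (HomologicalComplex.homologyMap_comp _ _ j)) }


/-- `H^i(G, H^j(L, ℤ))`: the `i`-th cohomology of the cyclic group `ℤ/q` with coefficients in
the `j`-th cohomology of the lattice `ℤ^n` (with trivial `ℤ` coefficients), where the
`ℤ/q`-action on `H^j(ℤ^n, ℤ)` is the one functorially induced by the matrix action on the
lattice. -/
noncomputable abbrev cohOfCoh {n : ℕ} (q : ℕ) [NeZero q] (M : Matrix (Fin n) (Fin n) ℤ)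
    (hq : M ^ q = 1) (i j : ℕ) : ModuleCat ℤ :=
  groupCohomology
    (cohRep (matAction q M hq) (1 : Representation ℤ (Multiplicative (ZMod q)) ℤ) j) i

/-- `H^k(Γ, ℤ)` for `Γ = ℤ^n ⋊ ℤ/q`, with trivial coefficients `ℤ`. -/
noncomputable abbrev cohCrys {n : ℕ} (q : ℕ) [NeZero q] (M : Matrix (Fin n) (Fin n) ℤ)
    (hq : M ^ q = 1) (k : ℕ) : ModuleCat ℤ :=
  groupCohomology (Rep.trivial ℤ (Crys q M hq) ℤ) k

end Crystal

/-- The holonomy matrix. -/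
def holM : Matrix (Fin 5) (Fin 5) ℤ := !![-1, 0, 0, 0, 0; 0, -1, 0, 0, 0; 0, 0, 0, 0, -1; 0, 0, 1, 0, 1; 0, 0, 0, -1, 1]

lemma holM_pow : holM ^ 4 = 1 := by decide

/-- `H^k(ℤ^5 ⋊ ℤ/4, ℤ)`, where the generator of `ℤ/4` acts on `ℤ^5` by left
multiplication by the matrix `holM`. -/
noncomputable abbrev H (k : ℕ) : ModuleCat ℤ := Crystal.cohCrys 4 holM holM_pow k

/-- `H^i(ℤ/4, H^j(ℤ^5, ℤ))`, with the functorially induced action on coefficients. -/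
noncomputable abbrev Hc (i j : ℕ) : ModuleCat ℤ := Crystal.cohOfCoh 4 holM holM_pow i j

namespace Crx
set_option linter.unusedSectionVars false

/-! ### Families of matrices, acting on modules -/

section Basic
variable {R : Type} [Ring R] {M : Type} [AddCommGroup M] [Module R M]

/-- A matrix over `R` acts on vectors with entries in an `R`-module. -/
def act {α β : Type} [Fintype β] (A : Matrix α β R) (x : β → M) : α → M :=
  fun j => ∑ i, A j i • x i

lemma act_mul {α β γ : Type} [Fintype β] [Fintype γ] (A : Matrix α β R) (B : Matrix β γ R)
    (x : γ → M) : act (A * B) x = act A (act B x) := by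
  funext j
  simp only [act, Matrix.mul_apply, Finset.sum_smul, Finset.smul_sum, mul_smul]
  exact Finset.sum_comm

lemma act_add {α β : Type} [Fintype β] (A : Matrix α β R) (x y : β → M) :
    act A (x + y) = act A x + act A y := by
  funext j; simp [act, Finset.sum_add_distrib]

lemma act_sub {α β : Type} [Fintype β] (A : Matrix α β R) (x y : β → M) :
    act A (x - y) = act A x - act A y := by
  funext j; simp [act, smul_sub, Finset.sum_sub_distrib]

lemma act_neg {α β : Type} [Fintype β] (A : Matrix α β R) (x : β → M) :
    act A (-x) = - act A x := by
  funext j; simp [act]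

lemma act_zero {α β : Type} [Fintype β] (A : Matrix α β R) :
    act A (0 : β → M) = 0 := by
  funext j; simp [act]

lemma zero_act {α β : Type} [Fintype β] (x : β → M) :
    act (0 : Matrix α β R) x = 0 := by
  funext j; simp [act]

lemma neg_act {α β : Type} [Fintype β] (A : Matrix α β R) (x : β → M) :
    act (-A) x = - act A x := by
  funext j; simp [act]

/-- A family of matrices indexed by the naturals: the differentials of a cochain complex. -/
abbrev Mx (R : Type) (ι : ℕ → Type) : Type := ∀ n, Matrix (ι (n + 1)) (ι n) R

/-- Index types of a mapping cone. -/
def coneι (ι κ : ℕ → Type) : ℕ → Type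
  | 0 => ι 0
  | n + 1 => ι (n + 1) ⊕ κ n

instance coneFin {ι κ : ℕ → Type} [h : ∀ n, Fintype (ι n)] [h' : ∀ n, Fintype (κ n)] :
    ∀ n, Fintype (coneι ι κ n)
  | 0 => h 0
  | n + 1 => @instFintypeSum _ _ (h (n + 1)) (h' n)

variable {ι κ : ℕ → Type} [∀ n, Fintype (ι n)] [∀ n, Fintype (κ n)]

/-- The (shifted) mapping cone. -/
def cone (X : Mx R ι) (Y : Mx R κ) (f : ∀ n, Matrix (κ n) (ι n) R) : Mx R (coneι ι κ)
  | 0 => Matrix.fromRows (X 0) (f 0)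
  | n + 1 => Matrix.fromBlocks (X (n + 1)) 0 (f (n + 1)) (-(Y n))

/-- Pairs as vectors in positive degree of the cone. -/
def pr {n : ℕ} (x : ι (n + 1) → M) (y : κ n → M) : coneι ι κ (n + 1) → M := Sum.elim x y

lemma pr_surj {n : ℕ} (z : coneι ι κ (n + 1) → M) :
    ∃ x y, z = pr (ι := ι) (κ := κ) x y :=
  ⟨fun i => z (Sum.inl i), fun i => z (Sum.inr i), by funext i; cases i <;> rfl⟩

lemma pr_inj {n : ℕ} {x x' : ι (n + 1) → M} {y y' : κ n → M}
    (h : pr (ι := ι) (κ := κ) x y = pr x' y') : x = x' ∧ y = y' :=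
  ⟨funext fun i => congrFun h (Sum.inl i), funext fun i => congrFun h (Sum.inr i)⟩

lemma pr_zero {n : ℕ} : pr (ι := ι) (κ := κ) (0 : ι (n + 1) → M) (0 : κ n → M) = 0 := by
  funext i; cases i <;> rfl

lemma pr_add {n : ℕ} {x x' : ι (n + 1) → M} {y y' : κ n → M} :
    pr (ι := ι) (κ := κ) x y + pr x' y' = pr (x + x') (y + y') := by
  funext i; cases i <;> rfl

lemma cone_act_zero (X : Mx R ι) (Y : Mx R κ) (f : ∀ n, Matrix (κ n) (ι n) R) (x : ι 0 → M) :
    act (cone X Y f 0) x = pr (ι := ι) (κ := κ) (act (X 0) x) (act (f 0) x) := by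
  funext i; cases i <;> rfl

lemma cone_act_succ (X : Mx R ι) (Y : Mx R κ) (f : ∀ n, Matrix (κ n) (ι n) R) (n : ℕ)
    (x : ι (n + 1) → M) (y : κ n → M) :
    act (cone X Y f (n + 1)) (pr x y) =
      pr (ι := ι) (κ := κ) (act (X (n + 1)) x) (act (f (n + 1)) x - act (Y n) y) := by
  funext i
  cases i with
  | inl i =>
    exact (Fintype.sum_sum_type _).trans (by simp [cone, pr, act])
  | inr i =>
    exact (Fintype.sum_sum_type _).trans (by simp [cone, pr, act, sub_eq_add_neg])

/-- `d² = 0`. -/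
def Sq (X : Mx R ι) : Prop := ∀ n, X (n + 1) * X n = 0

/-- chain maps -/
def IsMap (X : Mx R ι) (Y : Mx R κ) (f : ∀ n, Matrix (κ n) (ι n) R) : Prop :=
  ∀ n, Y n * f n = f (n + 1) * X n

lemma sq_cone {X : Mx R ι} {Y : Mx R κ} {f : ∀ n, Matrix (κ n) (ι n) R}
    (hX : Sq X) (hY : Sq Y) (hf : IsMap X Y f) : Sq (cone X Y f)
  | 0 => by
    have h := Matrix.fromBlocks_mul_fromRows (X 0) (f 0) (X 1) 0 (f 1) (-(Y 0))
    refine h.trans ?_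
    rw [Matrix.zero_mul, hX 0, Matrix.neg_mul, hf 0, add_neg_cancel, add_zero]
    exact Matrix.fromRows_zero
  | n + 1 => by
    have h := Matrix.fromBlocks_multiply (X (n + 2)) 0 (f (n + 2)) (-(Y (n + 1)))
      (X (n + 1)) 0 (f (n + 1)) (-(Y n))
    refine h.trans ?_
    have e1 : X (n + 2) * X (n + 1) +
        (0 : Matrix (ι (n + 2 + 1)) (κ (n + 1)) R) * f (n + 1) = 0 := by
      rw [Matrix.zero_mul, hX (n + 1), add_zero]
    have e2 : X (n + 2) * (0 : Matrix (ι (n + 2)) (κ n) R) +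
        (0 : Matrix _ (κ (n + 1)) R) * -(Y n) = 0 := by
      rw [Matrix.zero_mul, Matrix.mul_zero, add_zero]
    have e3 : f (n + 2) * X (n + 1) + -(Y (n + 1)) * f (n + 1) = 0 := by
      rw [Matrix.neg_mul, hf (n + 1), add_neg_cancel]
    have e4 : f (n + 2) * (0 : Matrix (ι (n + 2)) (κ n) R) + -(Y (n + 1)) * -(Y n) = 0 := by
      rw [Matrix.mul_zero, Matrix.neg_mul, Matrix.mul_neg, hY n, neg_zero, neg_zero, add_zero]
    rw [e1, e2, e3, e4]
    exact Matrix.fromBlocks_zero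

/-- Acyclicity in positive degrees on a submodule. -/
def Acyc (X : Mx R ι) (K : Submodule R M) : Prop :=
  ∀ n (x : ι (n + 1) → M), (∀ i, x i ∈ K) → act (X (n + 1)) x = 0 →
    ∃ w : ι n → M, (∀ i, w i ∈ K) ∧ act (X n) w = x

lemma act_mem {α β : Type} [Fintype β] (A : Matrix α β R) {K : Submodule R M} {x : β → M}
    (hx : ∀ i, x i ∈ K) (j) : act A x j ∈ K :=
  Submodule.sum_mem _ fun i _ => K.smul_mem _ (hx i)

lemma pr_mem {n : ℕ} {K : Submodule R M} {x : ι (n + 1) → M} {y : κ n → M}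
    (hx : ∀ i, x i ∈ K) (hy : ∀ i, y i ∈ K) : ∀ i, pr (ι := ι) (κ := κ) x y i ∈ K
  | Sum.inl i => hx i
  | Sum.inr i => hy i

lemma acyc_cone {X : Mx R ι} {Y : Mx R κ} {f : ∀ n, Matrix (κ n) (ι n) R}
    (hf : IsMap X Y f) {K : Submodule R M}
    (aX : Acyc X K) (aY : Acyc Y K)
    (h0 : ∀ y : κ 0 → M, (∀ i, y i ∈ K) → act (Y 0) y = 0 →
      ∃ x : ι 0 → M, (∀ i, x i ∈ K) ∧ act (X 0) x = 0 ∧ act (f 0) x = y) :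
    Acyc (cone X Y f) K := by
  intro n z hz hdz
  obtain ⟨x, y, rfl⟩ := pr_surj z
  have hx : ∀ i, x i ∈ K := fun i => hz (Sum.inl i)
  have hy : ∀ i, y i ∈ K := fun i => hz (Sum.inr i)
  rw [cone_act_succ, ← pr_zero] at hdz
  obtain ⟨h1, h2⟩ := pr_inj hdz
  obtain ⟨w, hw, hwx⟩ := aX n x hx h1
  have hcyc : act (Y n) (y - act (f n) w) = 0 := by
    rw [act_sub, ← act_mul, hf n, act_mul, hwx, ← neg_sub, h2, neg_zero]
  have hmem : ∀ i, (y - act (f n) w) i ∈ K := fun i => K.sub_mem (hy i) (act_mem _ hw i)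
  cases n with
  | zero =>
    obtain ⟨x', hx', hdx', hfx'⟩ := h0 _ hmem hcyc
    refine ⟨w + x', fun i => K.add_mem (hw i) (hx' i), ?_⟩
    refine (cone_act_zero X Y f (w + x')).trans ?_
    rw [act_add, act_add, hwx, hdx', hfx', add_zero, add_sub_cancel]
  | succ n =>
    obtain ⟨v, hv, hdv⟩ := aY n _ hmem hcyc
    refine ⟨pr w (-v), pr_mem hw (fun i => K.neg_mem (hv i)), ?_⟩
    refine (cone_act_succ X Y f n w (-v)).trans ?_
    rw [hwx, act_neg, hdv, sub_neg_eq_add, add_sub_cancel]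

/-- Scalar matrices. -/
noncomputable def scal (c : R) (α : Type) : Matrix α α R :=
  letI := Classical.decEq α; Matrix.diagonal fun _ => c

lemma act_scal (c : R) {α : Type} [Fintype α] (x : α → M) : act (scal c α) x = fun i => c • x i := by
  classical
  funext j
  rw [act, Finset.sum_eq_single j]
  · simp [scal]
  · intro b _ hb
    simp [scal, hb.symm]
  · simp

lemma acyc_cone_scal {X Y : Mx R ι} {c : R} (hX : Sq X) (hf : IsMap X Y (fun n => scal c (ι n)))
    {K K' : Submodule R M} (hK' : ∀ m, m ∈ K' ↔ m ∈ K ∧ c • m = 0)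
    (hc : ∀ m ∈ K, ∃ x ∈ K, c • x = m) (aX : Acyc X K') :
    Acyc (cone X Y (fun n => scal c (ι n))) K := by
  intro n z hz hdz
  obtain ⟨x, y, rfl⟩ := pr_surj z
  have hx : ∀ i, x i ∈ K := fun i => hz (Sum.inl i)
  have hy : ∀ i, y i ∈ K := fun i => hz (Sum.inr i)
  rw [cone_act_succ, ← pr_zero] at hdz
  obtain ⟨h1, h2⟩ := pr_inj hdz
  choose w hw hcw using fun i => hc (y i) (hy i)
  have hfw : act (scal c (ι n)) w = y := by rw [act_scal]; exact funext hcw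
  have hx' : ∀ i, (x - act (X n) w) i ∈ K' := by
    intro i
    rw [hK']
    refine ⟨K.sub_mem (hx i) (act_mem _ hw i), ?_⟩
    have h3 : act (scal c (ι (n + 1))) (x - act (X n) w) = 0 := by
      rw [act_sub, ← act_mul, ← hf n, act_mul, hfw, h2]
    rw [act_scal] at h3
    exact congrFun h3 i
  have hd : act (X (n + 1)) (x - act (X n) w) = 0 := by
    rw [act_sub, h1, ← act_mul, hX n, zero_act, sub_zero]
  have hcyc : act (X (n + 1)) (x - act (X n) w) = 0 → ∃ v : ι n → M, (∀ i, v i ∈ K) ∧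
      act (scal c (ι n)) v = y ∧ act (X n) v = x := by
    intro h
    obtain ⟨v, hv, hdv⟩ := aX n _ hx' h
    refine ⟨w + v, fun i => K.add_mem (hw i) ((hK' _).1 (hv i)).1, ?_, ?_⟩
    · rw [act_add, hfw, act_scal c v]
      funext i
      simp [((hK' _).1 (hv i)).2]
    · rw [act_add, hdv, add_sub_cancel]
  obtain ⟨v, hv, hv1, hv2⟩ := hcyc hd
  cases n with
  | zero =>
    refine ⟨v, hv, ?_⟩
    refine (cone_act_zero X Y _ v).trans ?_
    rw [hv1, hv2]
  | succ n =>
    refine ⟨pr v 0, pr_mem hv (fun i => K.zero_mem), ?_⟩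
    refine (cone_act_succ X Y _ n v 0).trans ?_
    rw [hv1, hv2, act_zero, sub_zero]
end Basic
end Crx

namespace Crx
set_option linter.unusedSectionVars false
set_option linter.unusedSimpArgs false

section D3
variable {R : Type} [Ring R] {M : Type} [AddCommGroup M] [Module R M]

/-- One-by-one matrices. -/
def sc (c : R) : Matrix Unit Unit R := fun _ _ => c

lemma act_sc (c : R) (x : Unit → M) : act (sc c) x = fun _ => c • x () := by
  funext j; simp [act, sc]

/-- Periodic complex. -/
def per (a b : R) : Mx R (fun _ => Unit) := fun n => if Even n then sc a else sc b

/-- Index types of a two-term complex. -/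
def twoι : ℕ → Type
  | 0 => Unit
  | 1 => Unit
  | _ + 2 => Empty

instance twoFin : ∀ n, Fintype (twoι n)
  | 0 => inferInstanceAs (Fintype Unit)
  | 1 => inferInstanceAs (Fintype Unit)
  | _ + 2 => inferInstanceAs (Fintype Empty)

/-- Two-term complex. -/
def two (a : R) : Mx R twoι
  | 0 => sc a
  | _ + 1 => 0

/-- Direct sums. -/
def dsum {ι κ : ℕ → Type} (X : Mx R ι) (Y : Mx R κ) : Mx R (fun n => ι n ⊕ κ n) :=
  fun n => Matrix.fromBlocks (X n) 0 0 (Y n)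

/-- The data for the three dimensional group. -/
structure Dat (R : Type) [Ring R] where
  (σ σi τ s p r : R)
  h1 : σ * σi = 1
  h2 : σi * σ = 1
  h3 : σ * (σ * (σ * σ)) = 1
  h4 : p * σ = σ * p
  h5 : r * r = 1
  h6 : r * τ = τ * r
  h7 : τ * (τ * r) = p
  h8 : σi * (τ * r) = s
  h9 : s * s = p
  h10 : s * τ = σi * p
  h11 : s * σi = τ
  h12 : τ * σ = s

variable (D : Dat R)

/-- the norm element -/
def Dat.nm : R := 1 + D.σ + D.σ * D.σ + D.σ * (D.σ * D.σ)

lemma Dat.nm_left : (D.σ - 1) * D.nm = 0 := by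
  have := D.h3
  simp only [Dat.nm, mul_add, sub_mul, one_mul, mul_one, D.h3]; abel

lemma Dat.nm_right : D.nm * (D.σ - 1) = 0 := by
  have := D.h3
  simp only [Dat.nm, mul_sub, add_mul, one_mul, mul_one, mul_assoc, D.h3]; abel

lemma Dat.p_nm : (D.p - 1) * D.nm = D.nm * (D.p - 1) := by
  have h : ∀ x, D.p * (D.σ * x) = D.σ * (D.p * x) := fun x => by
    rw [← mul_assoc, D.h4, mul_assoc]
  simp only [Dat.nm, mul_sub, sub_mul, mul_add, add_mul, one_mul, mul_one, mul_assoc, D.h4, h]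
  abel

lemma sq_per {a b : R} (h : a * b = 0) (h' : b * a = 0) : Sq (per a b) := by
  intro n
  ext i j
  by_cases hn : Even n
  · simp [per, sc, Matrix.mul_apply, hn, Nat.even_add_one, h']
  · simp [per, sc, Matrix.mul_apply, hn, Nat.even_add_one, h]

lemma map_per {a b c : R} (h : a * c = c * a) (h' : b * c = c * b) :
    IsMap (per a b) (per a b) (fun _ => sc c) := by
  intro n
  ext i j
  by_cases hn : Even n
  · simp [per, sc, Matrix.mul_apply, hn, h]
  · simp [per, sc, Matrix.mul_apply, hn, h']

lemma sq_two {a : R} : Sq (two a) := fun _ => Matrix.zero_mul _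

lemma sq_dsum {ι κ : ℕ → Type} [∀ n, Fintype (ι n)] [∀ n, Fintype (κ n)] {X : Mx R ι} {Y : Mx R κ}
    (hX : Sq X) (hY : Sq Y) : Sq (dsum X Y) := by
  intro n
  refine (Matrix.fromBlocks_multiply _ _ _ _ _ _ _ _).trans ?_
  rw [hX n, hY n]
  simp

/-- complex for the first cyclic-by-infinite cyclic group -/
def cA : Mx R (coneι (fun _ => Unit) (fun _ => Unit)) :=
  cone (per (D.σ - 1) D.nm) (per (D.σ - 1) D.nm) (fun _ => sc (D.p - 1))

/-- complex for the second one -/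
def cB : Mx R (coneι (fun _ => Unit) (fun _ => Unit)) :=
  cone (per (D.r - 1) (1 + D.r)) (per (D.r - 1) (1 + D.r)) (fun _ => sc (D.τ - 1))

/-- the map `g` -/
def gW : ∀ n, Matrix (twoι n) (twoι n) R
  | 0 => sc (1 - D.τ + D.s - D.σi)
  | 1 => sc (1 - D.σi)
  | _ + 2 => 0

/-- the edge complex -/
def cW : Mx R (coneι twoι twoι) := cone (two (D.p - 1)) (two (D.s - 1)) (gW D)

/-- index types of cE -/
abbrev Eι : ℕ → Type := fun n =>
  coneι (fun _ => Unit) (fun _ => Unit) n ⊕ coneι (fun _ => Unit) (fun _ => Unit) n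

/-- the vertex complex -/
def cE : Mx R Eι := dsum (cA D) (cB D)

/-- the map from vertices to edges -/
def fE : ∀ n, Matrix (coneι twoι twoι n) (Eι n) R
  | 0 => fun _ j => match j with
    | Sum.inl _ => -1
    | Sum.inr _ => 1
  | 1 => fun i j => match i, j with
    | Sum.inl _, Sum.inl (Sum.inl _) => 0
    | Sum.inl _, Sum.inl (Sum.inr _) => -1
    | Sum.inl _, Sum.inr (Sum.inl _) => D.τ * D.τ
    | Sum.inl _, Sum.inr (Sum.inr _) => D.τ + 1
    | Sum.inr _, Sum.inl (Sum.inl _) => -(D.σi + D.τ)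
    | Sum.inr _, Sum.inl (Sum.inr _) => 0
    | Sum.inr _, Sum.inr (Sum.inl _) => -(D.σi * D.r)
    | Sum.inr _, Sum.inr (Sum.inr _) => D.σi * D.r - 1
  | 2 => fun i j => match i, j with
    | Sum.inl k, _ => k.elim
    | Sum.inr _, Sum.inl (Sum.inl _) => 0
    | Sum.inr _, Sum.inl (Sum.inr _) => D.σi
    | Sum.inr _, Sum.inr (Sum.inl _) => D.τ - D.σi
    | Sum.inr _, Sum.inr (Sum.inr _) => D.τ - D.σi * D.τ - D.σi
  | _ + 3 => 0

/-- index types of cD -/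
abbrev Dι : ℕ → Type := coneι Eι (coneι twoι twoι)

/-- the complex for the three dimensional group -/
def cD : Mx R Dι := cone (cE D) (cW D) (fE D)

lemma sq_cA : Sq (cA D) :=
  sq_cone (sq_per D.nm_left D.nm_right) (sq_per D.nm_left D.nm_right)
    (map_per (by simp only [mul_sub, sub_mul, one_mul, mul_one, D.h4]; abel) D.p_nm.symm)

lemma map_B : IsMap (per (D.r - 1) (1 + D.r)) (per (D.r - 1) (1 + D.r)) (fun _ => sc (D.τ - 1)) :=
    map_per (by simp only [mul_sub, sub_mul, one_mul, mul_one, D.h6]; abel)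
      (by simp only [mul_sub, sub_mul, mul_add, add_mul, one_mul, mul_one, D.h6]; abel)

lemma map_A : IsMap (per (D.σ - 1) D.nm) (per (D.σ - 1) D.nm) (fun _ => sc (D.p - 1)) :=
    map_per (by simp only [mul_sub, sub_mul, one_mul, mul_one, D.h4]; abel) D.p_nm.symm

lemma sq_cB : Sq (cB D) := by
  have e1 : (D.r - 1) * (1 + D.r) = 0 := by
    simp only [sub_mul, mul_add, one_mul, mul_one, D.h5]; abel
  have e2 : (1 + D.r) * (D.r - 1) = 0 := by
    simp only [mul_sub, add_mul, one_mul, mul_one, D.h5]; abel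
  exact sq_cone (sq_per e1 e2) (sq_per e1 e2) (map_B D)

lemma mat_ext {α β : Type} [Fintype β] {A B : Matrix α β R}
    (h : ∀ x : β → R, act A x = act B x) : A = B := by
  classical
  ext i j
  have := congrFun (h (Pi.single j 1)) i
  simpa [act, Pi.single_apply] using this

lemma sc_mul (a b : R) : sc a * sc b = sc (a * b) := by
  ext i j; simp [sc, Matrix.mul_apply]

/-- constant vector of length one -/
def u (m : M) : Unit → M := fun _ => m

lemma u_surj (x : Unit → M) : ∃ m, x = u m := ⟨x (), rfl⟩

lemma u_inj {a b : M} (h : u a = u b) : a = b := congrFun h ()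

lemma u_zero : u (0 : M) = 0 := rfl
lemma u_sub (a b : M) : u a - u b = u (a - b) := rfl
lemma u_add (a b : M) : u a + u b = u (a + b) := rfl
lemma u_neg (a : M) : - u a = u (-a) := rfl

lemma act_u (c : R) (m : M) : act (sc c) (u m) = u (c • m) := act_sc _ _

lemma act_two0 (c : R) (m : M) : act (two c 0) (u m) = (u (c • m) : twoι 1 → M) := act_sc _ _

lemma act_gW0 (m : M) : act (gW D 0) (u m) = (u ((1 - D.τ + D.s - D.σi) • m) : twoι 0 → M) :=
  act_sc _ _

lemma act_gW1 (m : M) : act (gW D 1) (u m) = (u ((1 - D.σi) • m) : twoι 1 → M) :=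
  act_sc _ _

lemma act_2 {α : Type} (A : Matrix α (Unit ⊕ Unit) R) (x : Unit ⊕ Unit → M) (i : α) :
    act A x i = A i (.inl ()) • x (.inl ()) + A i (.inr ()) • x (.inr ()) := by
  simp [act]

lemma act_4 {α : Type} (A : Matrix α ((Unit ⊕ Unit) ⊕ (Unit ⊕ Unit)) R)
    (x : (Unit ⊕ Unit) ⊕ (Unit ⊕ Unit) → M) (i : α) :
    act A x i = (A i (.inl (.inl ())) • x (.inl (.inl ())) +
      A i (.inl (.inr ())) • x (.inl (.inr ()))) +
      (A i (.inr (.inl ())) • x (.inr (.inl ())) +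
      A i (.inr (.inr ())) • x (.inr (.inr ()))) := by
  simp [act]

/-- vectors in degree zero of cE -/
def e0 (a b : M) : Eι 0 → M := Sum.elim (u a) (u b)

/-- vectors in positive degree of cE -/
def e4 (n : ℕ) (x y x' y' : M) : Eι (n + 1) → M :=
  Sum.elim (pr (ι := fun _ => Unit) (κ := fun _ => Unit) (n := n) (u x) (u y))
    (pr (ι := fun _ => Unit) (κ := fun _ => Unit) (n := n) (u x') (u y'))

lemma e0_surj (x : Eι 0 → M) : ∃ a b, x = e0 a b :=
  ⟨x (.inl ()), x (.inr ()), by funext i; rcases i with i | i <;> rfl⟩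

lemma e4_surj (n : ℕ) (x : Eι (n + 1) → M) : ∃ a b c d, x = e4 n a b c d :=
  ⟨x (.inl (.inl ())), x (.inl (.inr ())), x (.inr (.inl ())), x (.inr (.inr ())),
    by funext i; rcases i with (i | i) | (i | i) <;> rfl⟩

lemma e4_inj {n : ℕ} {x y x' y' a b a' b' : M} (h : e4 n x y x' y' = e4 n a b a' b') :
    x = a ∧ y = b ∧ x' = a' ∧ y' = b' :=
  ⟨congrFun h (.inl (.inl ())), congrFun h (.inl (.inr ())), congrFun h (.inr (.inl ())),
    congrFun h (.inr (.inr ()))⟩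

lemma e4_zero {n : ℕ} : e4 n (0 : M) 0 0 0 = 0 := by
  funext i; rcases i with (i | i) | (i | i) <;> rfl

lemma act_fE0 (a b : M) : act (fE D 0) (e0 a b) = (u (b - a) : twoι 0 → M) := by
  funext i
  refine (act_2 _ _ _).trans ?_
  show (-1 : R) • a + (1 : R) • b = b - a
  simp; abel

/-- vectors in degree one of cW -/
def w1 (z s : M) : coneι twoι twoι 1 → M := pr (ι := twoι) (κ := twoι) (n := 0) (u z) (u s)

/-- vectors in degree two of cW -/
def w2 (s : M) : coneι twoι twoι 2 → M :=
  pr (ι := twoι) (κ := twoι) (n := 1) (fun i => i.elim) (u s)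

lemma w1_surj (x : coneι twoι twoι 1 → M) : ∃ a b, x = w1 a b :=
  ⟨x (.inl ()), x (.inr ()), by funext i; rcases i with i | i <;> rfl⟩

lemma w2_surj (x : coneι twoι twoι 2 → M) : ∃ a, x = w2 a :=
  ⟨x (.inr ()), by funext i; rcases i with i | i; exacts [i.elim, rfl]⟩

lemma w3_eq (n : ℕ) (x y : coneι twoι twoι (n + 3) → M) : x = y := by
  funext i; rcases i with i | i <;> exact i.elim

lemma act_fE1 (x y x' y' : M) : act (fE D 1) (e4 0 x y x' y') =
    w1 (-y + (D.τ * D.τ) • x' + (D.τ + 1) • y')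
      (-((D.σi + D.τ) • x) - (D.σi * D.r) • x' + (D.σi * D.r - 1) • y') := by
  funext i
  rcases i with i | i
  · refine (act_4 _ _ _).trans ?_
    show ((0 : R) • x + (-1 : R) • y) + ((D.τ * D.τ) • x' + (D.τ + 1) • y') =
      (-y + (D.τ * D.τ) • x' + (D.τ + 1) • y')
    simp only [zero_smul, neg_smul, one_smul]; abel
  · refine (act_4 _ _ _).trans ?_
    show ((-(D.σi + D.τ)) • x + (0 : R) • y) +
      ((-(D.σi * D.r)) • x' + (D.σi * D.r - 1) • y') =
      (-((D.σi + D.τ) • x) - (D.σi * D.r) • x' + (D.σi * D.r - 1) • y')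
    simp only [zero_smul, neg_smul]; abel

lemma act_fE2 (x y x' y' : M) : act (fE D 2) (e4 1 x y x' y') =
    w2 (D.σi • y + (D.τ - D.σi) • x' + (D.τ - D.σi * D.τ - D.σi) • y') := by
  funext i
  rcases i with i | i
  · exact i.elim
  · refine (act_4 _ _ _).trans ?_
    show ((0 : R) • x + D.σi • y) +
      ((D.τ - D.σi) • x' + (D.τ - D.σi * D.τ - D.σi) • y') =
      D.σi • y + (D.τ - D.σi) • x' + (D.τ - D.σi * D.τ - D.σi) • y'
    simp only [zero_smul]; abel

lemma act_cW0 (m : M) : act (cW D 0) (u m) =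
    w1 ((D.p - 1) • m) ((1 - D.τ + D.s - D.σi) • m) := by
  refine (cone_act_zero _ _ _ _).trans ?_
  rw [w1]
  congr 1
  · exact act_sc _ _
  · exact act_sc _ _

lemma act_cW1 (z s : M) : act (cW D 1) (w1 z s) =
    w2 ((1 - D.σi) • z - (D.s - 1) • s) := by
  refine (cone_act_succ _ _ _ 0 _ _).trans ?_
  rw [w2]
  congr 1
  · funext i; exact i.elim
  · rw [act_gW1, act_two0]; rfl

lemma act_dsum {ι κ : ℕ → Type} [∀ n, Fintype (ι n)] [∀ n, Fintype (κ n)]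
    (X : Mx R ι) (Y : Mx R κ) (n : ℕ) (x : ι n → M) (y : κ n → M) :
    act (dsum X Y n) (Sum.elim x y) = Sum.elim (act (X n) x) (act (Y n) y) := by
  funext i
  rcases i with i | i <;> simp [act, dsum]

lemma per_even (a b : R) {n : ℕ} (h : Even n) : per a b n = sc a := if_pos h
lemma per_odd (a b : R) {n : ℕ} (h : ¬ Even n) : per a b n = sc b := if_neg h

lemma act_cE0 (a b : M) : act (cE D 0) (e0 a b) =
    e4 0 ((D.σ - 1) • a) ((D.p - 1) • a) ((D.r - 1) • b) ((D.τ - 1) • b) := by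
  refine (act_dsum _ _ 0 _ _).trans ?_
  refine (congrArg₂ Sum.elim (cone_act_zero _ _ _ _) (cone_act_zero _ _ _ _)).trans ?_
  rw [per_even _ _ Even.zero, per_even _ _ Even.zero, act_u, act_u, act_u, act_u]
  rfl

lemma act_cE_odd (n : ℕ) (hn : ¬ Even (n + 1)) (x y x' y' : M) :
    act (cE D (n + 1)) (e4 n x y x' y') =
    e4 (n + 1) (D.nm • x) ((D.p - 1) • x - (D.σ - 1) • y) ((1 + D.r) • x')
      ((D.τ - 1) • x' - (D.r - 1) • y') := by
  refine (act_dsum _ _ (n + 1) _ _).trans ?_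
  refine (congrArg₂ Sum.elim (cone_act_succ _ _ _ _ _ _) (cone_act_succ _ _ _ _ _ _)).trans ?_
  have hn' : Even n := by rwa [Nat.even_add_one, not_not] at hn
  rw [per_odd _ _ hn, per_odd _ _ hn, per_even _ _ hn', per_even _ _ hn']
  simp only [act_u, u_sub]
  rfl

lemma act_cE_even (n : ℕ) (hn : Even (n + 1)) (x y x' y' : M) :
    act (cE D (n + 1)) (e4 n x y x' y') =
    e4 (n + 1) ((D.σ - 1) • x) ((D.p - 1) • x - D.nm • y) ((D.r - 1) • x')
      ((D.τ - 1) • x' - (1 + D.r) • y') := by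
  refine (act_dsum _ _ (n + 1) _ _).trans ?_
  refine (congrArg₂ Sum.elim (cone_act_succ _ _ _ _ _ _) (cone_act_succ _ _ _ _ _ _)).trans ?_
  have hn' : ¬ Even n := by rwa [Nat.even_add_one] at hn
  rw [per_even _ _ hn, per_even _ _ hn, per_odd _ _ hn', per_odd _ _ hn']
  simp only [act_u, u_sub]
  rfl

lemma map_W : IsMap (two (D.p - 1)) (two (D.s - 1)) (gW D)
  | 0 => by
    have key : (D.s - 1) * (1 - D.τ + D.s - D.σi) = (1 - D.σi) * (D.p - 1) := by
      simp only [mul_sub, sub_mul, mul_add, add_mul, one_mul, mul_one, D.h9, D.h10, D.h11]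
      abel
    exact (sc_mul _ _).trans ((congrArg sc key).trans (sc_mul _ _).symm)
  | _ + 1 => by ext i; exact i.elim

lemma sq_cW : Sq (cW D) := sq_cone sq_two sq_two (map_W D)

lemma map_D : IsMap (cE D) (cW D) (fE D)
  | 0 => by
    refine mat_ext fun x => ?_
    obtain ⟨a, b, rfl⟩ := e0_surj x
    rw [act_mul, act_mul, act_fE0, act_cW0, act_cE0, act_fE1]
    congr 1
    · simp only [smul_eq_mul, mul_sub, sub_mul, mul_add, add_mul, one_mul, mul_one, mul_assoc]
      simp only [← mul_assoc _ _ b, mul_assoc _ _ D.r, D.h7]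
      abel
    · have e2 : D.r * (D.τ * b) = D.τ * (D.r * b) := by rw [← mul_assoc, D.h6, mul_assoc]
      have e3 : D.σi * (D.τ * (D.r * b)) = D.s * b := by
        rw [← D.h8]; simp only [mul_assoc]
      have e4 : D.r * (D.r * b) = b := by rw [← mul_assoc, D.h5, one_mul]
      have e5 : D.σi * (D.σ * a) = a := by rw [← mul_assoc, D.h2, one_mul]
      have e6 : D.τ * (D.σ * a) = D.s * a := by rw [← mul_assoc, D.h12]
      simp only [smul_eq_mul, mul_sub, sub_mul, mul_add, add_mul, one_mul, mul_one, mul_assoc,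
        e2, e3, e4, e5, e6]
      abel
  | 1 => by
    refine mat_ext fun x => ?_
    obtain ⟨x, y, x', y', rfl⟩ := e4_surj 0 x
    rw [act_mul, act_mul, act_fE1, act_cW1, act_cE_odd _ _ (by decide), act_fE2]
    congr 1
    have e2 (b) : D.r * (D.τ * b) = D.τ * (D.r * b) := by rw [← mul_assoc, D.h6, mul_assoc]
    have e3 (b) : D.σi * (D.τ * (D.r * b)) = D.s * b := by
      rw [← D.h8]; simp only [mul_assoc]
    have e4 (b) : D.r * (D.r * b) = b := by rw [← mul_assoc, D.h5, one_mul]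
    have e5 (a) : D.σi * (D.σ * a) = a := by rw [← mul_assoc, D.h2, one_mul]
    have e6 (a) : D.s * (D.σi * a) = D.τ * a := by rw [← mul_assoc, D.h11]
    have e7 (a) : D.s * (D.τ * a) = D.σi * (D.p * a) := by rw [← mul_assoc, D.h10, mul_assoc]
    simp only [smul_eq_mul, mul_sub, sub_mul, mul_add, add_mul, one_mul, mul_one, mul_assoc,
      mul_neg, neg_mul, e2, e3, e4, e5, e6, e7]
    abel
  | n + 2 => by
    ext i; rcases i with i | i <;> exact i.elim

lemma sq_cD : Sq (cD D) := sq_cone (sq_dsum (sq_cA D) (sq_cB D)) (sq_cW D) (map_D D)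

end D3
end Crx

namespace Crx
set_option linter.unusedSectionVars false
set_option linter.unusedSimpArgs false
section Acy
variable {R : Type} [Ring R] {M : Type} [AddCommGroup M] [Module R M]

/-- Tate exactness of the pair `(a, b)` on `K`. -/
def Tate (a b : R) (K : Submodule R M) : Prop := ∀ x ∈ K, a • x = 0 → ∃ y ∈ K, b • y = x

/-- Surjectivity on `K`. -/
def Sur (a : R) (K : Submodule R M) : Prop := ∀ x ∈ K, ∃ y ∈ K, a • y = x

lemma acyc_per {a b : R} {K : Submodule R M} (h : Tate a b K) (h' : Tate b a K) :
    Acyc (per a b) K := by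
  intro n x hx hd
  obtain ⟨m, rfl⟩ := u_surj x
  have hm : m ∈ K := hx ()
  by_cases hn : Even n
  · have hn' : ¬ Even (n + 1) := by rwa [Nat.even_add_one, not_not]
    rw [per_odd _ _ hn', act_u] at hd
    obtain ⟨y, hy, rfl⟩ := h' m hm (u_inj hd)
    exact ⟨u y, fun _ => hy, by rw [per_even _ _ hn, act_u]⟩
  · have hn' : Even (n + 1) := by rwa [Nat.even_add_one]
    rw [per_even _ _ hn', act_u] at hd
    obtain ⟨y, hy, rfl⟩ := h m hm (u_inj hd)
    exact ⟨u y, fun _ => hy, by rw [per_odd _ _ hn, act_u]⟩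

lemma acyc_two {a : R} {K : Submodule R M} (h : Sur a K) : Acyc (two a) K
  | 0, x, hx, _ => by
    obtain ⟨y, hy, hxy⟩ := h (x ()) (hx ())
    refine ⟨(u y : Unit → M), fun _ => hy, ?_⟩
    refine (act_two0 _ _).trans ?_
    rw [hxy]; rfl
  | n + 1, x, _, _ => ⟨0, fun _ => K.zero_mem, by funext i; exact i.elim⟩

lemma acyc_dsum {ι κ : ℕ → Type} [∀ n, Fintype (ι n)] [∀ n, Fintype (κ n)] {X : Mx R ι} {Y : Mx R κ}
    {K : Submodule R M} (hX : Acyc X K) (hY : Acyc Y K) : Acyc (dsum X Y) K := by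
  intro n z hz hd
  obtain ⟨x, y, rfl⟩ : ∃ x y, z = Sum.elim x y := ⟨z ∘ Sum.inl, z ∘ Sum.inr, by simp⟩
  rw [act_dsum] at hd
  have h1 := funext fun i => congrFun hd (Sum.inl i)
  have h2 := funext fun i => congrFun hd (Sum.inr i)
  obtain ⟨a, ha, hax⟩ := hX n x (fun i => hz (Sum.inl i)) h1
  obtain ⟨b, hb, hby⟩ := hY n y (fun i => hz (Sum.inr i)) h2
  refine ⟨Sum.elim a b, ?_, ?_⟩
  · rintro (i | i)
    exacts [ha i, hb i]
  · rw [act_dsum, hax, hby]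

lemma acyc_cone_per {a b c : R} {K : Submodule R M} (h : Tate a b K) (h' : Tate b a K)
    (hab : a * b = 0) (hac : a * c = c * a) (hbc : b * c = c * b) (hc : Sur c K) :
    Acyc (cone (per a b) (per a b) (fun _ => sc c)) K := by
  refine acyc_cone (map_per hac hbc) (acyc_per h h') (acyc_per h h') ?_
  intro y hy hdy
  obtain ⟨m, rfl⟩ := u_surj y
  rw [per_even _ _ Even.zero, act_u] at hdy
  obtain ⟨z, hz, hzm⟩ := h m (hy ()) (u_inj hdy)
  obtain ⟨w, hw, hwz⟩ := hc z hz
  refine ⟨u (b • w), fun _ => K.smul_mem _ hw, ?_, ?_⟩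
  · rw [per_even _ _ Even.zero, act_u, ← mul_smul, hab, zero_smul, u_zero]
  · rw [act_u, ← mul_smul, ← hbc, mul_smul, hwz, hzm]

/-- The exactness hypotheses on `K` needed for `cD`. -/
structure Good (D : Dat R) (K : Submodule R M) : Prop where
  t1 : Tate (D.σ - 1) D.nm K
  t2 : Tate D.nm (D.σ - 1) K
  t3 : Tate (D.r - 1) (1 + D.r) K
  t4 : Tate (1 + D.r) (D.r - 1) K
  s1 : Sur (D.p - 1) K
  s2 : Sur (D.τ - 1) K
  s3 : Sur (D.s - 1) K
  w1 : ∀ y ∈ K, (D.s - 1) • y = 0 → ∃ x ∈ K, (D.p - 1) • x = 0 ∧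
    (1 - D.τ + D.s - D.σi) • x = y
  w0 : ∀ x ∈ K, (D.p - 1) • x = 0 → (1 - D.τ + D.s - D.σi) • x = 0 →
    ∃ a ∈ K, ∃ b ∈ K, (D.σ - 1) • a = 0 ∧ (D.p - 1) • a = 0 ∧ (D.r - 1) • b = 0 ∧
      (D.τ - 1) • b = 0 ∧ b - a = x

lemma w1_inj {a b c d : M} (h : Crx.w1 a b = Crx.w1 c d) : a = c ∧ b = d :=
  ⟨congrFun h (.inl ()), congrFun h (.inr ())⟩

lemma w1_zero : Crx.w1 (0 : M) 0 = 0 := by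
  funext i; rcases i with i | i <;> rfl

lemma acyc_cD {D : Dat R} {K : Submodule R M} (h : Good D K) : Acyc (cD D) K := by
  have e1 : (D.r - 1) * (1 + D.r) = 0 := by
    simp only [sub_mul, mul_add, one_mul, mul_one, D.h5]; abel
  have aA : Acyc (cA D) K := acyc_cone_per h.t1 h.t2 D.nm_left
    (by simp only [mul_sub, sub_mul, one_mul, mul_one, D.h4]; abel) D.p_nm.symm h.s1
  have aB : Acyc (cB D) K := acyc_cone_per h.t3 h.t4 e1
    (by simp only [mul_sub, sub_mul, one_mul, mul_one, D.h6]; abel)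
    (by simp only [mul_sub, sub_mul, mul_add, add_mul, one_mul, mul_one, D.h6]; abel) h.s2
  have aW : Acyc (cW D) K := by
    refine acyc_cone (map_W D) (acyc_two h.s1) (acyc_two h.s3) ?_
    intro y hy hdy
    have hdy' : (D.s - 1) • y () = 0 :=
      congrFun ((act_two0 (D.s - 1) (y ())).symm.trans hdy) ()
    obtain ⟨x, hx, h1, h2⟩ := h.w1 _ (hy ()) hdy'
    refine ⟨(u x : Unit → M), fun _ => hx, ?_, ?_⟩
    · refine (act_two0 _ _).trans ?_
      rw [h1]; rfl
    · refine (act_gW0 _ _).trans ?_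
      rw [h2]; rfl
  refine acyc_cone (map_D D) (acyc_dsum aA aB) aW ?_
  intro y hy hdy
  have hdy' := w1_inj (((act_cW0 D (y ())).symm.trans hdy).trans w1_zero.symm)
  obtain ⟨a, ha, b, hb, h1, h2, h3, h4, h5⟩ := h.w0 _ (hy ()) hdy'.1 hdy'.2
  refine ⟨e0 a b, ?_, ?_, ?_⟩
  · rintro (i | i)
    exacts [ha, hb]
  · rw [act_cE0, h1, h2, h3, h4, e4_zero]
  · rw [act_fE0, h5]; rfl

/-! Twisting -/

/-- Entrywise intertwining. -/
def Ent (c : R) {α β : Type} (A A' : Matrix α β R) : Prop := ∀ i j, A' i j * c = c * A i j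

lemma map_of_ent {ι : ℕ → Type} [∀ n, Fintype (ι n)] {c : R} {X Y : Mx R ι}
    (h : ∀ n, Ent c (X n) (Y n)) : IsMap X Y (fun n => scal c (ι n)) := by
  classical
  intro n
  have e (k) : scal c (ι k) = Matrix.diagonal fun _ => c := by
    unfold scal; congr
  ext i j
  simp only [e]
  rw [Matrix.mul_diagonal, Matrix.diagonal_mul, h n]

lemma ent_cone {ι κ : ℕ → Type} {c : R} {X X' : Mx R ι} {Y Y' : Mx R κ}
    {f f' : ∀ n, Matrix (κ n) (ι n) R} (hX : ∀ n, Ent c (X n) (X' n)) (hY : ∀ n, Ent c (Y n) (Y' n))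
    (hf : ∀ n, Ent c (f n) (f' n)) : ∀ n, Ent c (cone X Y f n) (cone X' Y' f' n)
  | 0 => by
    rintro (i | i) j
    exacts [hX 0 i j, hf 0 i j]
  | n + 1 => by
    rintro (i | i) (j | j)
    · exact hX _ i j
    · exact (zero_mul _).trans (mul_zero _).symm
    · exact hf _ i j
    · refine (neg_mul _ _).trans (Eq.trans ?_ (mul_neg _ _).symm)
      exact congrArg _ (hY n i j)

lemma ent_dsum {ι κ : ℕ → Type} {c : R} {X X' : Mx R ι} {Y Y' : Mx R κ}
    (hX : ∀ n, Ent c (X n) (X' n)) (hY : ∀ n, Ent c (Y n) (Y' n)) (n) :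
    Ent c (dsum X Y n) (dsum X' Y' n) := by
  rintro (i | i) (j | j)
  · exact hX _ i j
  · exact (zero_mul _).trans (mul_zero _).symm
  · exact (zero_mul _).trans (mul_zero _).symm
  · exact hY _ i j

lemma ent_per {c a b a' b' : R} (ha : a' * c = c * a) (hb : b' * c = c * b) (n) :
    Ent c (per a b n) (per a' b' n) := by
  intro i j
  by_cases hn : Even n
  · rw [per_even _ _ hn, per_even _ _ hn]; exact ha
  · rw [per_odd _ _ hn, per_odd _ _ hn]; exact hb

lemma ent_two {c a a' : R} (ha : a' * c = c * a) : ∀ n, Ent c (two a n) (two a' n)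
  | 0 => fun _ _ => ha
  | _ + 1 => fun i _ => i.elim

/-- Two data are intertwined by `c`. -/
structure Tw (c : R) (D D' : Dat R) : Prop where
  σ : D'.σ * c = c * D.σ
  σi : D'.σi * c = c * D.σi
  τ : D'.τ * c = c * D.τ
  s : D'.s * c = c * D.s
  p : D'.p * c = c * D.p
  r : D'.r * c = c * D.r

lemma ent_fE {c : R} {D D' : Dat R} (h : Tw c D D') : ∀ n, Ent c (fE D n) (fE D' n)
  | 0 => by
    rintro i (j | j)
    · show (-1 : R) * c = c * -1
      simp
    · show (1 : R) * c = c * 1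
      simp
  | 1 => by
    have e1 (b) : D'.τ * (c * b) = c * (D.τ * b) := by rw [← mul_assoc, h.τ, mul_assoc]
    have e2 (b) : D'.σi * (c * b) = c * (D.σi * b) := by rw [← mul_assoc, h.σi, mul_assoc]
    rintro (i | i) ((j | j) | (j | j))
    · show (0 : R) * c = c * 0
      simp
    · show (-1 : R) * c = c * -1
      simp
    · show D'.τ * D'.τ * c = c * (D.τ * D.τ)
      rw [mul_assoc, h.τ, e1]
    · show (D'.τ + 1) * c = c * (D.τ + 1)
      rw [add_mul, h.τ, mul_add, one_mul, mul_one]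
    · show -(D'.σi + D'.τ) * c = c * -(D.σi + D.τ)
      rw [neg_mul, add_mul, h.τ, h.σi, mul_neg, mul_add]
    · show (0 : R) * c = c * 0
      simp
    · show -(D'.σi * D'.r) * c = c * -(D.σi * D.r)
      rw [neg_mul, mul_assoc, h.r, e2, mul_neg]
    · show (D'.σi * D'.r - 1) * c = c * (D.σi * D.r - 1)
      rw [sub_mul, mul_assoc, h.r, e2, mul_sub, one_mul, mul_one]
  | 2 => by
    have e1 (b) : D'.τ * (c * b) = c * (D.τ * b) := by rw [← mul_assoc, h.τ, mul_assoc]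
    have e2 (b) : D'.σi * (c * b) = c * (D.σi * b) := by rw [← mul_assoc, h.σi, mul_assoc]
    rintro (i | i) ((j | j) | (j | j))
    · exact i.elim
    · exact i.elim
    · exact i.elim
    · exact i.elim
    · show (0 : R) * c = c * 0
      simp
    · exact h.σi
    · show (D'.τ - D'.σi) * c = c * (D.τ - D.σi)
      rw [sub_mul, h.τ, h.σi, mul_sub]
    · show (D'.τ - D'.σi * D'.τ - D'.σi) * c = c * (D.τ - D.σi * D.τ - D.σi)
      rw [sub_mul, sub_mul, mul_assoc, h.τ, h.σi, mul_sub, mul_sub, e2]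
  | _ + 3 => by
    rintro (i | i) <;> exact i.elim

lemma ent_cD {c : R} {D D' : Dat R} (h : Tw c D D') : ∀ n, Ent c (cD D n) (cD D' n) := by
  have e3 (b) : D'.σ * (c * b) = c * (D.σ * b) := by rw [← mul_assoc, h.σ, mul_assoc]
  have a1 : (D'.σ - 1) * c = c * (D.σ - 1) := by rw [sub_mul, h.σ, mul_sub, one_mul, mul_one]
  have a2 : D'.nm * c = c * D.nm := by
    simp only [Dat.nm, add_mul, mul_add, mul_assoc, h.σ, e3, one_mul, mul_one]
  have a3 : (D'.p - 1) * c = c * (D.p - 1) := by rw [sub_mul, h.p, mul_sub, one_mul, mul_one]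
  have a4 : (D'.r - 1) * c = c * (D.r - 1) := by rw [sub_mul, h.r, mul_sub, one_mul, mul_one]
  have a5 : (1 + D'.r) * c = c * (1 + D.r) := by rw [add_mul, h.r, mul_add, one_mul, mul_one]
  have a6 : (D'.τ - 1) * c = c * (D.τ - 1) := by rw [sub_mul, h.τ, mul_sub, one_mul, mul_one]
  have a7 : (D'.s - 1) * c = c * (D.s - 1) := by rw [sub_mul, h.s, mul_sub, one_mul, mul_one]
  refine ent_cone (ent_dsum (ent_cone (ent_per a1 a2) (ent_per a1 a2) fun _ _ _ => a3)
    (ent_cone (ent_per a4 a5) (ent_per a4 a5) fun _ _ _ => a6))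
    (ent_cone (ent_two a3) (ent_two a7) ?_) (ent_fE h)
  rintro (_ | _ | n)
  · intro _ _
    show (1 - D'.τ + D'.s - D'.σi) * c = c * (1 - D.τ + D.s - D.σi)
    simp only [add_mul, mul_add, sub_mul, mul_sub, h.τ, h.s, h.σi, one_mul, mul_one]
  · intro _ _
    show (1 - D'.σi) * c = c * (1 - D.σi)
    simp only [sub_mul, mul_sub, h.σi, one_mul, mul_one]
  · exact fun i => i.elim

/-- The four dimensional complex. -/
noncomputable def cF (c : R) (D D' : Dat R) : Mx R (coneι Dι Dι) :=
  cone (cD D) (cD D') (fun n => scal c (Dι n))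

/-- Index types of the five dimensional complex. -/
abbrev Gι : ℕ → Type := coneι (coneι Dι Dι) (coneι Dι Dι)

instance finD (n : ℕ) : Fintype (Dι n) := coneFin n
instance finF (n : ℕ) : Fintype (coneι Dι Dι n) := coneFin n
instance finG (n : ℕ) : Fintype (Gι n) := coneFin n

/-- The five dimensional complex. -/
noncomputable def cG (c₁ c₂ : R) (D₀₀ D₁₀ D₀₁ D₁₁ : Dat R) : Mx R Gι :=
  cone (cF c₁ D₀₀ D₁₀) (cF c₁ D₀₁ D₁₁) (fun n => scal c₂ (coneι Dι Dι n))

lemma sq_cF {c : R} {D D' : Dat R} (h : Tw c D D') : Sq (cF c D D') :=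
  sq_cone (sq_cD _) (sq_cD _) (map_of_ent (ent_cD h))

lemma map_G {c₁ c₂ : R} {D₀₀ D₁₀ D₀₁ D₁₁ : Dat R} (hc : c₁ * c₂ = c₂ * c₁)
    (h0 : Tw c₂ D₀₀ D₀₁) (h1 : Tw c₂ D₁₀ D₁₁) :
    IsMap (cF c₁ D₀₀ D₁₀) (cF c₁ D₀₁ D₁₁) (fun n => scal c₂ (coneι Dι Dι n)) := by
  refine map_of_ent (ent_cone (ent_cD h0) (ent_cD h1) ?_)
  classical
  intro n i j
  by_cases hij : i = j
  · simp [scal, Matrix.diagonal_apply, hij, hc]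
  · simp [scal, Matrix.diagonal_apply, hij]

lemma sq_cG {c₁ c₂ : R} {D₀₀ D₁₀ D₀₁ D₁₁ : Dat R} (hc : c₁ * c₂ = c₂ * c₁)
    (h00 : Tw c₁ D₀₀ D₁₀) (h01 : Tw c₁ D₀₁ D₁₁)
    (h0 : Tw c₂ D₀₀ D₀₁) (h1 : Tw c₂ D₁₀ D₁₁) : Sq (cG c₁ c₂ D₀₀ D₁₀ D₀₁ D₁₁) :=
  sq_cone (sq_cF h00) (sq_cF h01) (map_G hc h0 h1)

lemma acyc_cG {c₁ c₂ : R} {D₀₀ D₁₀ D₀₁ D₁₁ : Dat R} (hc : c₁ * c₂ = c₂ * c₁)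
    (h00 : Tw c₁ D₀₀ D₁₀)
    (h0 : Tw c₂ D₀₀ D₀₁) (h1 : Tw c₂ D₁₀ D₁₁)
    {K₀ K₁ K₂ : Submodule R M} (hK₁ : ∀ m, m ∈ K₁ ↔ m ∈ K₀ ∧ c₂ • m = 0)
    (hK₂ : ∀ m, m ∈ K₂ ↔ m ∈ K₁ ∧ c₁ • m = 0)
    (hs2 : Sur c₂ K₀) (hs1 : Sur c₁ K₁) (hg : Good D₀₀ K₂) :
    Acyc (cG c₁ c₂ D₀₀ D₁₀ D₀₁ D₁₁) K₀ :=
  acyc_cone_scal (sq_cF h00) (map_G hc h0 h1) hK₁ hs2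
    (acyc_cone_scal (sq_cD _) (map_of_ent (ent_cD h00)) hK₂ hs1 (acyc_cD hg))

end Acy
end Crx

namespace Crx
set_option linter.unusedSectionVars false
set_option linter.unusedSimpArgs false

/-- The group. -/
abbrev Gam : Type := Crystal.Crys 4 holM holM_pow

/-- The linear action of powers of the matrix. -/
def hA (j : ZMod 4) (v : Fin 5 → ℤ) : Fin 5 → ℤ := (holM ^ j.val) *ᵥ v

/-- Elements of the group. -/
def mk (v : Fin 5 → ℤ) (j : ZMod 4) : Gam := ⟨Multiplicative.ofAdd v, Multiplicative.ofAdd j⟩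

lemma matAction_apply (j : ZMod 4) (v : Fin 5 → ℤ) :
    Crystal.matAction 4 holM holM_pow (Multiplicative.ofAdd j) (Multiplicative.ofAdd v) =
      Multiplicative.ofAdd (hA j v) := by
  show (Crystal.glToAut 5 (Crystal.matUnit holM 3 _) ^ j.val) (Multiplicative.ofAdd v) = _
  rw [← map_pow]
  show Multiplicative.ofAdd (((Crystal.matUnit holM 3 _ ^ j.val :
    (Matrix (Fin 5) (Fin 5) ℤ)ˣ) : Matrix (Fin 5) (Fin 5) ℤ) *ᵥ v) = _
  rw [Units.val_pow_eq_pow_val]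
  rfl

lemma mk_mul (v w : Fin 5 → ℤ) (j k : ZMod 4) : mk v j * mk w k = mk (v + hA j w) (j + k) := by
  apply SemidirectProduct.ext
  · show Multiplicative.ofAdd v * Crystal.matAction 4 holM holM_pow (Multiplicative.ofAdd j)
      (Multiplicative.ofAdd w) = _
    rw [matAction_apply]; rfl
  · rfl

lemma mk_surj (x : Gam) : ∃ v j, x = mk v j := ⟨x.left.toAdd, x.right.toAdd, rfl⟩

lemma mk_one : (1 : Gam) = mk 0 0 := rfl

lemma hA0 (v : Fin 5 → ℤ) : hA 0 v = v := by simp [hA]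

lemma holM_mulVec (v : Fin 5 → ℤ) : holM *ᵥ v = ![-v 0, -v 1, -v 4, v 2 + v 4, - v 3 + v 4] := by
  funext i; fin_cases i <;> simp [holM, Matrix.mulVec, dotProduct, Fin.sum_univ_succ]

lemma hA1 (v : Fin 5 → ℤ) : hA 1 v = ![-v 0, -v 1, -v 4, v 2 + v 4, - v 3 + v 4] := by
  have : (1 : ZMod 4).val = 1 := rfl
  rw [hA, this, pow_one, holM_mulVec]

lemma hA2 (v : Fin 5 → ℤ) : hA 2 v = ![v 0, v 1, v 3 - v 4, - v 3, - v 2 - v 3] := by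
  have : (2 : ZMod 4).val = 2 := rfl
  rw [hA, this, pow_two, ← Matrix.mulVec_mulVec, holM_mulVec, holM_mulVec]
  funext i; fin_cases i <;> simp <;> ring

lemma hA3 (v : Fin 5 → ℤ) : hA 3 v = ![-v 0, -v 1, v 2 + v 3, - v 2 - v 4, - v 2] := by
  have : (3 : ZMod 4).val = 3 := rfl
  rw [hA, this, pow_succ', pow_two, ← Matrix.mulVec_mulVec, ← Matrix.mulVec_mulVec, holM_mulVec,
    holM_mulVec, holM_mulVec]
  funext i; fin_cases i <;> simp <;> ring

/-- Data in a group. -/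
structure GDat where
  (σ σi τ s p r : Gam)
  h1 : σ * σi = 1
  h2 : σi * σ = 1
  h3 : σ * (σ * (σ * σ)) = 1
  h4 : p * σ = σ * p
  h5 : r * r = 1
  h6 : r * τ = τ * r
  h7 : τ * (τ * r) = p
  h8 : σi * (τ * r) = s
  h9 : s * s = p
  h10 : s * τ = σi * p
  h11 : s * σi = τ
  h12 : τ * σ = s

/-- The group ring. -/
abbrev RG : Type := MonoidAlgebra ℤ Gam

/-- Group ring data from group data and a sign. -/
noncomputable def GDat.toDat (g : GDat) (ε : ℤ) (hε : ε * ε = 1) : Dat RG where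
  σ := MonoidAlgebra.single g.σ ε
  σi := MonoidAlgebra.single g.σi ε
  τ := MonoidAlgebra.single g.τ ε
  s := MonoidAlgebra.single g.s 1
  p := MonoidAlgebra.single g.p 1
  r := MonoidAlgebra.single g.r 1
  h1 := by rw [MonoidAlgebra.single_mul_single, g.h1, hε]; rfl
  h2 := by rw [MonoidAlgebra.single_mul_single, g.h2, hε]; rfl
  h3 := by
    simp only [MonoidAlgebra.single_mul_single]
    rw [g.h3, hε, mul_one, hε]; rfl
  h4 := by simp only [MonoidAlgebra.single_mul_single, g.h4, mul_one, one_mul]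
  h5 := by rw [MonoidAlgebra.single_mul_single, g.h5]; rfl
  h6 := by simp only [MonoidAlgebra.single_mul_single, g.h6, mul_one, one_mul]
  h7 := by simp only [MonoidAlgebra.single_mul_single, g.h7, mul_one, one_mul, hε]
  h8 := by simp only [MonoidAlgebra.single_mul_single, g.h8, mul_one, one_mul, hε]
  h9 := by simp only [MonoidAlgebra.single_mul_single, g.h9, mul_one, one_mul, hε]
  h10 := by simp only [MonoidAlgebra.single_mul_single, g.h10, mul_one, one_mul, hε]
  h11 := by simp only [MonoidAlgebra.single_mul_single, g.h11, mul_one, one_mul, hε]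
  h12 := by simp only [MonoidAlgebra.single_mul_single, g.h12, mul_one, one_mul, hε]

lemma mk_congr {v w : Fin 5 → ℤ} {j k : ZMod 4} (h0 : v 0 = w 0) (h1 : v 1 = w 1) (h2 : v 2 = w 2)
    (h3 : v 3 = w 3) (h4 : v 4 = w 4) (hj : j = k) : mk v j = mk w k := by
  have : v = w := by funext i; fin_cases i <;> assumption
  rw [this, hj]

/-- The group data twisted by translations. -/
def gd (i j : ℤ) : GDat where
  σ := mk ![i, j, 0, 0, 0] 1
  σi := mk ![i, j, 0, 0, 0] 3
  τ := mk ![i, j, 1, 0, 0] 1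
  s := mk ![0, 0, 1, 0, 0] 2
  p := mk ![0, 0, 1, 0, -1] 0
  r := mk ![0, 0, 0, 1, 1] 2
  h1 := by
    simp only [mk_mul, mk_one]
    exact mk_congr (by simp [hA0, hA1, hA2, hA3]) (by simp [hA0, hA1, hA2, hA3])
      (by simp [hA0, hA1, hA2, hA3]) (by simp [hA0, hA1, hA2, hA3])
      (by simp [hA0, hA1, hA2, hA3]) (by decide)
  h2 := by
    simp only [mk_mul, mk_one]
    exact mk_congr (by simp [hA0, hA1, hA2, hA3]) (by simp [hA0, hA1, hA2, hA3])
      (by simp [hA0, hA1, hA2, hA3]) (by simp [hA0, hA1, hA2, hA3])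
      (by simp [hA0, hA1, hA2, hA3]) (by decide)
  h3 := by
    simp only [mk_mul, mk_one]
    exact mk_congr (by simp [hA0, hA1, hA2, hA3]) (by simp [hA0, hA1, hA2, hA3])
      (by simp [hA0, hA1, hA2, hA3]) (by simp [hA0, hA1, hA2, hA3])
      (by simp [hA0, hA1, hA2, hA3]) (by decide)
  h4 := by
    simp only [mk_mul, mk_one]
    exact mk_congr (by simp [hA0, hA1, hA2, hA3]) (by simp [hA0, hA1, hA2, hA3])
      (by simp [hA0, hA1, hA2, hA3]) (by simp [hA0, hA1, hA2, hA3])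
      (by simp [hA0, hA1, hA2, hA3]) (by decide)
  h5 := by
    simp only [mk_mul, mk_one]
    exact mk_congr (by simp [hA0, hA1, hA2, hA3]) (by simp [hA0, hA1, hA2, hA3])
      (by simp [hA0, hA1, hA2, hA3]) (by simp [hA0, hA1, hA2, hA3])
      (by simp [hA0, hA1, hA2, hA3]) (by decide)
  h6 := by
    simp only [mk_mul, mk_one]
    exact mk_congr (by simp [hA0, hA1, hA2, hA3]) (by simp [hA0, hA1, hA2, hA3])
      (by simp [hA0, hA1, hA2, hA3]) (by simp [hA0, hA1, hA2, hA3])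
      (by simp [hA0, hA1, hA2, hA3]) (by decide)
  h7 := by
    simp only [mk_mul, mk_one]
    exact mk_congr (by simp [hA0, hA1, hA2, hA3]) (by simp [hA0, hA1, hA2, hA3])
      (by simp [hA0, hA1, hA2, hA3]) (by simp [hA0, hA1, hA2, hA3])
      (by simp [hA0, hA1, hA2, hA3]) (by decide)
  h8 := by
    simp only [mk_mul, mk_one]
    exact mk_congr (by simp [hA0, hA1, hA2, hA3]) (by simp [hA0, hA1, hA2, hA3])
      (by simp [hA0, hA1, hA2, hA3]) (by simp [hA0, hA1, hA2, hA3])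
      (by simp [hA0, hA1, hA2, hA3]) (by decide)
  h9 := by
    simp only [mk_mul, mk_one]
    exact mk_congr (by simp [hA0, hA1, hA2, hA3]) (by simp [hA0, hA1, hA2, hA3])
      (by simp [hA0, hA1, hA2, hA3]) (by simp [hA0, hA1, hA2, hA3])
      (by simp [hA0, hA1, hA2, hA3]) (by decide)
  h10 := by
    simp only [mk_mul, mk_one]
    exact mk_congr (by simp [hA0, hA1, hA2, hA3]) (by simp [hA0, hA1, hA2, hA3])
      (by simp [hA0, hA1, hA2, hA3]) (by simp [hA0, hA1, hA2, hA3])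
      (by simp [hA0, hA1, hA2, hA3]) (by decide)
  h11 := by
    simp only [mk_mul, mk_one]
    exact mk_congr (by simp [hA0, hA1, hA2, hA3]) (by simp [hA0, hA1, hA2, hA3])
      (by simp [hA0, hA1, hA2, hA3]) (by simp [hA0, hA1, hA2, hA3])
      (by simp [hA0, hA1, hA2, hA3]) (by decide)
  h12 := by
    simp only [mk_mul, mk_one]
    exact mk_congr (by simp [hA0, hA1, hA2, hA3]) (by simp [hA0, hA1, hA2, hA3])
      (by simp [hA0, hA1, hA2, hA3]) (by simp [hA0, hA1, hA2, hA3])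
      (by simp [hA0, hA1, hA2, hA3]) (by decide)

lemma tw_aux {t g g' : Gam} (ε : ℤ) (h : t * g = g') (h' : g' * t = g) :
    (MonoidAlgebra.single g' (-ε) : RG) * (1 - MonoidAlgebra.single t 1) =
      (1 - MonoidAlgebra.single t 1) * MonoidAlgebra.single g ε := by
  rw [mul_sub, sub_mul, mul_one, one_mul, MonoidAlgebra.single_mul_single,
    MonoidAlgebra.single_mul_single, h, h', mul_one, one_mul, MonoidAlgebra.single_neg,
    MonoidAlgebra.single_neg]
  abel

lemma tw_aux' {t g : Gam} (h : g * t = t * g) :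
    (MonoidAlgebra.single g 1 : RG) * (1 - MonoidAlgebra.single t 1) =
      (1 - MonoidAlgebra.single t 1) * MonoidAlgebra.single g 1 := by
  rw [mul_sub, sub_mul, mul_one, one_mul, MonoidAlgebra.single_mul_single,
    MonoidAlgebra.single_mul_single, h]

/-- translations -/
def tr (a b : ℤ) : Gam := mk ![a, b, 0, 0, 0] 0

lemma tw_gd {ε : ℤ} (hε : ε * ε = 1) (hε' : -ε * -ε = 1) (i j a b : ℤ) :
    Tw (1 - MonoidAlgebra.single (tr a b) 1 : RG) ((gd i j).toDat ε hε)
      ((gd (a + i) (b + j)).toDat (-ε) hε') where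
  σ := by
    refine tw_aux ε ?_ ?_ <;> simp only [gd, tr, mk_mul]
    · exact mk_congr (by simp [hA0, hA1, hA2, hA3]) (by simp [hA0, hA1, hA2, hA3])
        (by simp [hA0, hA1, hA2, hA3]) (by simp [hA0, hA1, hA2, hA3])
        (by simp [hA0, hA1, hA2, hA3]) (by decide)
    · exact mk_congr (by simp [hA0, hA1, hA2, hA3]) (by simp [hA0, hA1, hA2, hA3])
        (by simp [hA0, hA1, hA2, hA3]) (by simp [hA0, hA1, hA2, hA3])
        (by simp [hA0, hA1, hA2, hA3]) (by decide)
  σi := by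
    refine tw_aux ε ?_ ?_ <;> simp only [gd, tr, mk_mul]
    · exact mk_congr (by simp [hA0, hA1, hA2, hA3]) (by simp [hA0, hA1, hA2, hA3])
        (by simp [hA0, hA1, hA2, hA3]) (by simp [hA0, hA1, hA2, hA3])
        (by simp [hA0, hA1, hA2, hA3]) (by decide)
    · exact mk_congr (by simp [hA0, hA1, hA2, hA3]) (by simp [hA0, hA1, hA2, hA3])
        (by simp [hA0, hA1, hA2, hA3]) (by simp [hA0, hA1, hA2, hA3])
        (by simp [hA0, hA1, hA2, hA3]) (by decide)
  τ := by
    refine tw_aux ε ?_ ?_ <;> simp only [gd, tr, mk_mul]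
    · exact mk_congr (by simp [hA0, hA1, hA2, hA3]) (by simp [hA0, hA1, hA2, hA3])
        (by simp [hA0, hA1, hA2, hA3]) (by simp [hA0, hA1, hA2, hA3])
        (by simp [hA0, hA1, hA2, hA3]) (by decide)
    · exact mk_congr (by simp [hA0, hA1, hA2, hA3]) (by simp [hA0, hA1, hA2, hA3])
        (by simp [hA0, hA1, hA2, hA3]) (by simp [hA0, hA1, hA2, hA3])
        (by simp [hA0, hA1, hA2, hA3]) (by decide)
  s := by
    refine tw_aux' ?_
    simp only [gd, tr, mk_mul]
    exact mk_congr (by simp [hA0, hA1, hA2, hA3]) (by simp [hA0, hA1, hA2, hA3])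
        (by simp [hA0, hA1, hA2, hA3]) (by simp [hA0, hA1, hA2, hA3])
        (by simp [hA0, hA1, hA2, hA3]) (by decide)
  p := by
    refine tw_aux' ?_
    simp only [gd, tr, mk_mul]
    exact mk_congr (by simp [hA0, hA1, hA2, hA3]) (by simp [hA0, hA1, hA2, hA3])
        (by simp [hA0, hA1, hA2, hA3]) (by simp [hA0, hA1, hA2, hA3])
        (by simp [hA0, hA1, hA2, hA3]) (by decide)
  r := by
    refine tw_aux' ?_
    simp only [gd, tr, mk_mul]
    exact mk_congr (by simp [hA0, hA1, hA2, hA3]) (by simp [hA0, hA1, hA2, hA3])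
        (by simp [hA0, hA1, hA2, hA3]) (by simp [hA0, hA1, hA2, hA3])
        (by simp [hA0, hA1, hA2, hA3]) (by decide)

/-- `1 - t₁` -/
noncomputable def c₁ : RG := 1 - MonoidAlgebra.single (tr 1 0) 1
/-- `1 - t₂` -/
noncomputable def c₂ : RG := 1 - MonoidAlgebra.single (tr 0 1) 1

/-- data -/
noncomputable def D₀₀ : Dat RG := (gd 0 0).toDat 1 (by norm_num)
/-- data -/
noncomputable def D₁₀ : Dat RG := (gd 1 0).toDat (-1) (by norm_num)
/-- data -/
noncomputable def D₀₁ : Dat RG := (gd 0 1).toDat (-1) (by norm_num)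
/-- data -/
noncomputable def D₁₁ : Dat RG := (gd 1 1).toDat 1 (by norm_num)

lemma tw1 : Tw c₁ D₀₀ D₁₀ := tw_gd (ε := 1) (by norm_num) (by norm_num) 0 0 1 0
lemma tw2 : Tw c₂ D₀₀ D₀₁ := tw_gd (ε := 1) (by norm_num) (by norm_num) 0 0 0 1
lemma tw3 : Tw c₁ D₀₁ D₁₁ := tw_gd (ε := -1) (by norm_num) (by norm_num) 0 1 1 0
lemma tw4 : Tw c₂ D₁₀ D₁₁ := tw_gd (ε := -1) (by norm_num) (by norm_num) 1 0 0 1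

lemma c_comm : c₁ * c₂ = c₂ * c₁ := by
  have h : tr 1 0 * tr 0 1 = tr 0 1 * tr 1 0 := by
    simp only [tr, mk_mul]
    exact mk_congr (by simp [hA0]) (by simp [hA0]) (by simp [hA0]) (by simp [hA0])
      (by simp [hA0]) (by decide)
  simp only [c₁, c₂, mul_sub, sub_mul, mul_one, one_mul, MonoidAlgebra.single_mul_single, h]
  abel

/-- The complex for the group. -/
noncomputable abbrev CX : Mx RG Gι := cG c₁ c₂ D₀₀ D₁₀ D₀₁ D₁₁

lemma sq_CX : Sq CX := sq_cG c_comm tw1 tw3 tw2 tw4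

end Crx

namespace Crx
set_option linter.unusedSectionVars false
set_option linter.unusedSimpArgs false

section Fn
variable {G : Type} [Group G] {V : Type} [AddCommGroup V]

/-- A primitive of `f` along `g`. -/
def prim (g : G) (κ : G → ℤ) (f : G → V) (x : G) : V :=
  if 0 ≤ κ x then ∑ i ∈ Finset.range (κ x).toNat, f (x * g ^ (-(i + 1 : ℤ)))
  else - ∑ i ∈ Finset.range (-κ x).toNat, f (x * g ^ (i : ℤ))

lemma prim_spec (g : G) (κ : G → ℤ) (hκ : ∀ x, κ (x * g) = κ x + 1) (f : G → V) (x : G) :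
    prim g κ f (x * g) - prim g κ f x = f x := by
  by_cases h : 0 ≤ κ x
  · have h1 : 0 ≤ κ (x * g) := by rw [hκ]; omega
    have h2 : (κ (x * g)).toNat = (κ x).toNat + 1 := by rw [hκ]; omega
    rw [prim, prim, if_pos h, if_pos h1, h2, Finset.sum_range_succ']
    have h3 : ∀ i : ℕ, x * g * g ^ (-((i + 1 : ℕ) + 1 : ℤ)) = x * g ^ (-(i + 1 : ℤ)) := by
      intro i
      rw [mul_assoc]
      nth_rewrite 1 [← zpow_one g]
      rw [← _root_.zpow_add]
      congr 2
    simp only [h3]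
    simp
  · have h2 : (-κ x).toNat = (-κ (x * g)).toNat + 1 := by rw [hκ]; omega
    have h4 : prim g κ f (x * g) =
        - ∑ i ∈ Finset.range (-κ (x * g)).toNat, f (x * g * g ^ (i : ℤ)) := by
      by_cases h1 : 0 ≤ κ (x * g)
      · have h5 : (κ (x * g)).toNat = 0 := by rw [hκ] at h1 ⊢; omega
        have h6 : (-κ (x * g)).toNat = 0 := by omega
        rw [prim, if_pos h1, h5, h6]; simp
      · rw [prim, if_neg h1]
    rw [h4, prim, if_neg h, h2, Finset.sum_range_succ']
    have h3 : ∀ i : ℕ, x * g * g ^ (i : ℤ) = x * g ^ ((i + 1 : ℕ) : ℤ) := by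
      intro i
      rw [mul_assoc]
      nth_rewrite 1 [← zpow_one g]
      rw [← _root_.zpow_add]
      congr 2; push_cast; ring
    simp only [h3]
    simp

lemma prim_inv (g : G) (κ : G → ℤ) (f : G → V) (h : G) (h1 : ∀ x, κ (x * h) = κ x)
    (h2 : ∀ x (i : ℤ), f (x * h * g ^ i) = f (x * g ^ i)) (x : G) :
    prim g κ f (x * h) = prim g κ f x := by
  simp only [prim, h1, h2]

/-- A primitive of `f` along `g`, finite order. -/
def fprim {n : ℕ} (g : G) (κ : G → ZMod n) (f : G → V) (x : G) : V :=
  ∑ i ∈ Finset.range (κ x).val, f (x * g ^ (-(i + 1 : ℤ)))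

lemma fprim_spec {n : ℕ} [NeZero n] (g : G) (κ : G → ZMod n) (hκ : ∀ x, κ (x * g) = κ x + 1)
    (f : G → V)
    (hf : ∀ x, ∑ i ∈ Finset.range n, f (x * g ^ (i : ℤ)) = 0) (x : G) :
    fprim g κ f (x * g) - fprim g κ f x = f x := by
  have h3 : ∀ i : ℕ, x * g * g ^ (-((i + 1 : ℕ) + 1 : ℤ)) = x * g ^ (-(i + 1 : ℤ)) := by
    intro i
    rw [mul_assoc]
    nth_rewrite 1 [← zpow_one g]
    rw [← _root_.zpow_add]
    congr 2
  have key : ∑ i ∈ Finset.range ((κ x).val + 1), f (x * g * g ^ (-(i + 1 : ℤ))) =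
      fprim g κ f x + f x := by
    rw [Finset.sum_range_succ']
    simp only [h3, fprim]
    simp
  by_cases h : (κ x).val + 1 < n
  · have h1 : (κ (x * g)).val = (κ x).val + 1 := by
      have e1 : (1 : ZMod n).val = 1 := by
        rw [ZMod.val_one_eq_one_mod, Nat.mod_eq_of_lt (by omega)]
      rw [hκ, ZMod.val_add_of_lt (by rw [e1]; exact h), e1]
    rw [fprim, h1, key]; simp
  · have h1 : (κ x).val + 1 = n := by have := ZMod.val_lt (κ x); omega
    have h2 : κ (x * g) = 0 := by
      rw [hκ, ← ZMod.natCast_zmod_val (κ x)]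
      have := congrArg (Nat.cast : ℕ → ZMod n) h1
      simpa using this
    have h4 : fprim g κ f (x * g) = 0 := by simp [fprim, h2]
    have h5 := hf (x * g * g ^ (-(n : ℤ)))
    rw [← Finset.sum_range_reflect] at h5
    rw [h1] at key
    have h6 : ∑ i ∈ Finset.range n, f (x * g * g ^ (-(i + 1 : ℤ))) = 0 := by
      rw [← h5]
      refine Finset.sum_congr rfl fun i hi => ?_
      have hi' := Finset.mem_range.1 hi
      rw [mul_assoc (x * g), ← _root_.zpow_add]
      congr 3
      omega
    rw [h6] at key
    rw [h4, zero_sub, neg_eq_iff_add_eq_zero]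
    exact key.symm

lemma fprim_inv {n : ℕ} (g : G) (κ : G → ZMod n) (f : G → V) (h : G) (h1 : ∀ x, κ (x * h) = κ x)
    (h2 : ∀ x (i : ℤ), f (x * h * g ^ i) = f (x * g ^ i)) (x : G) :
    fprim g κ f (x * h) = fprim g κ f x := by
  simp only [fprim, h1, h2]

/-- A function with norm `f`. -/
def fdel {n : ℕ} (κ : G → ZMod n) (f : G → V) (x : G) : V := if κ x = 0 then f x else 0

lemma fdel_spec {n : ℕ} [NeZero n] (g : G) (κ : G → ZMod n) (hκ : ∀ x, κ (x * g) = κ x + 1)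
    (f : G → V) (hf : ∀ x, f (x * g) = f x) (x : G) :
    ∑ i ∈ Finset.range n, fdel κ f (x * g ^ (i : ℤ)) = f x := by
  have hκ' : ∀ i : ℕ, κ (x * g ^ i) = κ x + i := by
    intro i
    induction i with
    | zero => simp
    | succ i ih => rw [pow_succ, ← mul_assoc, hκ, ih]; push_cast; ring
  have hf' : ∀ i : ℕ, f (x * g ^ i) = f x := by
    intro i
    induction i with
    | zero => simp
    | succ i ih => rw [pow_succ, ← mul_assoc, hf, ih]
  rw [Finset.sum_eq_single (-κ x).val]
  · rw [zpow_natCast, fdel, if_pos, hf']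
    rw [hκ']; simp
  · intro i hi hne
    rw [zpow_natCast, fdel, if_neg]
    rw [hκ']
    intro h0
    apply hne
    have : -κ x = (i : ZMod n) := by rw [neg_eq_iff_add_eq_zero]; exact h0
    rw [this, ZMod.val_natCast, Nat.mod_eq_of_lt (Finset.mem_range.1 hi)]
  · intro h
    exact absurd (Finset.mem_range.2 (ZMod.val_lt _)) h

end Fn

section Md
variable {G : Type} [Group G] {V : Type} [AddCommGroup V] {M : Type} [AddCommGroup M]
  [DistribMulAction G M]

/-- Invariance under a set. -/
def Iv (H : Set G) (m : M) : Prop := ∀ h ∈ H, h • m = m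

/-- coinduced modules -/
structure Co (G V M : Type) [Group G] [AddCommGroup V] [AddCommGroup M] [DistribMulAction G M] where
  ev : M ≃+ (G → V)
  hev : ∀ (g : G) (m : M) (x : G), ev (g • m) x = ev m (x * g)


/-- `g` normalizes `H`. -/
def Nz (H : Set G) (g : G) : Prop := ∀ h ∈ H, g * h * g⁻¹ ∈ H ∧ g⁻¹ * h * g ∈ H

lemma Nz.pow {H : Set G} {g : G} (hg : Nz H g) (i : ℤ) : ∀ h ∈ H, g ^ (-i) * h * g ^ i ∈ H := by
  induction i with
  | zero => intro h hh; simpa using hh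
  | succ i ih =>
    intro h hh
    have := (hg _ (ih h hh)).2
    convert this using 1
    group
  | pred i ih =>
    intro h hh
    have := (hg _ (ih h hh)).1
    convert this using 1
    group

lemma Co.iv (C : Co G V M) {H : Set G} {m : M} (hm : Iv H m) {h : G} (hh : h ∈ H) (x : G) :
    C.ev m (x * h) = C.ev m x := by
  rw [← C.hev, hm h hh]

lemma Co.iv_pow (C : Co G V M) {H : Set G} {g : G} (hg : Nz H g) {m : M} (hm : Iv H m) {h : G} (hh : h ∈ H) (x : G)
    (i : ℤ) : C.ev m (x * h * g ^ i) = C.ev m (x * g ^ i) := by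
  rw [← C.iv hm (hg.pow i h hh) (x * g ^ i)]
  group

lemma Co.iv_mk (C : Co G V M) {H : Set G} {m : M} (h : ∀ h ∈ H, ∀ x, C.ev m (x * h) = C.ev m x) : Iv H m := by
  intro g hg
  apply C.ev.injective
  funext x
  rw [C.hev, h g hg]

lemma Co.sur (C : Co G V M) {H : Set G} {g : G} (hg : Nz H g) (κ : G → ℤ) (hκ : ∀ x, κ (x * g) = κ x + 1)
    (hκ' : ∀ h ∈ H, ∀ x, κ (x * h) = κ x) (m : M) (hm : Iv H m) :
    ∃ y, Iv H y ∧ g • y - y = m := by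
  refine ⟨C.ev.symm (prim g κ (C.ev m)), C.iv_mk ?_, ?_⟩
  · intro h hh x
    rw [AddEquiv.apply_symm_apply]
    exact prim_inv g κ _ h (hκ' h hh) (fun x i => C.iv_pow hg hm hh x i) x
  · apply C.ev.injective
    funext x
    rw [map_sub, Pi.sub_apply, C.hev, AddEquiv.apply_symm_apply, prim_spec g κ hκ]

lemma Co.tate1 (C : Co G V M) {n : ℕ} [NeZero n] {H : Set G} {g : G} (hg : Nz H g) (κ : G → ZMod n)
    (hκ : ∀ x, κ (x * g) = κ x + 1)
    (hκ' : ∀ h ∈ H, ∀ x, κ (x * h) = κ x) (m : M) (hm : Iv H m)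
    (hN : ∑ i ∈ Finset.range n, g ^ i • m = 0) :
    ∃ y, Iv H y ∧ g • y - y = m := by
  refine ⟨C.ev.symm (fprim g κ (C.ev m)), C.iv_mk ?_, ?_⟩
  · intro h hh x
    rw [AddEquiv.apply_symm_apply]
    exact fprim_inv g κ _ h (hκ' h hh) (fun x i => C.iv_pow hg hm hh x i) x
  · apply C.ev.injective
    funext x
    rw [map_sub, Pi.sub_apply, C.hev, AddEquiv.apply_symm_apply, fprim_spec g κ hκ]
    intro x
    have := congrFun (congrArg C.ev hN) x
    simpa [C.hev] using this

lemma Co.tate2 (C : Co G V M) {n : ℕ} [NeZero n] {H : Set G} {g : G} (κ : G → ZMod n)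
    (hκ : ∀ x, κ (x * g) = κ x + 1)
    (hκ' : ∀ h ∈ H, ∀ x, κ (x * h) = κ x) (m : M) (hm : Iv H m)
    (hN : g • m = m) :
    ∃ y, Iv H y ∧ ∑ i ∈ Finset.range n, g ^ i • y = m := by
  refine ⟨C.ev.symm (fdel κ (C.ev m)), C.iv_mk ?_, ?_⟩
  · intro h hh x
    rw [AddEquiv.apply_symm_apply, fdel, fdel, hκ' h hh, C.iv hm hh]
  · apply C.ev.injective
    funext x
    have := fdel_spec g κ hκ (C.ev m) (fun x => by rw [← C.hev, hN]) x
    simpa [C.hev] using this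

end Md
end Crx

namespace Crx
set_option linter.unusedSectionVars false
set_option linter.unusedSimpArgs false

/-- coordinates -/
def kap {X : Type} (F : ZMod 4 → (Fin 5 → ℤ) → X) (x : Gam) : X := F x.right.toAdd x.left.toAdd

lemma kap_mk {X : Type} (F : ZMod 4 → (Fin 5 → ℤ) → X) (v j) : kap F (mk v j) = F j v := rfl

lemma z4_cases (j : ZMod 4) : j = 0 ∨ j = 1 ∨ j = 2 ∨ j = 3 := by
  revert j; decide

lemma mk_pow (v : Fin 5 → ℤ) (n : ℤ) : mk v 0 ^ n = mk (n • v) 0 :=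
  (map_zpow (SemidirectProduct.inl : Crystal.Lat 5 →* Gam) (Multiplicative.ofAdd v) n).symm

/-- sets of translations -/
def trs (P : (Fin 5 → ℤ) → Prop) : Set Gam := {x | ∃ v, P v ∧ x = mk v 0}

lemma mk_hA (w v : Fin 5 → ℤ) (j : ZMod 4) : mk w j * mk v 0 = mk (hA j v) 0 * mk w j := by
  rw [mk_mul, mk_mul, hA0, add_zero, zero_add, add_comm]

lemma hA_hA (j : ZMod 4) (v : Fin 5 → ℤ) : hA j (hA (-j) v) = v := by
  have h1 : (-(1 : ZMod 4)) = 3 := rfl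
  have h2 : (-(2 : ZMod 4)) = 2 := rfl
  have h3 : (-(3 : ZMod 4)) = 1 := rfl
  rcases z4_cases j with rfl | rfl | rfl | rfl
  · rw [neg_zero, hA0, hA0]
  · rw [h1, hA3, hA1]; funext i; fin_cases i <;> simp
  · rw [h2, hA2, hA2]; funext i; fin_cases i <;> simp <;> ring
  · rw [h3, hA1, hA3]; funext i; fin_cases i <;> simp

lemma nz_trs {P : (Fin 5 → ℤ) → Prop} (w : Fin 5 → ℤ) (j : ZMod 4) (h1 : ∀ v, P v → P (hA j v))
    (h2 : ∀ v, P v → P (hA (-j) v)) : Nz (trs P) (mk w j) := by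
  rintro _ ⟨v, hv, rfl⟩
  refine ⟨⟨_, h1 v hv, ?_⟩, ⟨_, h2 v hv, ?_⟩⟩
  · rw [mul_inv_eq_iff_eq_mul, mk_hA]
  · rw [mul_assoc, inv_mul_eq_iff_eq_mul, mk_hA, hA_hA]

lemma nz_trs0 {P : (Fin 5 → ℤ) → Prop} (w : Fin 5 → ℤ) : Nz (trs P) (mk w 0) :=
  nz_trs w 0 (fun v hv => by rwa [hA0]) (fun v hv => by rwa [neg_zero, hA0])

/-- `⟨t₂⟩` -/
def T₁ : Set Gam := trs fun v => v 0 = 0 ∧ v 2 = 0 ∧ v 3 = 0 ∧ v 4 = 0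
/-- `⟨t₁, t₂⟩` -/
def T₂ : Set Gam := trs fun v => v 2 = 0 ∧ v 3 = 0 ∧ v 4 = 0
/-- `⟨t₁, t₂, p⟩` -/
def T₃ : Set Gam := trs fun v => v 3 = 0 ∧ v 2 + v 4 = 0
/-- `⟨t₁, t₂, p, a⟩` -/
def T₄ : Set Gam := trs fun v => v 3 = 0
/-- all translations -/
def T₅ : Set Gam := trs fun _ => True

lemma nz_T₁ (g : Gam) : Nz T₁ g := by
  obtain ⟨w, j, rfl⟩ := mk_surj g
  have h : ∀ (j : ZMod 4) (v : Fin 5 → ℤ), (v 0 = 0 ∧ v 2 = 0 ∧ v 3 = 0 ∧ v 4 = 0) →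
      (hA j v 0 = 0 ∧ hA j v 2 = 0 ∧ hA j v 3 = 0 ∧ hA j v 4 = 0) := by
    rintro j v ⟨h0, h1, h2, h3⟩
    rcases z4_cases j with rfl | rfl | rfl | rfl <;> simp [hA0, hA1, hA2, hA3, h0, h1, h2, h3]
  exact nz_trs w j (h j) (h (-j))

lemma nz_T₂ (g : Gam) : Nz T₂ g := by
  obtain ⟨w, j, rfl⟩ := mk_surj g
  have h : ∀ (j : ZMod 4) (v : Fin 5 → ℤ), (v 2 = 0 ∧ v 3 = 0 ∧ v 4 = 0) →
      (hA j v 2 = 0 ∧ hA j v 3 = 0 ∧ hA j v 4 = 0) := by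
    rintro j v ⟨h1, h2, h3⟩
    rcases z4_cases j with rfl | rfl | rfl | rfl <;> simp [hA0, hA1, hA2, hA3, h1, h2, h3]
  exact nz_trs w j (h j) (h (-j))

lemma nz_T₃ (g : Gam) : Nz T₃ g := by
  obtain ⟨w, j, rfl⟩ := mk_surj g
  have h : ∀ (j : ZMod 4) (v : Fin 5 → ℤ), (v 3 = 0 ∧ v 2 + v 4 = 0) →
      (hA j v 3 = 0 ∧ hA j v 2 + hA j v 4 = 0) := by
    rintro j v ⟨h1, h2⟩
    rcases z4_cases j with rfl | rfl | rfl | rfl <;> simp [hA0, hA1, hA2, hA3, h1, h2] <;> omega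
  exact nz_trs w j (h j) (h (-j))

lemma nz_T₅ (g : Gam) : Nz T₅ g := by
  obtain ⟨w, j, rfl⟩ := mk_surj g
  exact nz_trs w j (fun _ _ => trivial) (fun _ _ => trivial)

/-! the elements -/
/-- element -/
def gσ : Gam := (gd 0 0).σ
/-- element -/
def gσi : Gam := (gd 0 0).σi
/-- element -/
def gτ : Gam := (gd 0 0).τ
/-- element -/
def gs : Gam := (gd 0 0).s
/-- element -/
def gp : Gam := (gd 0 0).p
/-- element -/
def gr : Gam := (gd 0 0).r
/-- element -/
def ga : Gam := mk ![0, 0, 1, 0, 0] 0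
/-- element -/
def gb : Gam := mk ![0, 0, 0, 1, 0] 0

section Act
variable {M : Type} [AddCommGroup M] [DistribMulAction Gam M]

lemma iv_smul {H : Set Gam} {g : Gam} (hg : Nz H g) {m : M} (hm : Iv H m) : Iv H (g • m) := by
  intro h hh
  have := hm _ (hg h hh).2
  rw [← mul_smul, show h * g = g * (g⁻¹ * h * g) by group, mul_smul, this]

lemma iv_add {H : Set Gam} {m n : M} (hm : Iv H m) (hn : Iv H n) : Iv H (m + n) :=
  fun h hh => by rw [smul_add, hm h hh, hn h hh]

lemma iv_sub {H : Set Gam} {m n : M} (hm : Iv H m) (hn : Iv H n) : Iv H (m - n) :=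
  fun h hh => by rw [smul_sub, hm h hh, hn h hh]

lemma iv_neg {H : Set Gam} {m : M} (hm : Iv H m) : Iv H (-m) :=
  fun h hh => by rw [smul_neg, hm h hh]

lemma iv_zero {H : Set Gam} : Iv H (0 : M) := fun h hh => smul_zero h

lemma iv_mono {P Q : (Fin 5 → ℤ) → Prop} (h : ∀ v, P v → Q v) {m : M} (hm : Iv (trs Q) m) :
    Iv (trs P) m := by
  rintro _ ⟨v, hv, rfl⟩
  exact hm _ ⟨v, h v hv, rfl⟩

lemma zpow_fix {g : Gam} {m : M} (h : g • m = m) (n : ℤ) : g ^ n • m = m := by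
  have : g ∈ MulAction.stabilizer Gam m := h
  exact Subgroup.zpow_mem _ this n

lemma iv_ext {P Q : (Fin 5 → ℤ) → Prop} (e : Fin 5 → ℤ) (c : (Fin 5 → ℤ) → ℤ)
    (h : ∀ v, Q v → P (v - c v • e)) {m : M} (hm : Iv (trs P) m) (he : mk e 0 • m = m) :
    Iv (trs Q) m := by
  rintro _ ⟨v, hv, rfl⟩
  have h1 : mk v 0 = mk (v - c v • e) 0 * mk e 0 ^ c v := by
    rw [mk_pow, mk_mul, hA0, sub_add_cancel, add_zero]
  rw [h1, mul_smul, zpow_fix he, hm _ ⟨_, h v hv, rfl⟩]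

lemma iv_T₁ {m : M} : Iv T₁ m ↔ tr 0 1 • m = m := by
  constructor
  · intro h; exact h _ ⟨_, by simp, rfl⟩
  · intro h
    refine iv_ext (P := fun v => v = 0) ![0, 1, 0, 0, 0] (fun v => v 1) ?_ ?_ h
    · rintro v ⟨h1, h2, h3, h4⟩
      funext i; fin_cases i <;> simp [h1, h2, h3, h4]
    · rintro _ ⟨v, rfl, rfl⟩
      rw [← mk_one, one_smul]

lemma iv_T₂ {m : M} : Iv T₂ m ↔ Iv T₁ m ∧ tr 1 0 • m = m := by
  constructor
  · intro h; exact ⟨iv_mono (fun v hv => hv.2) h, h _ ⟨_, by simp, rfl⟩⟩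
  · rintro ⟨h, h'⟩
    refine iv_ext ![1, 0, 0, 0, 0] (fun v => v 0) ?_ h h'
    rintro v ⟨h2, h3, h4⟩
    simp [h2, h3, h4]

lemma iv_T₃ {m : M} (h : Iv T₂ m) (h' : gp • m = m) : Iv T₃ m := by
  refine iv_ext ![0, 0, 1, 0, -1] (fun v => v 2) ?_ h h'
  rintro v ⟨h2, h3⟩
  simp [h2, h3]; omega

lemma iv_T₄ {m : M} (h : Iv T₃ m) (h' : ga • m = m) : Iv T₄ m := by
  refine iv_ext ![0, 0, 1, 0, 0] (fun v => v 2 + v 4) ?_ h h'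
  rintro v h2
  simp [h2]

lemma iv_T₅ {m : M} (h : Iv T₄ m) (h' : gb • m = m) : Iv T₅ m := by
  refine iv_ext ![0, 0, 0, 1, 0] (fun v => v 3) ?_ h h'
  rintro v h2
  simp

lemma gp_mem : gp ∈ T₃ := ⟨_, by simp, rfl⟩
lemma ga_mem : ga ∈ T₄ := ⟨_, by simp, rfl⟩
lemma gb_mem : gb ∈ T₅ := ⟨_, by simp, rfl⟩

lemma rel_a : ga = gτ * gσi := by
  simp only [ga, gτ, gσi, gd, mk_mul]
  exact mk_congr (by simp [hA1]) (by simp [hA1]) (by simp [hA1]) (by simp [hA1]) (by simp [hA1])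
    (by decide)
lemma rel_aσ : ga * gσ = gτ := by
  simp only [ga, gτ, gσ, gd, mk_mul]
  exact mk_congr (by simp [hA0]) (by simp [hA0]) (by simp [hA0]) (by simp [hA0]) (by simp [hA0])
    (by decide)
lemma rel_bs : gb * gs = gr * gp := by
  simp only [gb, gs, gr, gp, gd, mk_mul]
  exact mk_congr (by simp [hA0, hA2]) (by simp [hA0, hA2]) (by simp [hA0, hA2])
    (by simp [hA0, hA2]) (by simp [hA0, hA2]) (by decide)
lemma rel_ab : ga * gb = gb * ga := by
  simp only [ga, gb, mk_mul]
  exact mk_congr (by simp [hA0]) (by simp [hA0]) (by simp [hA0]) (by simp [hA0]) (by simp [hA0])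
    (by decide)
lemma rel_bσ : gb * gσ = gσ * ga := by
  simp only [ga, gb, gσ, gd, mk_mul]
  exact mk_congr (by simp [hA0, hA1]) (by simp [hA0, hA1]) (by simp [hA0, hA1])
    (by simp [hA0, hA1]) (by simp [hA0, hA1]) (by decide)
lemma rel_aσb : ga * (gσ * gb) = gσ * gp := by
  simp only [ga, gb, gσ, gp, gd, mk_mul]
  exact mk_congr (by simp [hA0, hA1]) (by simp [hA0, hA1]) (by simp [hA0, hA1])
    (by simp [hA0, hA1]) (by simp [hA0, hA1]) (by decide)
lemma rel_pσi : gp * gσi = gσi * gp := by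
  simp only [gσi, gp, gd, mk_mul]
  exact mk_congr (by simp [hA0, hA3]) (by simp [hA0, hA3]) (by simp [hA0, hA3])
    (by simp [hA0, hA3]) (by simp [hA0, hA3]) (by decide)
lemma rel_ττ : gτ * gτ = gr * gp := by
  simp only [gτ, gr, gp, gd, mk_mul]
  exact mk_congr (by simp [hA1, hA2]) (by simp [hA1, hA2]) (by simp [hA1, hA2])
    (by simp [hA1, hA2]) (by simp [hA1, hA2]) (by decide)
lemma rel_σs : gσ * gs = gτ * gr := by
  simp only [gτ, gr, gσ, gs, gd, mk_mul]
  exact mk_congr (by simp [hA1, hA2]) (by simp [hA1, hA2]) (by simp [hA1, hA2])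
    (by simp [hA1, hA2]) (by simp [hA1, hA2]) (by decide)

/-- the periodicity coordinate of order two -/
def kap2 : Gam → ZMod 2 := kap fun j _ => (![0, 0, 1, 1] : Fin 4 → ZMod 2) j

lemma kap2_two (v : Fin 5 → ℤ) (x : Gam) : kap2 (x * mk v 2) = kap2 x + 1 := by
  obtain ⟨w, j, rfl⟩ := mk_surj x
  rw [mk_mul]
  simp only [kap2, kap_mk]
  revert j; decide

lemma kap2_zero {P} : ∀ h ∈ trs P, ∀ x, kap2 (x * h) = kap2 x := by
  rintro _ ⟨v, -, rfl⟩ x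
  obtain ⟨w, j, rfl⟩ := mk_surj x
  rw [mk_mul]
  simp only [kap2, kap_mk, add_zero]

/-- the periodicity coordinate of order four -/
def kap4 : Gam → ZMod 4 := kap fun j _ => j

lemma kap4_one (x : Gam) : kap4 (x * gσ) = kap4 x + 1 := by
  obtain ⟨w, j, rfl⟩ := mk_surj x
  rw [gσ, gd, mk_mul]
  rfl

lemma kap4_zero {P} : ∀ h ∈ trs P, ∀ x, kap4 (x * h) = kap4 x := by
  rintro _ ⟨v, -, rfl⟩ x
  obtain ⟨w, j, rfl⟩ := mk_surj x
  rw [mk_mul]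
  simp only [kap4, kap_mk, add_zero]

variable {V : Type} [AddCommGroup V]

/-- selection -/
def sel (a b c d : ℤ) (j : ZMod 4) : ℤ := (![a, b, c, d] : Fin 4 → ℤ) j
lemma sel0 (a b c d : ℤ) : sel a b c d 0 = a := rfl
lemma sel1 (a b c d : ℤ) : sel a b c d 1 = b := rfl
lemma sel2 (a b c d : ℤ) : sel a b c d 2 = c := rfl
lemma sel3 (a b c d : ℤ) : sel a b c d 3 = d := rfl

lemma z4a : (1 + 1 : ZMod 4) = 2 := rfl
lemma z4b : (2 + 1 : ZMod 4) = 3 := rfl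
lemma z4c : (3 + 1 : ZMod 4) = 0 := rfl
lemma z4d : (1 + 2 : ZMod 4) = 3 := rfl
lemma z4e : (2 + 2 : ZMod 4) = 0 := rfl
lemma z4f : (3 + 2 : ZMod 4) = 1 := rfl

lemma sur_t2 (C : Co Gam V M) (m : M) : ∃ y, tr 0 1 • y - y = m := by
  obtain ⟨y, -, hy⟩ := C.sur (H := ∅) (g := tr 0 1) (fun h hh => hh.elim)
    (kap fun j v => sel (v 1) (-v 1) (v 1) (-v 1) j) (by
      intro x
      obtain ⟨w, j, rfl⟩ := mk_surj x
      rw [tr, mk_mul, kap_mk, kap_mk]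
      rcases z4_cases j with rfl | rfl | rfl | rfl <;>
        simp [hA0, hA1, hA2, hA3, sel0, sel1, sel2, sel3] <;> ring)
    (fun h hh => hh.elim) m (fun h hh => hh.elim)
  exact ⟨y, hy⟩

lemma sur_t1 (C : Co Gam V M) (m : M) (hm : Iv T₁ m) : ∃ y, Iv T₁ y ∧ tr 1 0 • y - y = m := by
  refine C.sur (nz_T₁ _) (kap fun j v => sel (v 0) (-v 0) (v 0) (-v 0) j) ?_ ?_ m hm
  · intro x
    obtain ⟨w, j, rfl⟩ := mk_surj x
    rw [tr, mk_mul, kap_mk, kap_mk]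
    rcases z4_cases j with rfl | rfl | rfl | rfl <;>
      simp [hA0, hA1, hA2, hA3, sel0, sel1, sel2, sel3] <;> ring
  · rintro _ ⟨v, ⟨h0, h2, h3, h4⟩, rfl⟩ x
    obtain ⟨w, j, rfl⟩ := mk_surj x
    rw [mk_mul, kap_mk, kap_mk]
    rcases z4_cases j with rfl | rfl | rfl | rfl <;>
      simp [hA0, hA1, hA2, hA3, sel0, sel1, sel2, sel3, h0, h2, h3, h4]

lemma sur_p (C : Co Gam V M) (m : M) (hm : Iv T₂ m) : ∃ y, Iv T₂ y ∧ gp • y - y = m := by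
  refine C.sur (nz_T₂ _) (kap fun j v => sel (v 2) (v 2) (v 2) (v 2) j) ?_ ?_ m hm
  · intro x
    obtain ⟨w, j, rfl⟩ := mk_surj x
    simp only [gp, gd]
    rw [mk_mul, kap_mk, kap_mk]
    rcases z4_cases j with rfl | rfl | rfl | rfl <;>
      simp [hA0, hA1, hA2, hA3, sel0, sel1, sel2, sel3]
  · rintro _ ⟨v, ⟨h2, h3, h4⟩, rfl⟩ x
    obtain ⟨w, j, rfl⟩ := mk_surj x
    rw [mk_mul, kap_mk, kap_mk]
    rcases z4_cases j with rfl | rfl | rfl | rfl <;>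
      simp [hA0, hA1, hA2, hA3, sel0, sel1, sel2, sel3, h2, h3, h4]

lemma sur_τ (C : Co Gam V M) (m : M) (hm : Iv T₂ m) : ∃ y, Iv T₂ y ∧ gτ • y - y = m := by
  refine C.sur (nz_T₂ _) (kap fun _ v => v 2 + v 3 - v 4) ?_ ?_ m hm
  · intro x
    obtain ⟨w, j, rfl⟩ := mk_surj x
    simp only [gτ, gd]
    rw [mk_mul, kap_mk, kap_mk]
    rcases z4_cases j with rfl | rfl | rfl | rfl <;>
      simp [hA0, hA1, hA2, hA3] <;> ring
  · rintro _ ⟨v, ⟨h2, h3, h4⟩, rfl⟩ x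
    obtain ⟨w, j, rfl⟩ := mk_surj x
    rw [mk_mul, kap_mk, kap_mk]
    rcases z4_cases j with rfl | rfl | rfl | rfl <;>
      simp [hA0, hA1, hA2, hA3, h2, h3, h4]

lemma sur_s (C : Co Gam V M) (m : M) (hm : Iv T₂ m) : ∃ y, Iv T₂ y ∧ gs • y - y = m := by
  refine C.sur (nz_T₂ _) (kap fun _ v => v 2 + v 3 - v 4) ?_ ?_ m hm
  · intro x
    obtain ⟨w, j, rfl⟩ := mk_surj x
    simp only [gs, gd]
    rw [mk_mul, kap_mk, kap_mk]
    rcases z4_cases j with rfl | rfl | rfl | rfl <;>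
      simp [hA0, hA1, hA2, hA3] <;> ring
  · rintro _ ⟨v, ⟨h2, h3, h4⟩, rfl⟩ x
    obtain ⟨w, j, rfl⟩ := mk_surj x
    rw [mk_mul, kap_mk, kap_mk]
    rcases z4_cases j with rfl | rfl | rfl | rfl <;>
      simp [hA0, hA1, hA2, hA3, h2, h3, h4]

lemma sur_a (C : Co Gam V M) (m : M) (hm : Iv T₃ m) : ∃ y, Iv T₃ y ∧ ga • y - y = m := by
  refine C.sur (nz_T₃ _)
    (kap fun j v => sel (v 2 + v 4) (v 3) (-(v 2 + v 4)) (-v 3) j) ?_ ?_ m hm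
  · intro x
    obtain ⟨w, j, rfl⟩ := mk_surj x
    simp only [ga]
    rw [mk_mul, kap_mk, kap_mk]
    rcases z4_cases j with rfl | rfl | rfl | rfl <;>
      simp [hA0, hA1, hA2, hA3, sel0, sel1, sel2, sel3] <;> ring
  · rintro _ ⟨v, ⟨h2, h3⟩, rfl⟩ x
    obtain ⟨w, j, rfl⟩ := mk_surj x
    rw [mk_mul, kap_mk, kap_mk]
    rcases z4_cases j with rfl | rfl | rfl | rfl <;>
      simp [hA0, hA1, hA2, hA3, sel0, sel1, sel2, sel3, h2] <;> omega

lemma sur_b (C : Co Gam V M) (m : M) (hm : Iv T₄ m) : ∃ y, Iv T₄ y ∧ gb • y - y = m := by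
  refine C.sur (nz_trs0 _)
    (kap fun j v => sel (v 3) (-(v 2 + v 4)) (-v 3) (v 2 + v 4) j) ?_ ?_ m hm
  · intro x
    obtain ⟨w, j, rfl⟩ := mk_surj x
    try simp only [gb]
    rw [mk_mul, kap_mk, kap_mk]
    rcases z4_cases j with rfl | rfl | rfl | rfl <;>
      simp [hA0, hA1, hA2, hA3, sel0, sel1, sel2, sel3] <;> ring
  · rintro _ ⟨v, h2, rfl⟩ x
    obtain ⟨w, j, rfl⟩ := mk_surj x
    rw [mk_mul, kap_mk, kap_mk]
    rcases z4_cases j with rfl | rfl | rfl | rfl <;>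
      simp [hA0, hA1, hA2, hA3, sel0, sel1, sel2, sel3, h2] <;> ring

end Act
end Crx

namespace Crx
set_option linter.unusedSectionVars false
set_option linter.unusedSimpArgs false

section Gd
variable {M : Type} [AddCommGroup M] [DistribMulAction Gam M]
variable {V : Type} [AddCommGroup V]

lemma nz_σ4 : gσ * (gσ * (gσ * gσ)) = 1 := (gd 0 0).h3
lemma rel_1 : gσ * gσi = 1 := (gd 0 0).h1
lemma rel_2 : gσi * gσ = 1 := (gd 0 0).h2
lemma rel_4 : gp * gσ = gσ * gp := (gd 0 0).h4
lemma rel_5 : gr * gr = 1 := (gd 0 0).h5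
lemma rel_6 : gr * gτ = gτ * gr := (gd 0 0).h6
lemma rel_7 : gτ * (gτ * gr) = gp := (gd 0 0).h7
lemma rel_8 : gσi * (gτ * gr) = gs := (gd 0 0).h8
lemma rel_9 : gs * gs = gp := (gd 0 0).h9
lemma rel_10 : gs * gτ = gσi * gp := (gd 0 0).h10
lemma rel_11 : gs * gσi = gτ := (gd 0 0).h11
lemma rel_12 : gτ * gσ = gs := (gd 0 0).h12

lemma sum2 (g : Gam) (m : M) : ∑ i ∈ Finset.range 2, g ^ i • m = m + g • m := by
  simp [Finset.sum_range_succ]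
lemma sum4 (g : Gam) (m : M) :
    ∑ i ∈ Finset.range 4, g ^ i • m = m + g • m + g • g • m + g • g • g • m := by
  simp [Finset.sum_range_succ, pow_succ, mul_smul]

/-- first exactness statement -/
lemma good_w1 (C : Co Gam V M) (y : M) (hy : Iv T₂ y) (hs : gs • y = y) :
    ∃ x, Iv T₂ x ∧ gp • x = x ∧ x - gτ • x + gs • x - gσi • x = y := by
  have hp : gp • y = y := by rw [← rel_9, mul_smul, hs, hs]
  obtain ⟨z, hz, hzy⟩ := C.tate2 (g := gs) (n := 2) (H := T₃) kap2 (fun x => kap2_two _ x) kap2_zero y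
    (iv_T₃ hy hp) hs
  rw [sum2] at hzy
  obtain ⟨w, hw, hwz⟩ := sur_a C z hz
  have hpw : gp • w = w := hw _ gp_mem
  have e1 : ga • w = gτ • gσi • w := by rw [rel_a, mul_smul]
  have e2 : gs • gτ • gσi • w = gσi • gσi • w := by
    rw [← mul_smul, rel_10, mul_smul, ← mul_smul gp, rel_pσi, mul_smul, hpw]
  have e3 : gs • gσi • w = gτ • w := by rw [← mul_smul, rel_11]
  have hx : Iv T₃ (-(gσi • w + w)) := iv_neg (iv_add (iv_smul (nz_T₃ _) hw) hw)
  refine ⟨-(gσi • w + w), iv_mono (fun v hv => by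
    obtain ⟨h1, h2, h3⟩ := hv
    exact ⟨h2, by rw [h1, h3, add_zero]⟩) hx, hx _ gp_mem, ?_⟩
  rw [← hzy, ← hwz, e1]
  simp only [smul_sub, smul_add, smul_neg, e2, e3]
  abel

/-- second exactness statement -/
lemma good_w0 (C : Co Gam V M) (x : M) (hx : Iv T₂ x) (hp : gp • x = x)
    (h0 : x - gτ • x + gs • x - gσi • x = 0) :
    ∃ mA, Iv T₂ mA ∧ ∃ mB, Iv T₂ mB ∧ gσ • mA = mA ∧ gp • mA = mA ∧ gr • mB = mB ∧ gτ • mB = mB ∧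
      mB - mA = x := by
  have hx3 : Iv T₃ x := iv_T₃ hx hp
  have h32 : ∀ {m : M}, Iv T₃ m → Iv T₂ m := fun h => iv_mono (fun v hv => by
    obtain ⟨h1, h2, h3⟩ := hv
    exact ⟨h2, by rw [h1, h3, add_zero]⟩) h
  have h43 : ∀ {m : M}, Iv T₄ m → Iv T₃ m := fun h => iv_mono (fun v hv => hv.1) h
  have h54 : ∀ {m : M}, Iv T₅ m → Iv T₄ m := fun h => iv_mono (fun v hv => trivial) h
  have P : ∀ {m : M}, Iv T₃ m → gp • m = m := fun h => h _ gp_mem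
  obtain ⟨Y, hY⟩ : ∃ z : M, z = x - gτ • x := ⟨_, rfl⟩
  have hY3 : Iv T₃ Y := hY ▸ iv_sub hx3 (iv_smul (nz_T₃ _) hx3)
  have hsτ : gs • gτ • x = gσi • x := by rw [← mul_smul, rel_10, mul_smul, hp]
  have hsY : gs • Y = -Y := by
    rw [hY, smul_sub, hsτ]
    rw [eq_neg_iff_add_eq_zero, ← h0]; abel
  obtain ⟨m1, hm1, ham1⟩ := sur_a C Y hY3
  have hrx : gr • x = gτ • gτ • x := by
    rw [← mul_smul gτ, rel_ττ, mul_smul, hp]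
  have hbY : gb • Y = -(gr • Y) := by
    have : gb • gs • Y = gr • Y := by rw [← mul_smul, rel_bs, mul_smul, P hY3]
    rw [← this, hsY, smul_neg, neg_neg]
  have hrτ : gr • gτ • x = gτ • gτ • gτ • x := by
    rw [← mul_smul gr, rel_6, mul_smul, hrx]
  have hrY : gr • Y = gτ • gτ • x - gτ • gτ • gτ • x := by
    rw [hY, smul_sub, hrx, hrτ]
  have hσsx : gσ • gs • x = gτ • gτ • gτ • x := by
    rw [← mul_smul, rel_σs, mul_smul, hrx]
  have hσY : gσ • Y = x - gτ • gτ • gτ • x := by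
    have : Y = gσi • x - gs • x := by
      rw [hY, ← sub_eq_zero, ← h0]; abel
    rw [this, smul_sub, hσsx, ← mul_smul, rel_1, one_smul]
  have hC1 : gτ • Y - gσ • Y = gb • Y - Y := by
    rw [hbY, hrY, hσY, hY, smul_sub]; abel
  have haσ : ∀ m : M, ga • gσ • m = gτ • m := fun m => by rw [← mul_smul, rel_aσ]
  have hab : ∀ m : M, ga • gb • m = gb • ga • m := fun m => by
    rw [← mul_smul, rel_ab, mul_smul]
  have hbσ : ∀ m : M, gb • gσ • m = gσ • ga • m := fun m => by
    rw [← mul_smul, rel_bσ, mul_smul]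
  have ham1' : ga • m1 = m1 + Y := by rw [← ham1]; abel
  obtain ⟨q, hq⟩ : ∃ z : M, z = gσ • Y - (gb • m1 - m1) := ⟨_, rfl⟩
  have haq : ga • q = q := by
    rw [hq, smul_sub, smul_sub, haσ, hab, ham1', smul_add, sub_eq_iff_eq_add.1 hC1]; abel
  have hq4 : Iv T₄ q := iv_T₄ (hq ▸ iv_sub (iv_smul (nz_T₃ _) hY3)
    (iv_sub (iv_smul (nz_T₃ _) hm1) hm1)) haq
  obtain ⟨m2, hm2, hbm2⟩ := sur_b C q hq4
  obtain ⟨m, hm⟩ : ∃ z : M, z = m1 + m2 := ⟨_, rfl⟩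
  have hm3 : Iv T₃ m := hm ▸ iv_add hm1 (h43 hm2)
  have ham : ga • m = m + Y := by
    rw [hm, smul_add, ham1', hm2 _ ga_mem]; abel
  have hbm : gb • m = m + gσ • Y := by
    rw [hm, smul_add, sub_eq_iff_eq_add.1 hbm2, hq]; abel
  obtain ⟨k, hk⟩ : ∃ z : M, z = gσ • m - m := ⟨_, rfl⟩
  have hak : ga • k = k := by
    have h1 : ga • gσ • gb • m = gσ • m := by
      rw [← mul_smul gσ, ← mul_smul, rel_aσb, mul_smul, P hm3]
    have h2 : ga • gσ • gσ • Y = gs • Y := by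
      rw [haσ, ← mul_smul, rel_12]
    rw [hbm, smul_add, smul_add, h2, hsY] at h1
    rw [hk, smul_sub, ham, eq_sub_of_add_eq h1]; abel
  have hbk : gb • k = k := by
    rw [hk, smul_sub, hbσ, ham, hbm, smul_add]; abel
  have hk5 : Iv T₅ k := iv_T₅ (iv_T₄ (hk ▸ iv_sub (iv_smul (nz_T₃ _) hm3) hm3) hak) hbk
  obtain ⟨n, hn, hσn⟩ := C.tate1 (n := 4) (nz_T₅ gσ) kap4 kap4_one kap4_zero k hk5 (by
    rw [sum4, hk]
    have : gσ • gσ • gσ • gσ • m = m := by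
      simp only [← mul_smul]; rw [mul_smul]; simp only [← mul_smul]; rw [nz_σ4, one_smul]
    simp only [smul_sub, this]
    abel)
  have hn3 : Iv T₃ n := h43 (h54 hn)
  have hA : Iv T₃ (m - n) := iv_sub hm3 hn3
  have hB : Iv T₃ (x + (m - n)) := iv_add hx3 hA
  have hσA : gσ • (m - n) = m - n := by
    rw [smul_sub, sub_eq_iff_eq_add.1 hσn, hk]; abel
  have hτB : gτ • (x + (m - n)) = x + (m - n) := by
    have : gτ • (m - n) = m - n + Y := by
      rw [← haσ, hσA, smul_sub, ham, h54 hn _ ga_mem]; abel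
    rw [smul_add, this, hY]; abel
  refine ⟨m - n, h32 hA, x + (m - n), h32 hB, hσA, P hA, ?_, hτB, by abel⟩
  have h7 : gτ • gτ • (x + (m - n)) = gr • (x + (m - n)) := by
    rw [← mul_smul, rel_ττ, mul_smul, P hB]
  rw [← h7, hτB, hτB]

end Gd

section Gm
variable {M : Type} [AddCommGroup M] [DistribMulAction Gam M] [Module RG M]
variable {V : Type} [AddCommGroup V]

/-- submodules of invariants -/
def Ksub (hsm : ∀ (g : Gam) (c : ℤ) (m : M), (MonoidAlgebra.single g c : RG) • m = c • g • m)
    (H : Set Gam) (hH : ∀ g, Nz H g) : Submodule RG M where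
  carrier := {m | Iv H m}
  add_mem' := iv_add
  zero_mem' := iv_zero
  smul_mem' := by
    intro c m hm
    induction c using MonoidAlgebra.induction_linear with
    | zero => rw [zero_smul]; exact iv_zero
    | add f g hf hg => rw [add_smul]; exact iv_add hf hg
    | single g c =>
      rw [hsm]
      intro h hh
      rw [smul_comm, iv_smul (hH g) hm h hh]

lemma mem_Ksub {hsm : ∀ (g : Gam) (c : ℤ) (m : M), (MonoidAlgebra.single g c : RG) • m = c • g • m}
    {H : Set Gam} {hH : ∀ g, Nz H g} {m : M} : m ∈ Ksub hsm H hH ↔ Iv H m := Iff.rfl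

lemma acyc_CX (hsm : ∀ (g : Gam) (c : ℤ) (m : M), (MonoidAlgebra.single g c : RG) • m = c • g • m)
    (C : Co Gam V M) : Acyc CX (⊤ : Submodule RG M) := by
  have sm : ∀ (g : Gam) (m : M), (MonoidAlgebra.single g 1 : RG) • m = g • m :=
    fun g m => by rw [hsm, one_smul]
  have sσ : ∀ m : M, D₀₀.σ • m = gσ • m := sm _
  have sσi : ∀ m : M, D₀₀.σi • m = gσi • m := sm _
  have sτ : ∀ m : M, D₀₀.τ • m = gτ • m := sm _
  have ss : ∀ m : M, D₀₀.s • m = gs • m := sm _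
  have sp : ∀ m : M, D₀₀.p • m = gp • m := sm _
  have sr : ∀ m : M, D₀₀.r • m = gr • m := sm _
  have sn : ∀ m : M, D₀₀.nm • m = m + gσ • m + gσ • gσ • m + gσ • gσ • gσ • m := by
    intro m
    simp only [Dat.nm, add_smul, mul_smul, one_smul, sσ]
  have hk1 : ∀ m : M, c₁ • m = 0 ↔ tr 1 0 • m = m := fun m => by
    rw [c₁, sub_smul, one_smul, sm, sub_eq_zero, eq_comm]
  have hk2 : ∀ m : M, c₂ • m = 0 ↔ tr 0 1 • m = m := fun m => by
    rw [c₂, sub_smul, one_smul, sm, sub_eq_zero, eq_comm]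
  refine acyc_cG (K₁ := Ksub hsm T₁ nz_T₁) (K₂ := Ksub hsm T₂ nz_T₂) c_comm tw1 tw2 tw4 ?_ ?_ ?_ ?_ ?_
  · intro m
    rw [mem_Ksub, hk2, iv_T₁]; simp
  · intro m
    rw [mem_Ksub, mem_Ksub, hk1, iv_T₂]
  · intro m _
    obtain ⟨y, hy⟩ := sur_t2 C (-m)
    refine ⟨y, trivial, ?_⟩
    rw [c₂, sub_smul, one_smul, sm, ← neg_inj, ← hy, neg_sub]
  · intro m hm
    obtain ⟨y, hy, hym⟩ := sur_t1 C (-m) (iv_neg hm)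
    refine ⟨y, hy, ?_⟩
    rw [c₁, sub_smul, one_smul, sm, ← neg_inj, ← hym, neg_sub]
  constructor
  · intro m hm h
    rw [sub_smul, one_smul, sσ, sub_eq_zero] at h
    obtain ⟨y, hy, hym⟩ := C.tate2 (n := 4) kap4 kap4_one kap4_zero m hm h
    exact ⟨y, hy, by rw [sn, ← hym, sum4]⟩
  · intro m hm h
    rw [sn] at h
    obtain ⟨y, hy, hym⟩ := C.tate1 (n := 4) (nz_T₂ gσ) kap4 kap4_one kap4_zero m hm
      (by rw [sum4, h])
    exact ⟨y, hy, by rw [sub_smul, one_smul, sσ, hym]⟩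
  · intro m hm h
    rw [sub_smul, one_smul, sr, sub_eq_zero] at h
    obtain ⟨y, hy, hym⟩ := C.tate2 (n := 2) (g := gr) kap2 (fun x => kap2_two _ x) kap2_zero m hm h
    exact ⟨y, hy, by rw [add_smul, one_smul, sr, ← hym, sum2]⟩
  · intro m hm h
    rw [add_smul, one_smul, sr] at h
    obtain ⟨y, hy, hym⟩ := C.tate1 (n := 2) (nz_T₂ gr) kap2 (fun x => kap2_two _ x) kap2_zero m hm
      (by rw [sum2, h])
    exact ⟨y, hy, by rw [sub_smul, one_smul, sr, hym]⟩
  · intro m hm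
    obtain ⟨y, hy, hym⟩ := sur_p C m hm
    exact ⟨y, hy, by rw [sub_smul, one_smul, sp, hym]⟩
  · intro m hm
    obtain ⟨y, hy, hym⟩ := sur_τ C m hm
    exact ⟨y, hy, by rw [sub_smul, one_smul, sτ, hym]⟩
  · intro m hm
    obtain ⟨y, hy, hym⟩ := sur_s C m hm
    exact ⟨y, hy, by rw [sub_smul, one_smul, ss, hym]⟩
  · intro y hy h
    rw [sub_smul, one_smul, ss, sub_eq_zero] at h
    obtain ⟨x, hx, hpx, he⟩ := good_w1 C y hy h
    refine ⟨x, hx, ?_, ?_⟩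
    · rw [sub_smul, one_smul, sp, hpx, sub_self]
    · simpa only [sub_smul, add_smul, one_smul, sτ, ss, sσi] using he
  · intro x hx h h'
    rw [sub_smul, one_smul, sp, sub_eq_zero] at h
    simp only [sub_smul, add_smul, one_smul, sτ, ss, sσi] at h'
    obtain ⟨a, ha, b, hb, h1, h2, h3, h4, h5⟩ := good_w0 C x hx h h'
    refine ⟨a, ha, b, hb, ?_, ?_, ?_, ?_, h5⟩
    · rw [sub_smul, one_smul, sσ, h1, sub_self]
    · rw [sub_smul, one_smul, sp, h2, sub_self]
    · rw [sub_smul, one_smul, sr, h3, sub_self]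
    · rw [sub_smul, one_smul, sτ, h4, sub_self]

/-- elements fixed by the generators -/
lemma fix_all {m : M} (h1 : gσ • m = m) (h2 : gτ • m = m) (h3 : tr 1 0 • m = m)
    (h4 : tr 0 1 • m = m) (g : Gam) : g • m = m := by
  have hσi : gσi • m = m := by
    nth_rewrite 1 [← h1]
    rw [← mul_smul, rel_2, one_smul]
  have ha : ga • m = m := by rw [rel_a, mul_smul, hσi, h2]
  have hb : gb • m = m := by
    nth_rewrite 1 [← h1]
    rw [← mul_smul, rel_bσ, mul_smul, ha, h1]
  have hs : gs • m = m := by rw [← rel_12, mul_smul, h1, h2]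
  have hp : gp • m = m := by rw [← rel_9, mul_smul, hs, hs]
  have h5 : Iv T₅ m := iv_T₅ (iv_T₄ (iv_T₃ (iv_T₂.2 ⟨iv_T₁.2 h4, h3⟩) hp) ha) hb
  obtain ⟨v, j, rfl⟩ := mk_surj g
  have h6 : mk v j = mk v 0 * gσ ^ j.val := by
    have : ∀ n : ℕ, gσ ^ n = mk 0 n := by
      intro n
      induction n with
      | zero => rw [pow_zero, mk_one, Nat.cast_zero]
      | succ n ih =>
        rw [pow_succ, ih, gσ, gd, mk_mul, Nat.cast_succ]
        have : hA n ![0, 0, 0, 0, 0] = 0 := by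
          have : (![0, 0, 0, 0, 0] : Fin 5 → ℤ) = 0 := by
            funext i; fin_cases i <;> rfl
          rw [this, hA, Matrix.mulVec_zero]
        rw [this, add_zero]
    rw [this, mk_mul, hA0, ZMod.natCast_zmod_val, add_zero, zero_add]
  rw [h6, mul_smul]
  have h7 : ∀ n : ℕ, gσ ^ n • m = m := fun n => by
    have := zpow_fix h1 n
    rwa [zpow_natCast] at this
  rw [h7]
  exact h5 _ ⟨_, trivial, rfl⟩

end Gm
end Crx

namespace Crx
set_option linter.unusedSectionVars false
set_option linter.unusedSimpArgs false

section Delta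
open CategoryTheory CategoryTheory.Limits

variable {k : Type} [CommRing k] {C : Type 1} [Category.{0} C] [Abelian C]
/-- cohomology functors -/
noncomputable abbrev HH (F : C ⥤ CochainComplex (ModuleCat.{0} k) ℕ) (n : ℕ) : C ⥤ ModuleCat.{0} k :=
  F ⋙ HomologicalComplex.homologyFunctor _ _ n

variable {F T : C ⥤ CochainComplex (ModuleCat.{0} k) ℕ} [F.PreservesZeroMorphisms] [T.PreservesZeroMorphisms]

lemma h1_coker {S : ShortComplex C} (hF : (S.map F).ShortExact)
    (h : IsZero ((HH F 1).obj S.X₂)) :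
    Nonempty ((HH F 1).obj S.X₁ ≅ cokernel ((HH F 0).map S.g)) := by
  have hex := hF.homology_exact₃ 0 1 rfl
  have : Epi (hF.δ 0 1 rfl) := hF.epi_δ _ _ _ h
  exact ⟨(hex.gIsCokernel.coconePointUniqueUpToIso (colimit.isColimit _))⟩

lemma hn_delta {S : ShortComplex C} (hF : (S.map F).ShortExact) (n : ℕ)
    (h : IsZero ((HH F (n + 1)).obj S.X₂)) (h' : IsZero ((HH F (n + 2)).obj S.X₂)) :
    Nonempty ((HH F (n + 1)).obj S.X₃ ≅ (HH F (n + 2)).obj S.X₁) := by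
  have : IsIso (hF.δ (n + 1) (n + 2) rfl) := hF.isIso_δ _ _ _ h h'
  exact ⟨@asIso _ _ _ _ (hF.δ (n + 1) (n + 2) rfl) this⟩

theorem delta_main (hF : ∀ S : ShortComplex C, S.ShortExact → (S.map F).ShortExact)
    (hT : ∀ S : ShortComplex C, S.ShortExact → (S.map T).ShortExact)
    (hI : ∀ M : C, ∃ (I : C) (f : M ⟶ I), Mono f ∧ ∀ n, IsZero ((HH F (n + 1)).obj I) ∧
      IsZero ((HH T (n + 1)).obj I)) (e : HH F 0 ≅ HH T 0) (n : ℕ) :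
    ∀ M : C, Nonempty ((HH F n).obj M ≅ (HH T n).obj M) := by
  induction n with
  | zero => exact fun M => ⟨e.app M⟩
  | succ n ih =>
    intro M
    obtain ⟨I, f, hf, hz⟩ := hI M
    have hS : (ShortComplex.mk f (cokernel.π f) (cokernel.condition f)).ShortExact :=
      { exact := ShortComplex.exact_cokernel f }
    cases n with
    | zero =>
      obtain ⟨a⟩ := h1_coker (hF _ hS) (hz 0).1
      obtain ⟨b⟩ := h1_coker (hT _ hS) (hz 0).2
      exact ⟨a ≪≫ cokernel.mapIso _ _ (e.app _) (e.app _) (e.hom.naturality _) ≪≫ b.symm⟩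
    | succ n =>
      obtain ⟨a⟩ := hn_delta (hF _ hS) n (hz n).1 (hz (n + 1)).1
      obtain ⟨b⟩ := hn_delta (hT _ hS) n (hz n).2 (hz (n + 1)).2
      obtain ⟨c⟩ := ih (cokernel f)
      exact ⟨a.symm ≪≫ c ≪≫ b⟩
end Delta
end Crx

namespace Crx
set_option linter.unusedSectionVars false
set_option linter.unusedSimpArgs false
set_option linter.unusedVariables false

section Cpx
open CategoryTheory CategoryTheory.Limits

variable {k : Type} [CommRing k]

/-- The group action on a representation. -/
noncomputable instance dmaG (M : Rep.{0} k Gam) : DistribMulAction Gam M.V where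
  smul g m := M.ρ g m
  one_smul m := by
    show M.ρ 1 m = m
    rw [map_one]; rfl
  mul_smul g h m := by
    show M.ρ (g * h) m = M.ρ g (M.ρ h m)
    rw [map_mul]; rfl
  smul_zero g := map_zero (M.ρ g)
  smul_add g := map_add (M.ρ g)

lemma dmaG_smul (M : Rep.{0} k Gam) (g : Gam) (m : M.V) : g • m = M.ρ g m := rfl

/-- The group ring action on a representation. -/
noncomputable instance modRG (M : Rep.{0} k Gam) : Module RG M.V :=
  Module.compHom M.V
    (MonoidAlgebra.lift ℤ (AddMonoid.End M.V) Gam (DistribMulAction.toAddMonoidEnd Gam M.V)).toRingHom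

lemma modRG_smul (M : Rep.{0} k Gam) (g : Gam) (c : ℤ) (m : M.V) :
    (MonoidAlgebra.single g c : RG) • m = c • g • m := by
  show (MonoidAlgebra.lift ℤ (AddMonoid.End M.V) Gam (DistribMulAction.toAddMonoidEnd Gam M.V))
    (MonoidAlgebra.single g c) m = c • g • m
  rw [MonoidAlgebra.lift_single]
  rfl

lemma modRG_comm (M : Rep.{0} k Gam) (a : RG) (c : k) (m : M.V) : a • c • m = c • a • m := by
  induction a using MonoidAlgebra.induction_linear with
  | zero => rw [zero_smul, zero_smul, smul_zero]
  | add a b ha hb => rw [add_smul, add_smul, smul_add, ha, hb]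
  | single g z =>
    rw [modRG_smul, modRG_smul, dmaG_smul, dmaG_smul, map_smul, smul_comm]

/-- differentials -/
noncomputable def dM (M : Rep.{0} k Gam) (n : ℕ) : (Gι n → M.V) →ₗ[k] (Gι (n + 1) → M.V) :=
  { toFun := fun x => act (CX n) x
    map_add' := act_add _
    map_smul' := fun c x => by
      funext i
      show ∑ j, CX n i j • c • x j = c • ∑ j, CX n i j • x j
      rw [Finset.smul_sum]
      exact Finset.sum_congr rfl fun j _ => modRG_comm M _ _ _ }

lemma dM_apply (M : Rep.{0} k Gam) (n : ℕ) (x : Gι n → M.V) : dM M n x = act (CX n) x := rfl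

lemma dM_dM (M : Rep.{0} k Gam) (n : ℕ) (x : Gι n → M.V) : dM M (n + 1) (dM M n x) = 0 := by
  rw [dM_apply, dM_apply, ← act_mul, sq_CX n, zero_act]

/-- The complex attached to a representation. -/
noncomputable def Tobj (M : Rep.{0} k Gam) : CochainComplex (ModuleCat.{0} k) ℕ :=
  CochainComplex.of (fun n => ModuleCat.of k (Gι n → M.V)) (fun n => ModuleCat.ofHom (dM M n))
    (fun n => by
      apply ModuleCat.hom_ext
      apply LinearMap.ext
      intro x
      exact dM_dM M n x)

lemma Tobj_d (M : Rep.{0} k Gam) (n : ℕ) : (Tobj M).d n (n + 1) = ModuleCat.ofHom (dM M n) :=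
  CochainComplex.of_d (fun n => ModuleCat.of k (Gι n → M.V)) (fun n => ModuleCat.ofHom (dM M n)) n

/-- maps -/
noncomputable def fM {M N : Rep.{0} k Gam} (f : M ⟶ N) (n : ℕ) : (Gι n → M.V) →ₗ[k] (Gι n → N.V) :=
  f.hom.toLinearMap.compLeft (Gι n)

lemma fM_smul {M N : Rep.{0} k Gam} (f : M ⟶ N) (c : RG) (m : M.V) :
    f.hom (c • m) = c • f.hom m := by
  induction c using MonoidAlgebra.induction_linear with
  | zero => rw [zero_smul, zero_smul, map_zero]
  | add a b ha hb => rw [add_smul, add_smul, map_add, ha, hb]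
  | single g c =>
    rw [modRG_smul, modRG_smul, map_zsmul]
    congr 1
    exact Rep.hom_comm_apply f g m

lemma fM_dM {M N : Rep.{0} k Gam} (f : M ⟶ N) (n : ℕ) (x : Gι n → M.V) :
    fM f (n + 1) (dM M n x) = dM N n (fM f n x) := by
  funext i
  show f.hom (∑ j, CX n i j • x j) = ∑ j, CX n i j • f.hom (x j)
  rw [map_sum]
  exact Finset.sum_congr rfl fun j _ => fM_smul f _ _

/-- The functor. -/
noncomputable def TT (k : Type) [CommRing k] : Rep.{0} k Gam ⥤ CochainComplex (ModuleCat.{0} k) ℕ where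
  obj := Tobj
  map {M N} f := CochainComplex.ofHom (fun n => ModuleCat.ofHom (fM f n)) (fun n => by
      show ModuleCat.ofHom (fM f n) ≫ (Tobj N).d n (n + 1) =
        (Tobj M).d n (n + 1) ≫ ModuleCat.ofHom (fM f (n + 1))
      rw [Tobj_d, Tobj_d]
      apply ModuleCat.hom_ext
      apply LinearMap.ext
      intro x
      exact (fM_dM f n x).symm)
  map_id M := by
    apply HomologicalComplex.hom_ext
    intro n
    apply ModuleCat.hom_ext
    apply LinearMap.ext
    intro x
    rfl
  map_comp f g := by
    apply HomologicalComplex.hom_ext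
    intro n
    apply ModuleCat.hom_ext
    apply LinearMap.ext
    intro x
    rfl

instance : (TT k).PreservesZeroMorphisms where
  map_zero M N := by
    apply HomologicalComplex.hom_ext
    intro n
    apply ModuleCat.hom_ext
    apply LinearMap.ext
    intro x
    rfl

lemma TT_f {M N : Rep.{0} k Gam} (f : M ⟶ N) (n : ℕ) (x : Gι n → M.V) :
    (((TT k).map f).f n).hom x = fM f n x := rfl

lemma rep_exact {S : ShortComplex (Rep.{0} k Gam)} (hS : S.ShortExact) (y : S.X₂.V)
    (hy : S.g.hom y = 0) : ∃ x : S.X₁.V, S.f.hom x = y := by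
  have := (hS.exact.map (forget₂ (Rep.{0} k Gam) (ModuleCat.{0} k)))
  rw [ShortComplex.moduleCat_exact_iff] at this
  exact this y hy

lemma TT_exact (S : ShortComplex (Rep.{0} k Gam)) (hS : S.ShortExact) : (S.map (TT k)).ShortExact := by
  refine HomologicalComplex.shortExact_of_degreewise_shortExact _ fun n => ?_
  have hf := (Rep.mono_iff_injective _).1 hS.mono_f
  have hg := (Rep.epi_iff_surjective _).1 hS.epi_g
  refine ShortComplex.ShortExact.mk' ?_ ?_ ?_
  · rw [ShortComplex.moduleCat_exact_iff]
    intro y hy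
    have hy' : ∀ i, S.g.hom ((y : Gι n → S.X₂.V) i) = 0 := fun i => congrFun hy i
    choose x hx using fun i => rep_exact hS _ (hy' i)
    exact ⟨(x : Gι n → S.X₁.V), funext hx⟩
  · rw [ModuleCat.mono_iff_injective]
    intro x y hxy
    exact funext fun i => hf (congrFun hxy i)
  · rw [ModuleCat.epi_iff_surjective]
    intro y
    choose x hx using fun i => hg ((y : Gι n → S.X₃.V) i)
    exact ⟨(x : Gι n → S.X₂.V), funext hx⟩

/-- kernels and images -/
lemma Tker (M : Rep.{0} k Gam) (n : ℕ) (x : Gι n → M.V) :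
    ((Tobj M).d n (n + 1)).hom x = act (CX n) x := by
  rw [Tobj_d]; rfl

lemma TT_zero (M : Rep.{0} k Gam) (h : Acyc CX (⊤ : Submodule RG M.V)) (n : ℕ) :
    IsZero ((HH (TT k) (n + 1)).obj M) := by
  show IsZero ((Tobj M).homology (n + 1))
  rw [← HomologicalComplex.exactAt_iff_isZero_homology,
    HomologicalComplex.exactAt_iff' _ n (n + 1) (n + 2) (by simp) (by simp),
    ShortComplex.moduleCat_exact_iff]
  intro x hx
  obtain ⟨y, -, hy⟩ := h n x (fun _ => trivial) ((Tker M (n + 1) x).symm.trans hx)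
  exact ⟨y, (Tker M n y).trans hy⟩

/-- The coinduced module. -/
noncomputable def coI (M : Rep.{0} k Gam) : Rep.{0} k Gam :=
  Rep.coind (⊥ : Subgroup Gam).subtype (Rep.res (⊥ : Subgroup Gam).subtype M)

lemma mem_co (M : Rep.{0} k Gam) (f : Gam → M.V) :
    f ∈ Representation.coindV (⊥ : Subgroup Gam).subtype
      (Rep.res (⊥ : Subgroup Gam).subtype M).ρ := by
  rintro ⟨g, hg⟩ x
  obtain rfl := Subgroup.mem_bot.1 hg
  show f (1 * x) = M.ρ 1 (f x)
  rw [one_mul, map_one]; rfl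

/-- coinduced structure -/
noncomputable def coCo (M : Rep.{0} k Gam) : Co Gam M.V (coI M).V where
  ev :=
    { toFun := fun f => f.1
      invFun := fun f => ⟨f, mem_co M f⟩
      left_inv := fun f => rfl
      right_inv := fun f => rfl
      map_add' := fun f g => rfl }
  hev := fun g m x => rfl

/-- The embedding. -/
noncomputable def coEmb (M : Rep.{0} k Gam) : M ⟶ coI M :=
  Rep.ofHom
    { toFun := fun m => ⟨fun g => M.ρ g m, mem_co M _⟩
      map_add' := fun a b => by
        apply Subtype.ext; funext g; exact map_add (M.ρ g) a b
      map_smul' := fun a b => by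
        apply Subtype.ext; funext g; exact map_smul (M.ρ g) a b
      isIntertwining' := fun g => by
        apply LinearMap.ext
        intro m
        apply Subtype.ext
        funext x
        show M.ρ x (M.ρ g m) = M.ρ (x * g) m
        rw [map_mul]; rfl }

lemma coEmb_mono (M : Rep.{0} k Gam) : Mono (coEmb M) := by
  rw [Rep.mono_iff_injective]
  intro a b h
  have := congrFun (congrArg Subtype.val h) 1
  have h' : M.ρ 1 a = M.ρ 1 b := this
  rw [map_one] at h'
  exact h'

lemma coI_zero (M : Rep.{0} k Gam) (n : ℕ) : IsZero (groupCohomology (coI M) (n + 1)) :=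
  (isZero_groupCohomology_succ_of_subsingleton
    (Rep.res (⊥ : Subgroup Gam).subtype M) n).of_iso (groupCohomology.coindIso _ _)

end Cpx
end Crx

namespace Crx
set_option linter.unusedSectionVars false
set_option linter.unusedSimpArgs false
set_option linter.unusedVariables false

section HZero
open CategoryTheory CategoryTheory.Limits
variable {k : Type} [CommRing k]

lemma abs_nat {C : Type*} [Category C] {H H' I I' Z Z' T T' : C} (a : H ≅ I) (a' : H' ≅ I')
    (l : I ≅ Z) (l' : I' ≅ Z') (b : Z ≅ T) (b' : Z' ≅ T') {h : H ⟶ H'} {i : I ⟶ I'} {z : Z ⟶ Z'}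
    {t : T ⟶ T'} (h1 : h ≫ a'.hom = a.hom ≫ i) (h2 : i ≫ l'.hom = l.hom ≫ z)
    (h3 : t ≫ b'.inv = b.inv ≫ z) :
    h ≫ (a' ≪≫ l' ≪≫ b').hom = (a ≪≫ l ≪≫ b).hom ≫ t := by
  have h4 : z ≫ b'.hom = b.hom ≫ t := by
    rw [← Iso.inv_comp_eq, ← Category.assoc, ← h3, Category.assoc, Iso.inv_hom_id,
      Category.comp_id]
  simp only [Iso.trans_hom, Category.assoc]
  rw [← Category.assoc, h1, Category.assoc, ← h4, ← Category.assoc i, h2, Category.assoc]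

lemma abs_lift {C : Type*} [Category C] {I I' Z Z' X X' : C} {l : I ⟶ Z} {l' : I' ⟶ Z'}
    {c : Z ⟶ X} {c' : Z' ⟶ X'} {p : I ⟶ X} {p' : I' ⟶ X'} {i : I ⟶ I'} {z : Z ⟶ Z'} {x : X ⟶ X'}
    (hm : Mono c') (h : l ≫ c = p) (h' : l' ≫ c' = p') (hz : z ≫ c' = c ≫ x)
    (hp : i ≫ p' = p ≫ x) : i ≫ l' = l ≫ z := by
  rw [← cancel_mono c', Category.assoc, h', hp, Category.assoc, hz, ← Category.assoc, h]

lemma CX_zero_act (M : Rep.{0} k Gam) (a b : M.V) : act (CX 0) (e0 a b : Gι 0 → M.V) =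
    pr (ι := coneι Dι Dι) (κ := coneι Dι Dι)
      (pr (ι := Dι) (κ := Dι)
        (pr (ι := Eι) (κ := coneι twoι twoι)
          (e4 0 ((D₀₀.σ - 1) • a) ((D₀₀.p - 1) • a) ((D₀₀.r - 1) • b) ((D₀₀.τ - 1) • b)) (u (b - a)))
        (e0 (c₁ • a) (c₁ • b))) (e0 (c₂ • a) (c₂ • b)) := by
  rw [← act_cE0, ← act_fE0 D₀₀]
  refine (cone_act_zero _ _ _ _).trans ?_
  congr 1
  · refine (cone_act_zero _ _ _ _).trans ?_
    congr 1
    · exact cone_act_zero _ _ _ _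
    · refine (act_scal _ _).trans ?_
      funext i; rcases i with i | i <;> rfl
  · refine (act_scal _ _).trans ?_
    funext i; rcases i with i | i <;> rfl

lemma inv_smul {M : Rep.{0} k Gam} {m : M.V} (h : ∀ g : Gam, g • m = m) (g : Gam) :
    (MonoidAlgebra.single g 1 : RG) • m = m := by
  rw [modRG_smul, one_smul, h]

lemma ker_of_inv {M : Rep.{0} k Gam} {m : M.V} (h : ∀ g : Gam, g • m = m) :
    act (CX 0) (e0 m m : Gι 0 → M.V) = 0 := by
  have h1 : (D₀₀.σ - 1) • m = 0 := by
    rw [sub_smul, one_smul, sub_eq_zero]; exact inv_smul h _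
  have h2 : (D₀₀.p - 1) • m = 0 := by
    rw [sub_smul, one_smul, sub_eq_zero]; exact inv_smul h _
  have h3 : (D₀₀.r - 1) • m = 0 := by
    rw [sub_smul, one_smul, sub_eq_zero]; exact inv_smul h _
  have h4 : (D₀₀.τ - 1) • m = 0 := by
    rw [sub_smul, one_smul, sub_eq_zero]; exact inv_smul h _
  have h5 : c₁ • m = 0 := by
    rw [c₁, sub_smul, one_smul, sub_eq_zero]; exact (inv_smul h _).symm
  have h6 : c₂ • m = 0 := by
    rw [c₂, sub_smul, one_smul, sub_eq_zero]; exact (inv_smul h _).symm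
  have e : (e0 (0 : M.V) 0) = 0 := by funext i; rcases i with i | i <;> rfl
  rw [CX_zero_act, h1, h2, h3, h4, h5, h6, sub_self, e4_zero, e]
  have e3 : pr (ι := Eι) (κ := coneι twoι twoι) (n := 0) (0 : Eι 1 → M.V) (u (0 : M.V)) = 0 := pr_zero
  refine (congrArg (fun z => pr (ι := coneι Dι Dι) (κ := coneι Dι Dι) (n := 0)
    (pr (ι := Dι) (κ := Dι) (n := 0) z (0 : Dι 0 → M.V))
    (0 : coneι Dι Dι 0 → M.V)) e3).trans ?_
  have e2 : pr (ι := Dι) (κ := Dι) (n := 0) (0 : Dι 1 → M.V) (0 : Dι 0 → M.V) = 0 := pr_zero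
  refine (congrArg (fun z => pr (ι := coneι Dι Dι) (κ := coneι Dι Dι) (n := 0) z
    (0 : coneι Dι Dι 0 → M.V)) e2).trans ?_
  exact pr_zero

lemma inv_of_ker {M : Rep.{0} k Gam} (x : Gι 0 → M.V) (h : act (CX 0) x = 0) :
    ∃ m : M.V, (∀ g : Gam, g • m = m) ∧ x = e0 m m := by
  obtain ⟨a, b, rfl⟩ : ∃ a b, x = (e0 a b : Gι 0 → M.V) := e0_surj x
  rw [CX_zero_act, ← pr_zero] at h
  obtain ⟨h, h2⟩ := pr_inj h
  rw [show (0 : coneι Dι Dι (0 + 1) → M.V) = pr (ι := Dι) (κ := Dι) 0 0 from pr_zero.symm] at h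
  obtain ⟨h, h1⟩ := pr_inj h
  rw [show (0 : Dι (0 + 1) → M.V) = pr (ι := Eι) (κ := coneι twoι twoι) 0 0 from pr_zero.symm] at h
  obtain ⟨h, h0⟩ := pr_inj h
  rw [← e4_zero] at h
  obtain ⟨hσ, -, -, hτ⟩ := e4_inj h
  have hab : b - a = 0 := congrFun h0 ()
  obtain rfl : b = a := sub_eq_zero.1 hab
  have h1' : c₁ • b = 0 := congrFun h1 (Sum.inl ())
  have h2' : c₂ • b = 0 := congrFun h2 (Sum.inl ())
  have sm : ∀ g : Gam, (MonoidAlgebra.single g 1 : RG) • b = g • b := fun g => by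
    rw [modRG_smul, one_smul]
  refine ⟨b, fix_all ?_ ?_ ?_ ?_, rfl⟩
  · rw [sub_smul, one_smul, sub_eq_zero] at hσ
    exact (sm _).symm.trans hσ
  · rw [sub_smul, one_smul, sub_eq_zero] at hτ
    exact (sm _).symm.trans hτ
  · rw [c₁, sub_smul, one_smul, sub_eq_zero] at h1'
    exact (sm _).symm.trans h1'.symm
  · rw [c₂, sub_smul, one_smul, sub_eq_zero] at h2'
    exact (sm _).symm.trans h2'.symm

/-- constants -/
noncomputable def phi0 (M : Rep.{0} k Gam) : ModuleCat.of k M.ρ.invariants ⟶ (Tobj M).X 0 :=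
  ModuleCat.ofHom
    { toFun := fun m => (e0 m.1 m.1 : Gι 0 → M.V)
      map_add' := fun a b => by
        funext i; rcases i with i | i <;> rfl
      map_smul' := fun c a => by
        funext i; rcases i with i | i <;> rfl }

lemma phi0_d (M : Rep.{0} k Gam) : phi0 M ≫ (Tobj M).d 0 1 = 0 := by
  apply ModuleCat.hom_ext
  apply LinearMap.ext
  intro m
  exact (Tker M 0 _).trans (ker_of_inv (M := M) m.2)

/-- lift of constants to cycles -/
noncomputable def lift0 (M : Rep.{0} k Gam) : ModuleCat.of k M.ρ.invariants ⟶ (Tobj M).cycles 0 :=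
  (Tobj M).liftCycles (phi0 M) 1 (by simp) (phi0_d M)

lemma lift0_i (M : Rep.{0} k Gam) : lift0 M ≫ (Tobj M).iCycles 0 = phi0 M :=
  HomologicalComplex.liftCycles_i ..

lemma lift0_iso (M : Rep.{0} k Gam) : IsIso (lift0 M) := by
  have hi : ∀ m, (Tobj M).iCycles 0 (lift0 M m) = phi0 M m := fun m => by
    rw [← lift0_i]; rfl
  have hmono : Function.Injective ((Tobj M).iCycles 0) := by
    rw [← ModuleCat.mono_iff_injective]; infer_instance
  rw [ConcreteCategory.isIso_iff_bijective]
  constructor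
  · intro a b hab
    have h := congrArg ((Tobj M).iCycles 0) hab
    rw [hi, hi] at h
    exact Subtype.ext (congrFun h (Sum.inl ()))
  · intro z
    have hz : ((Tobj M).d 0 1).hom ((Tobj M).iCycles 0 z) = 0 := by
      have := (Tobj M).iCycles_d 0 1
      exact LinearMap.congr_fun (congrArg ModuleCat.Hom.hom this) z
    obtain ⟨m, hm, hx⟩ := inv_of_ker (M := M) _ ((Tker M 0 _).symm.trans hz)
    refine ⟨⟨m, hm⟩, hmono ?_⟩
    rw [hi]
    exact hx.symm

lemma lift0_nat {M N : Rep.{0} k Gam} (f : M ⟶ N) :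
    (Rep.invariantsFunctor k Gam).map f ≫ lift0 N =
      lift0 M ≫ HomologicalComplex.cyclesMap ((TT k).map f) 0 := by
  refine abs_lift (c := (Tobj M).iCycles 0) (c' := (Tobj N).iCycles 0) inferInstance (lift0_i M)
    (lift0_i N) (HomologicalComplex.cyclesMap_i ((TT k).map f) 0) ?_
  apply ModuleCat.hom_ext
  apply LinearMap.ext
  intro m
  funext i; rcases i with i | i <;> rfl

/-- degree zero natural iso -/
noncomputable def e0Iso : HH (groupCohomology.cochainsFunctor k Gam) 0 ≅ HH (TT k) 0 :=
  NatIso.ofComponents (fun M => groupCohomology.H0Iso M ≪≫ (@asIso _ _ _ _ (lift0 M) (lift0_iso M)) ≪≫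
      CochainComplex.isoHomologyπ₀ (Tobj M))
    (fun {M N} f => abs_nat _ _ _ _ _ _ (groupCohomology.map_id_comp_H0Iso_hom f) (lift0_nat f)
      (CochainComplex.isoHomologyπ₀_inv_naturality ((TT k).map f)))

theorem gc_iso (M : Rep.{0} k Gam) (n : ℕ) :
    Nonempty (groupCohomology M n ≅ (Tobj M).homology n) := by
  refine delta_main (F := groupCohomology.cochainsFunctor k Gam) (T := TT k)
    (fun S hS => groupCohomology.map_cochainsFunctor_shortExact hS) TT_exact
    (fun M => ⟨coI M, coEmb M, coEmb_mono M, fun n => ⟨coI_zero M n, TT_zero _ ?_ n⟩⟩) e0Iso n M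
  exact acyc_CX (modRG_smul _) (coCo M)

end HZero
end Crx

namespace Crx
set_option linter.unusedSectionVars false
set_option linter.unusedSimpArgs false
set_option linter.unusedVariables false

section HIsSec
variable {R : Type} [Ring R] {M : Type} [AddCommGroup M] [Module R M]
variable {ι κ : ℕ → Type} [∀ n, Fintype (ι n)] [∀ n, Fintype (κ n)]

/-- coboundaries -/
def Bd (X : Mx R ι) : ∀ n, (ι n → M) → Prop
  | 0, x => x = 0
  | n + 1, x => ∃ y : ι n → M, act (X n) y = x

/-- The cohomology in degree `n` with values in `M` is `Q`. -/
def HIs (X : Mx R ι) (M : Type) [AddCommGroup M] [Module R M] (n : ℕ) (Q : Type)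
    [AddCommGroup Q] : Prop :=
  ∃ φ : (ι n → M) →+ Q, (∀ q, ∃ x, act (X n) x = 0 ∧ φ x = q) ∧
    ∀ x, act (X n) x = 0 → (φ x = 0 ↔ Bd X n x)

lemma HIs.congr {X : Mx R ι} {n : ℕ} {Q Q' : Type} [AddCommGroup Q] [AddCommGroup Q']
    (h : HIs X M n Q) (e : Q ≃+ Q') : HIs X M n Q' := by
  obtain ⟨φ, h1, h2⟩ := h
  refine ⟨(e : Q →+ Q').comp φ, fun q => ?_, fun x hx => ?_⟩
  · obtain ⟨x, hx, hq⟩ := h1 (e.symm q)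
    exact ⟨x, hx, by simp [hq]⟩
  · rw [← h2 x hx]
    simp

lemma HIs.cone_zero {X : Mx R ι} {Y : Mx R κ} {f : ∀ n, Matrix (κ n) (ι n) R}
    (hf : ∀ n (x : ι n → M), act (f n) x = 0) {Q : Type} [AddCommGroup Q] (h : HIs X M 0 Q) :
    HIs (cone X Y f) M 0 Q := by
  obtain ⟨φ, h1, h2⟩ := h
  have key : ∀ x : ι 0 → M, act (cone X Y f 0) x = 0 ↔ act (X 0) x = 0 := by
    intro x
    rw [cone_act_zero, hf, ← pr_zero]
    exact ⟨fun h => (pr_inj h).1, fun h => by rw [h]⟩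
  refine ⟨φ, fun q => ?_, fun x hx => ?_⟩
  · obtain ⟨x, hx, hq⟩ := h1 q
    exact ⟨x, (key x).2 hx, hq⟩
  · exact h2 x ((key x).1 hx)

lemma Bd_neg {X : Mx R ι} {n : ℕ} {x : ι n → M} : Bd X n (-x) ↔ Bd X n x := by
  cases n with
  | zero => exact neg_eq_zero
  | succ n =>
    constructor
    · rintro ⟨y, hy⟩
      exact ⟨-y, by rw [act_neg, hy, neg_neg]⟩
    · rintro ⟨y, hy⟩
      exact ⟨-y, by rw [act_neg, hy]⟩

lemma HIs.cone_succ {X : Mx R ι} {Y : Mx R κ} {f : ∀ n, Matrix (κ n) (ι n) R}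
    (hf : ∀ n (x : ι n → M), act (f n) x = 0) {Q Q' : Type} [AddCommGroup Q] [AddCommGroup Q']
    {n : ℕ} (h : HIs X M (n + 1) Q) (h' : HIs Y M n Q') : HIs (cone X Y f) M (n + 1) (Q × Q') := by
  obtain ⟨φ, h1, h2⟩ := h
  obtain ⟨ψ, h1', h2'⟩ := h'
  have key : ∀ (x : ι (n + 1) → M) (y : κ n → M), act (cone X Y f (n + 1)) (pr x y) = 0 ↔
      act (X (n + 1)) x = 0 ∧ act (Y n) y = 0 := by
    intro x y
    rw [cone_act_succ, hf, ← pr_zero, zero_sub]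
    refine ⟨fun h => ?_, fun h => by rw [h.1, h.2, neg_zero]⟩
    exact ⟨(pr_inj h).1, neg_eq_zero.1 (pr_inj h).2⟩
  let a : (coneι ι κ (n + 1) → M) →+ (ι (n + 1) → M) :=
    { toFun := fun z i => z (Sum.inl i), map_zero' := rfl, map_add' := fun _ _ => rfl }
  let b : (coneι ι κ (n + 1) → M) →+ (κ n → M) :=
    { toFun := fun z i => z (Sum.inr i), map_zero' := rfl, map_add' := fun _ _ => rfl }
  refine ⟨(φ.comp a).prod (ψ.comp b), fun q => ?_, fun z hz => ?_⟩
  · obtain ⟨x, hx, hq⟩ := h1 q.1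
    obtain ⟨y, hy, hq'⟩ := h1' q.2
    exact ⟨pr x y, (key _ _).2 ⟨hx, hy⟩, Prod.ext hq hq'⟩
  · obtain ⟨x, y, rfl⟩ := pr_surj z
    obtain ⟨hx, hy⟩ := (key _ _).1 hz
    have e : ((φ.comp a).prod (ψ.comp b)) (pr x y) = (φ x, ψ y) := rfl
    rw [e, Prod.mk_eq_zero, h2 x hx, h2' y hy]
    cases n with
    | zero =>
      constructor
      · rintro ⟨⟨w, hw⟩, h0⟩
        refine ⟨w, ?_⟩
        have h0' : y = 0 := h0
        rw [h0', ← hw]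
        refine (cone_act_zero _ _ _ _).trans ?_
        rw [hf]
      · rintro ⟨w, hw⟩
        have hw' := (cone_act_zero X Y f w).symm.trans hw
        have hw' := hw'.symm.trans (congrArg (pr (act (X 0) w)) (hf 0 w))
        exact ⟨⟨w, (pr_inj hw').1.symm⟩, (pr_inj hw').2⟩
    | succ n =>
      constructor
      · rintro ⟨⟨w, hw⟩, ⟨v, hv⟩⟩
        refine ⟨pr w (-v), ?_⟩
        refine (cone_act_succ _ _ _ _ _ _).trans ?_
        rw [hf, act_neg, zero_sub, neg_neg, hw, hv]
      · rintro ⟨w, hw⟩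
        obtain ⟨w, v, rfl⟩ := pr_surj w
        have hw' := (cone_act_succ X Y f n w v).symm.trans hw
        rw [hf] at hw'
        refine ⟨⟨w, (pr_inj hw').1⟩, ⟨-v, ?_⟩⟩
        rw [act_neg, ← (pr_inj hw').2, zero_sub]

/-! ### Vectors -/

/-- degree one -/
def v1 (x y x' y' m : M) : Dι 1 → M := pr (ι := Eι) (κ := coneι twoι twoι) (n := 0) (e4 0 x y x' y') (u m)
/-- degree two -/
def v2 (x y x' y' z s : M) : Dι 2 → M :=
  pr (ι := Eι) (κ := coneι twoι twoι) (n := 1) (e4 1 x y x' y') (w1 z s)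
/-- degree three -/
def v3 (x y x' y' t : M) : Dι 3 → M :=
  pr (ι := Eι) (κ := coneι twoι twoι) (n := 2) (e4 2 x y x' y') (w2 t)
/-- higher degrees -/
def v4 (n : ℕ) (x y x' y' : M) : Dι (n + 4) → M :=
  pr (ι := Eι) (κ := coneι twoι twoι) (n := n + 3) (e4 (n + 3) x y x' y') 0

lemma v1_surj (x : Dι 1 → M) : ∃ a b c d m, x = v1 a b c d m := by
  obtain ⟨a, b, rfl⟩ := pr_surj (ι := Eι) (κ := coneι twoι twoι) (n := 0) x
  obtain ⟨p, q, r, s, rfl⟩ := e4_surj _ a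
  exact ⟨p, q, r, s, b (), rfl⟩
lemma v2_surj (x : Dι 2 → M) : ∃ a b c d z s, x = v2 a b c d z s := by
  obtain ⟨a, b, rfl⟩ := pr_surj (ι := Eι) (κ := coneι twoι twoι) (n := 1) x
  obtain ⟨p, q, r, s, rfl⟩ := e4_surj _ a
  obtain ⟨z, t, rfl⟩ := w1_surj b
  exact ⟨p, q, r, s, z, t, rfl⟩
lemma v3_surj (x : Dι 3 → M) : ∃ a b c d t, x = v3 a b c d t := by
  obtain ⟨a, b, rfl⟩ := pr_surj (ι := Eι) (κ := coneι twoι twoι) (n := 2) x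
  obtain ⟨p, q, r, s, rfl⟩ := e4_surj _ a
  obtain ⟨t, rfl⟩ := w2_surj b
  exact ⟨p, q, r, s, t, rfl⟩
lemma v4_surj {n : ℕ} (x : Dι (n + 4) → M) : ∃ a b c d, x = v4 n a b c d := by
  obtain ⟨a, b, rfl⟩ := pr_surj (ι := Eι) (κ := coneι twoι twoι) (n := n + 3) x
  obtain ⟨p, q, r, s, rfl⟩ := e4_surj _ a
  exact ⟨p, q, r, s, congrArg (pr _) (w3_eq n _ _)⟩

lemma v1_zero {a b c d m : M} : v1 a b c d m = 0 ↔ a = 0 ∧ b = 0 ∧ c = 0 ∧ d = 0 ∧ m = 0 := by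
  constructor
  · intro h
    exact ⟨congrFun h (.inl (.inl (.inl ()))), congrFun h (.inl (.inl (.inr ()))),
      congrFun h (.inl (.inr (.inl ()))), congrFun h (.inl (.inr (.inr ()))), congrFun h (.inr ())⟩
  · rintro ⟨rfl, rfl, rfl, rfl, rfl⟩
    funext i; rcases i with ((i | i) | (i | i)) | i <;> rfl
lemma v2_zero {a b c d z s : M} : v2 a b c d z s = 0 ↔
    a = 0 ∧ b = 0 ∧ c = 0 ∧ d = 0 ∧ z = 0 ∧ s = 0 := by
  constructor
  · intro h
    exact ⟨congrFun h (.inl (.inl (.inl ()))), congrFun h (.inl (.inl (.inr ()))),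
      congrFun h (.inl (.inr (.inl ()))), congrFun h (.inl (.inr (.inr ()))),
      congrFun h (.inr (.inl ())), congrFun h (.inr (.inr ()))⟩
  · rintro ⟨rfl, rfl, rfl, rfl, rfl, rfl⟩
    funext i; rcases i with ((i | i) | (i | i)) | (i | i) <;> rfl
lemma v3_zero {a b c d t : M} : v3 a b c d t = 0 ↔ a = 0 ∧ b = 0 ∧ c = 0 ∧ d = 0 ∧ t = 0 := by
  constructor
  · intro h
    exact ⟨congrFun h (.inl (.inl (.inl ()))), congrFun h (.inl (.inl (.inr ()))),
      congrFun h (.inl (.inr (.inl ()))), congrFun h (.inl (.inr (.inr ()))),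
      congrFun h (.inr (.inr ()))⟩
  · rintro ⟨rfl, rfl, rfl, rfl, rfl⟩
    funext i; rcases i with ((i | i) | (i | i)) | (i | i)
    · rfl
    · rfl
    · rfl
    · rfl
    · exact i.elim
    · rfl
lemma v4_zero {n : ℕ} {a b c d : M} : v4 n a b c d = 0 ↔ a = 0 ∧ b = 0 ∧ c = 0 ∧ d = 0 := by
  constructor
  · intro h
    exact ⟨congrFun h (.inl (.inl (.inl ()))), congrFun h (.inl (.inl (.inr ()))),
      congrFun h (.inl (.inr (.inl ()))), congrFun h (.inl (.inr (.inr ())))⟩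
  · rintro ⟨rfl, rfl, rfl, rfl⟩
    funext i; rcases i with ((i | i) | (i | i)) | i <;> rfl

variable (D : Dat R)

lemma act_d0 (a b : M) : act (cD D 0) (e0 a b : Dι 0 → M) =
    v1 ((D.σ - 1) • a) ((D.p - 1) • a) ((D.r - 1) • b) ((D.τ - 1) • b) (b - a) := by
  refine (cone_act_zero _ _ _ _).trans ?_
  rw [act_cE0, act_fE0]; rfl

lemma act_d1 (x y x' y' m : M) : act (cD D 1) (v1 x y x' y' m) =
    v2 (D.nm • x) ((D.p - 1) • x - (D.σ - 1) • y) ((1 + D.r) • x')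
      ((D.τ - 1) • x' - (D.r - 1) • y')
      (-y + (D.τ * D.τ) • x' + (D.τ + 1) • y' - (D.p - 1) • m)
      (-((D.σi + D.τ) • x) - (D.σi * D.r) • x' + (D.σi * D.r - 1) • y' -
        (1 - D.τ + D.s - D.σi) • m) := by
  refine (cone_act_succ _ _ _ _ _ _).trans ?_
  refine congrArg₂ (pr (ι := Eι) (κ := coneι twoι twoι) (n := 1))
    (act_cE_odd D 0 (by decide) x y x' y') ?_
  refine (congrArg₂ (· - ·) (act_fE1 D x y x' y') (act_cW0 D m)).trans ?_
  funext i
  rcases i with i | i <;> rfl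

lemma act_d2 (x y x' y' z s : M) : act (cD D 2) (v2 x y x' y' z s) =
    v3 ((D.σ - 1) • x) ((D.p - 1) • x - D.nm • y) ((D.r - 1) • x')
      ((D.τ - 1) • x' - (1 + D.r) • y')
      (D.σi • y + (D.τ - D.σi) • x' + (D.τ - D.σi * D.τ - D.σi) • y' -
        ((1 - D.σi) • z - (D.s - 1) • s)) := by
  refine (cone_act_succ _ _ _ _ _ _).trans ?_
  refine congrArg₂ (pr (ι := Eι) (κ := coneι twoι twoι) (n := 2))
    (act_cE_even D 1 (by decide) x y x' y') ?_
  refine (congrArg₂ (· - ·) (act_fE2 D x y x' y') (act_cW1 D z s)).trans ?_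
  funext i
  rcases i with i | i
  · exact i.elim
  · rfl

lemma act_d3 (x y x' y' t : M) : act (cD D 3) (v3 x y x' y' t) =
    v4 0 (D.nm • x) ((D.p - 1) • x - (D.σ - 1) • y) ((1 + D.r) • x')
      ((D.τ - 1) • x' - (D.r - 1) • y') := by
  refine (cone_act_succ _ _ _ _ _ _).trans ?_
  exact congrArg₂ (pr (ι := Eι) (κ := coneι twoι twoι) (n := 3))
    (act_cE_odd D 2 (by decide) x y x' y') (w3_eq 0 _ _)

lemma act_d_odd (n : ℕ) (hn : ¬ Even n) (x y x' y' : M) : act (cD D (n + 4)) (v4 n x y x' y') =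
    v4 (n + 1) (D.nm • x) ((D.p - 1) • x - (D.σ - 1) • y) ((1 + D.r) • x')
      ((D.τ - 1) • x' - (D.r - 1) • y') := by
  refine (cone_act_succ _ _ _ _ _ _).trans ?_
  exact congrArg₂ (pr (ι := Eι) (κ := coneι twoι twoι) (n := n + 4))
    (act_cE_odd D (n + 3) (by simpa [Nat.even_add_one, parity_simps] using hn) x y x' y') (w3_eq (n + 1) _ _)

lemma act_d_even (n : ℕ) (hn : Even n) (x y x' y' : M) : act (cD D (n + 4)) (v4 n x y x' y') =
    v4 (n + 1) ((D.σ - 1) • x) ((D.p - 1) • x - D.nm • y) ((D.r - 1) • x')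
      ((D.τ - 1) • x' - (1 + D.r) • y') := by
  refine (cone_act_succ _ _ _ _ _ _).trans ?_
  exact congrArg₂ (pr (ι := Eι) (κ := coneι twoι twoι) (n := n + 4))
    (act_cE_even D (n + 3) (by simpa [Nat.even_add_one, parity_simps] using hn) x y x' y') (w3_eq (n + 1) _ _)

end HIsSec
end Crx

namespace Crx
set_option linter.unusedSectionVars false
set_option linter.unusedSimpArgs false
set_option linter.unusedVariables false

section IntSec
variable {R : Type} [Ring R] [Module R ℤ]

/-- the action on the integers -/
structure Sg (D : Dat R) (ε : ℤ) : Prop where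
  σ : ∀ x : ℤ, D.σ • x = ε * x
  σi : ∀ x : ℤ, D.σi • x = ε * x
  τ : ∀ x : ℤ, D.τ • x = ε * x
  s : ∀ x : ℤ, D.s • x = x
  p : ∀ x : ℤ, D.p • x = x
  r : ∀ x : ℤ, D.r • x = x

variable {D : Dat R}

lemma iP0 (h : Sg D 1) (a b : ℤ) : act (cD D 0) (e0 a b : Dι 0 → ℤ) = v1 0 0 0 0 (b - a) := by
  rw [act_d0]
  congr 1 <;> simp only [Dat.nm, add_smul, sub_smul, mul_smul, one_smul, h.σ, h.σi, h.τ, h.s, h.p, h.r] <;> ring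
lemma iP1 (h : Sg D 1) (x y x' y' m : ℤ) : act (cD D 1) (v1 x y x' y' m) =
    v2 (4 * x) 0 (2 * x') 0 (-y + x' + 2 * y') (-2 * x - x') := by
  rw [act_d1]
  congr 1 <;> simp only [Dat.nm, add_smul, sub_smul, mul_smul, one_smul, h.σ, h.σi, h.τ, h.s, h.p, h.r] <;> ring
lemma iP2 (h : Sg D 1) (x y x' y' z s : ℤ) : act (cD D 2) (v2 x y x' y' z s) =
    v3 0 (-4 * y) 0 (-2 * y') (y - y') := by
  rw [act_d2]
  congr 1 <;> simp only [Dat.nm, add_smul, sub_smul, mul_smul, one_smul, h.σ, h.σi, h.τ, h.s, h.p, h.r] <;> ring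
lemma iP3 (h : Sg D 1) (x y x' y' t : ℤ) : act (cD D 3) (v3 x y x' y' t) =
    v4 0 (4 * x) 0 (2 * x') 0 := by
  rw [act_d3]
  congr 1 <;> simp only [Dat.nm, add_smul, sub_smul, mul_smul, one_smul, h.σ, h.σi, h.τ, h.s, h.p, h.r] <;> ring
lemma iP_odd (h : Sg D 1) (n : ℕ) (hn : ¬ Even n) (x y x' y' : ℤ) :
    act (cD D (n + 4)) (v4 n x y x' y') = v4 (n + 1) (4 * x) 0 (2 * x') 0 := by
  rw [act_d_odd D n hn]
  congr 1 <;> simp only [Dat.nm, add_smul, sub_smul, mul_smul, one_smul, h.σ, h.σi, h.τ, h.s, h.p, h.r] <;> ring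
lemma iP_even (h : Sg D 1) (n : ℕ) (hn : Even n) (x y x' y' : ℤ) :
    act (cD D (n + 4)) (v4 n x y x' y') = v4 (n + 1) 0 (-4 * y) 0 (-2 * y') := by
  rw [act_d_even D n hn]
  congr 1 <;> simp only [Dat.nm, add_smul, sub_smul, mul_smul, one_smul, h.σ, h.σi, h.τ, h.s, h.p, h.r] <;> ring

lemma iN0 (h : Sg D (-1)) (a b : ℤ) : act (cD D 0) (e0 a b : Dι 0 → ℤ) =
    v1 (-2 * a) 0 0 (-2 * b) (b - a) := by
  rw [act_d0]
  congr 1 <;> simp only [Dat.nm, add_smul, sub_smul, mul_smul, one_smul, h.σ, h.σi, h.τ, h.s, h.p, h.r] <;> ring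
lemma iN1 (h : Sg D (-1)) (x y x' y' m : ℤ) : act (cD D 1) (v1 x y x' y' m) =
    v2 0 (2 * y) (2 * x') (-2 * x') (-y + x') (2 * x + x' - 2 * y' - 4 * m) := by
  rw [act_d1]
  congr 1 <;> simp only [Dat.nm, add_smul, sub_smul, mul_smul, one_smul, h.σ, h.σi, h.τ, h.s, h.p, h.r] <;> ring
lemma iN2 (h : Sg D (-1)) (x y x' y' z s : ℤ) : act (cD D 2) (v2 x y x' y' z s) =
    v3 (-2 * x) 0 0 (-2 * x' - 2 * y') (-y - y' - 2 * z) := by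
  rw [act_d2]
  congr 1 <;> simp only [Dat.nm, add_smul, sub_smul, mul_smul, one_smul, h.σ, h.σi, h.τ, h.s, h.p, h.r] <;> ring
lemma iN3 (h : Sg D (-1)) (x y x' y' t : ℤ) : act (cD D 3) (v3 x y x' y' t) =
    v4 0 0 (2 * y) (2 * x') (-2 * x') := by
  rw [act_d3]
  congr 1 <;> simp only [Dat.nm, add_smul, sub_smul, mul_smul, one_smul, h.σ, h.σi, h.τ, h.s, h.p, h.r] <;> ring
lemma iN_odd (h : Sg D (-1)) (n : ℕ) (hn : ¬ Even n) (x y x' y' : ℤ) :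
    act (cD D (n + 4)) (v4 n x y x' y') = v4 (n + 1) 0 (2 * y) (2 * x') (-2 * x') := by
  rw [act_d_odd D n hn]
  congr 1 <;> simp only [Dat.nm, add_smul, sub_smul, mul_smul, one_smul, h.σ, h.σi, h.τ, h.s, h.p, h.r] <;> ring
lemma iN_even (h : Sg D (-1)) (n : ℕ) (hn : Even n) (x y x' y' : ℤ) :
    act (cD D (n + 4)) (v4 n x y x' y') = v4 (n + 1) (-2 * x) 0 0 (-2 * x' - 2 * y') := by
  rw [act_d_even D n hn]
  congr 1 <;> simp only [Dat.nm, add_smul, sub_smul, mul_smul, one_smul, h.σ, h.σi, h.τ, h.s, h.p, h.r] <;> ring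

/-- coordinate -/
def qx (n : ℕ) : (Dι (n + 1) → ℤ) →+ ℤ :=
  Pi.evalAddMonoidHom (fun _ => ℤ) (Sum.inl (Sum.inl (Sum.inl ())) : Dι (n + 1))
/-- coordinate -/
def qy (n : ℕ) : (Dι (n + 1) → ℤ) →+ ℤ :=
  Pi.evalAddMonoidHom (fun _ => ℤ) (Sum.inl (Sum.inl (Sum.inr ())) : Dι (n + 1))
/-- coordinate -/
def qx' (n : ℕ) : (Dι (n + 1) → ℤ) →+ ℤ :=
  Pi.evalAddMonoidHom (fun _ => ℤ) (Sum.inl (Sum.inr (Sum.inl ())) : Dι (n + 1))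
/-- coordinate -/
def qy' (n : ℕ) : (Dι (n + 1) → ℤ) →+ ℤ :=
  Pi.evalAddMonoidHom (fun _ => ℤ) (Sum.inl (Sum.inr (Sum.inr ())) : Dι (n + 1))
/-- coordinate -/
def qs : (Dι 2 → ℤ) →+ ℤ :=
  Pi.evalAddMonoidHom (fun _ => ℤ) (Sum.inr (Sum.inr ()) : Dι 2)
/-- coordinate -/
def qt : (Dι 3 → ℤ) →+ ℤ :=
  Pi.evalAddMonoidHom (fun _ => ℤ) (Sum.inr (Sum.inr ()) : Dι 3)

/-- reduction -/
abbrev rd (n : ℕ) : ℤ →+ ZMod n := Int.castAddHom (ZMod n)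

lemma rd_surj {n : ℕ} (q : ZMod n) : ∃ a : ℤ, rd n a = q := ZMod.intCast_surjective q
lemma rd_zero {n : ℕ} (a : ℤ) : rd n a = 0 ↔ (n : ℤ) ∣ a := ZMod.intCast_zmod_eq_zero_iff_dvd a n

lemma HP0 (h : Sg D 1) : HIs (cD D) ℤ 0 ℤ := by
  refine ⟨Pi.evalAddMonoidHom (fun _ => ℤ) (Sum.inl () : Dι 0), fun q => ⟨(e0 q q : Dι 0 → ℤ), ?_, rfl⟩, ?_⟩
  · rw [iP0 h, v1_zero]; simp
  · intro x hx
    obtain ⟨a, b, rfl⟩ : ∃ a b, x = (e0 a b : Dι 0 → ℤ) := e0_surj x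
    rw [iP0 h, v1_zero] at hx
    obtain rfl : b = a := by lia
    show b = 0 ↔ _
    constructor
    · rintro rfl
      show (e0 0 0 : Dι 0 → ℤ) = 0
      funext i; rcases i with i | i <;> rfl
    · intro h
      have h : (e0 b b : Dι 0 → ℤ) = 0 := h
      exact congrFun h (Sum.inl ())

lemma HP1 (h : Sg D 1) : HIs (cD D) ℤ 1 ℤ := by
  refine ⟨qy' 0, fun q => ⟨v1 0 (2 * q) 0 q 0, ?_, rfl⟩, ?_⟩
  · rw [iP1 h, v2_zero]; lia
  · intro x hx
    obtain ⟨x, y, x', y', m, rfl⟩ := v1_surj x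
    rw [iP1 h, v2_zero] at hx
    show y' = 0 ↔ _
    constructor
    · intro hy
      refine ⟨(e0 0 m : Dι 0 → ℤ), ?_⟩
      rw [iP0 h]
      congr 1 <;> lia
    · rintro ⟨w, hw⟩
      obtain ⟨a, b, rfl⟩ : ∃ a b, w = (e0 a b : Dι 0 → ℤ) := e0_surj w
      rw [iP0 h] at hw
      exact (congrArg (qy' 0) hw).symm

lemma HP2 (h : Sg D 1) : HIs (cD D) ℤ 2 (ℤ × ZMod 4) := by
  refine ⟨(qx 1 + qx' 1 + qs + qs).prod ((rd 4).comp (qx 1)), fun q => ?_, ?_⟩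
  · obtain ⟨a, ha⟩ := rd_surj q.2
    refine ⟨v2 a 0 (q.1 - a) 0 0 0, ?_, Prod.ext ?_ ha⟩
    · rw [iP2 h, v3_zero]; lia
    · show a + (q.1 - a) + 0 + 0 = q.1
      lia
  · intro x hx
    obtain ⟨x, y, x', y', z, s, rfl⟩ := v2_surj x
    rw [iP2 h, v3_zero] at hx
    refine Prod.mk_eq_zero.trans ?_
    show x + x' + s + s = 0 ∧ rd 4 x = 0 ↔ _
    rw [rd_zero]
    constructor
    · rintro ⟨h1, k, hk⟩
      refine ⟨v1 k (-z - s - 2 * k) (-s - 2 * k) 0 0, ?_⟩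
      rw [iP1 h]
      congr 1 <;> push_cast at * <;> lia
    · rintro ⟨w, hw⟩
      obtain ⟨a, b, a', b', m, rfl⟩ := v1_surj w
      rw [iP1 h] at hw
      have h1 := congrArg (qx 1) hw
      have h2 := congrArg (qx' 1) hw
      have h3 := congrArg qs hw
      change 4 * a = x at h1
      change 2 * a' = x' at h2
      change -2 * a - a' = s at h3
      exact ⟨by lia, a, by push_cast; lia⟩

lemma HP3 (h : Sg D 1) : HIs (cD D) ℤ 3 (ℤ × ZMod 2) := by
  refine ⟨(qy 2 + qt + qt + qt + qt - qy' 2 - qy' 2).prod ((rd 2).comp (qy' 2)), fun q => ?_, ?_⟩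
  · obtain ⟨a, ha⟩ := rd_surj q.2
    refine ⟨v3 0 (q.1 + a + a) 0 a 0, ?_, Prod.ext ?_ ha⟩
    · rw [iP3 h, v4_zero]; lia
    · show (q.1 + a + a) + 0 + 0 + 0 + 0 - a - a = q.1
      lia
  · intro x hx
    obtain ⟨x, y, x', y', t, rfl⟩ := v3_surj x
    rw [iP3 h, v4_zero] at hx
    refine Prod.mk_eq_zero.trans ?_
    show y + t + t + t + t - y' - y' = 0 ∧ rd 2 y' = 0 ↔ _
    rw [rd_zero]
    constructor
    · rintro ⟨h1, k, hk⟩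
      refine ⟨v2 0 (t - k) 0 (-k) 0 0, ?_⟩
      rw [iP2 h]
      congr 1 <;> push_cast at * <;> lia
    · rintro ⟨w, hw⟩
      obtain ⟨a, b, a', b', z, s, rfl⟩ := v2_surj w
      rw [iP2 h] at hw
      have h1 := congrArg (qy 2) hw
      have h2 := congrArg (qy' 2) hw
      have h3 := congrArg qt hw
      change -4 * b = y at h1
      change -2 * b' = y' at h2
      change b - b' = t at h3
      exact ⟨by lia, -b', by push_cast; lia⟩

lemma bP_odd (h : Sg D 1) (n : ℕ) (hn : ¬ Even n) (v : Dι (n + 4) → ℤ) : Bd (cD D) (n + 4) v ↔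
    ∃ y y', v = v4 n 0 (-4 * y) 0 (-2 * y') := by
  obtain _ | n := n
  · exact absurd (by decide) hn
  constructor
  · rintro ⟨w, rfl⟩
    obtain ⟨a, b, a', b', rfl⟩ := v4_surj w
    exact ⟨b, b', iP_even h n (by simpa [Nat.even_add_one] using hn) _ _ _ _⟩
  · rintro ⟨y, y', rfl⟩
    exact ⟨v4 n 0 y 0 y', iP_even h n (by simpa [Nat.even_add_one] using hn) _ _ _ _⟩

lemma bP_even (h : Sg D 1) (n : ℕ) (hn : Even n) (v : Dι (n + 4) → ℤ) : Bd (cD D) (n + 4) v ↔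
    ∃ x x', v = v4 n (4 * x) 0 (2 * x') 0 := by
  obtain _ | n := n
  · constructor
    · rintro ⟨w, rfl⟩
      obtain ⟨a, b, a', b', t, rfl⟩ := v3_surj w
      exact ⟨a, a', iP3 h _ _ _ _ _⟩
    · rintro ⟨y, y', rfl⟩
      exact ⟨v3 y 0 y' 0 0, iP3 h _ _ _ _ _⟩
  constructor
  · rintro ⟨w, rfl⟩
    obtain ⟨a, b, a', b', rfl⟩ := v4_surj w
    exact ⟨a, a', iP_odd h n (by simpa [Nat.even_add_one] using hn) _ _ _ _⟩
  · rintro ⟨y, y', rfl⟩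
    exact ⟨v4 n y 0 y' 0, iP_odd h n (by simpa [Nat.even_add_one] using hn) _ _ _ _⟩

lemma bN_odd (h : Sg D (-1)) (n : ℕ) (hn : ¬ Even n) (v : Dι (n + 4) → ℤ) : Bd (cD D) (n + 4) v ↔
    ∃ x y', v = v4 n (-2 * x) 0 0 (-2 * y') := by
  obtain _ | n := n
  · exact absurd (by decide) hn
  have key := iN_even h n (by simpa [Nat.even_add_one] using hn)
  constructor
  · rintro ⟨w, rfl⟩
    obtain ⟨a, b, a', b', rfl⟩ := v4_surj w
    refine ⟨a, a' + b', (key _ _ _ _).trans ?_⟩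
    congr 1; lia
  · rintro ⟨y, y', rfl⟩
    refine ⟨v4 n y 0 0 y', (key _ _ _ _).trans ?_⟩
    congr 1; lia

lemma bN_even (h : Sg D (-1)) (n : ℕ) (hn : Even n) (v : Dι (n + 4) → ℤ) : Bd (cD D) (n + 4) v ↔
    ∃ y x', v = v4 n 0 (2 * y) (2 * x') (-2 * x') := by
  obtain _ | n := n
  · constructor
    · rintro ⟨w, rfl⟩
      obtain ⟨a, b, a', b', t, rfl⟩ := v3_surj w
      exact ⟨b, a', iN3 h _ _ _ _ _⟩
    · rintro ⟨y, y', rfl⟩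
      exact ⟨v3 0 y y' 0 0, iN3 h _ _ _ _ _⟩
  constructor
  · rintro ⟨w, rfl⟩
    obtain ⟨a, b, a', b', rfl⟩ := v4_surj w
    exact ⟨b, a', iN_odd h n (by simpa [Nat.even_add_one] using hn) _ _ _ _⟩
  · rintro ⟨y, y', rfl⟩
    exact ⟨v4 n 0 y y' 0, iN_odd h n (by simpa [Nat.even_add_one] using hn) _ _ _ _⟩

lemma HP4 (h : Sg D 1) (n : ℕ) : HIs (cD D) ℤ (n + 4) (ZMod 4 × ZMod 2) := by
  by_cases hn : Even n
  · refine ⟨((rd 4).comp (qx (n + 3))).prod ((rd 2).comp (qx' (n + 3))), fun q => ?_, ?_⟩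
    · obtain ⟨a, ha⟩ := rd_surj q.1
      obtain ⟨b, hb⟩ := rd_surj q.2
      refine ⟨v4 n a 0 b 0, ?_, Prod.ext ha hb⟩
      rw [iP_even h n hn, v4_zero]; lia
    · intro x hx
      obtain ⟨x, y, x', y', rfl⟩ := v4_surj x
      rw [iP_even h n hn, v4_zero] at hx
      refine Prod.mk_eq_zero.trans ?_
      show rd 4 x = 0 ∧ rd 2 x' = 0 ↔ _
      rw [rd_zero, rd_zero, bP_even h n hn]
      constructor
      · rintro ⟨⟨k, hk⟩, ⟨l, hl⟩⟩
        refine ⟨k, l, ?_⟩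
        congr 1 <;> push_cast at * <;> lia
      · rintro ⟨k, l, hv⟩
        exact ⟨⟨k, congrArg (qx (n + 3)) hv⟩, ⟨l, congrArg (qx' (n + 3)) hv⟩⟩
  · refine ⟨((rd 4).comp (qy (n + 3))).prod ((rd 2).comp (qy' (n + 3))), fun q => ?_, ?_⟩
    · obtain ⟨a, ha⟩ := rd_surj q.1
      obtain ⟨b, hb⟩ := rd_surj q.2
      refine ⟨v4 n 0 a 0 b, ?_, Prod.ext ha hb⟩
      rw [iP_odd h n hn, v4_zero]; lia
    · intro x hx
      obtain ⟨x, y, x', y', rfl⟩ := v4_surj x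
      rw [iP_odd h n hn, v4_zero] at hx
      refine Prod.mk_eq_zero.trans ?_
      show rd 4 y = 0 ∧ rd 2 y' = 0 ↔ _
      rw [rd_zero, rd_zero, bP_odd h n hn]
      constructor
      · rintro ⟨⟨k, hk⟩, ⟨l, hl⟩⟩
        refine ⟨-k, -l, ?_⟩
        congr 1 <;> push_cast at * <;> lia
      · rintro ⟨k, l, hv⟩
        have h1 := congrArg (qy (n + 3)) hv
        have h2 := congrArg (qy' (n + 3)) hv
        change y = -4 * k at h1
        change y' = -2 * l at h2
        exact ⟨⟨-k, by push_cast; lia⟩, ⟨-l, by push_cast; lia⟩⟩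

lemma HN4 (h : Sg D (-1)) (n : ℕ) : HIs (cD D) ℤ (n + 4) (ZMod 2 × ZMod 2) := by
  by_cases hn : Even n
  · refine ⟨((rd 2).comp (qy (n + 3))).prod ((rd 2).comp (qx' (n + 3))), fun q => ?_, ?_⟩
    · obtain ⟨a, ha⟩ := rd_surj q.1
      obtain ⟨b, hb⟩ := rd_surj q.2
      refine ⟨v4 n 0 a b (-b), ?_, Prod.ext ha hb⟩
      rw [iN_even h n hn, v4_zero]; lia
    · intro x hx
      obtain ⟨x, y, x', y', rfl⟩ := v4_surj x
      rw [iN_even h n hn, v4_zero] at hx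
      refine Prod.mk_eq_zero.trans ?_
      show rd 2 y = 0 ∧ rd 2 x' = 0 ↔ _
      rw [rd_zero, rd_zero, bN_even h n hn]
      constructor
      · rintro ⟨⟨k, hk⟩, ⟨l, hl⟩⟩
        refine ⟨k, l, ?_⟩
        congr 1 <;> push_cast at * <;> lia
      · rintro ⟨k, l, hv⟩
        exact ⟨⟨k, congrArg (qy (n + 3)) hv⟩, ⟨l, congrArg (qx' (n + 3)) hv⟩⟩
  · refine ⟨((rd 2).comp (qx (n + 3))).prod ((rd 2).comp (qy' (n + 3))), fun q => ?_, ?_⟩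
    · obtain ⟨a, ha⟩ := rd_surj q.1
      obtain ⟨b, hb⟩ := rd_surj q.2
      refine ⟨v4 n a 0 0 b, ?_, Prod.ext ha hb⟩
      rw [iN_odd h n hn, v4_zero]; lia
    · intro x hx
      obtain ⟨x, y, x', y', rfl⟩ := v4_surj x
      rw [iN_odd h n hn, v4_zero] at hx
      refine Prod.mk_eq_zero.trans ?_
      show rd 2 x = 0 ∧ rd 2 y' = 0 ↔ _
      rw [rd_zero, rd_zero, bN_odd h n hn]
      constructor
      · rintro ⟨⟨k, hk⟩, ⟨l, hl⟩⟩
        refine ⟨-k, -l, ?_⟩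
        congr 1 <;> push_cast at * <;> lia
      · rintro ⟨k, l, hv⟩
        have h1 := congrArg (qx (n + 3)) hv
        have h2 := congrArg (qy' (n + 3)) hv
        change x = -2 * k at h1
        change y' = -2 * l at h2
        exact ⟨⟨-k, by push_cast; lia⟩, ⟨-l, by push_cast; lia⟩⟩

lemma HN0 (h : Sg D (-1)) : HIs (cD D) ℤ 0 PUnit := by
  refine ⟨0, fun q => ⟨(e0 0 0 : Dι 0 → ℤ), ?_, rfl⟩, ?_⟩
  · rw [iN0 h, v1_zero]; simp
  · intro x hx
    obtain ⟨a, b, rfl⟩ : ∃ a b, x = (e0 a b : Dι 0 → ℤ) := e0_surj x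
    rw [iN0 h, v1_zero] at hx
    obtain rfl : b = 0 := by lia
    obtain rfl : a = 0 := by lia
    refine ⟨fun _ => ?_, fun _ => rfl⟩
    show (e0 0 0 : Dι 0 → ℤ) = 0
    funext i; rcases i with i | i <;> rfl

lemma HN1 (h : Sg D (-1)) : HIs (cD D) ℤ 1 (ZMod 2) := by
  refine ⟨(rd 2).comp (qy' 0), fun q => ?_, ?_⟩
  · obtain ⟨a, ha⟩ := rd_surj q
    refine ⟨v1 a 0 0 a 0, ?_, ha⟩
    rw [iN1 h, v2_zero]; lia
  · intro x hx
    obtain ⟨x, y, x', y', m, rfl⟩ := v1_surj x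
    rw [iN1 h, v2_zero] at hx
    show rd 2 y' = 0 ↔ _
    rw [rd_zero]
    constructor
    · rintro ⟨k, hk⟩
      refine ⟨(e0 (-k - m) (-k) : Dι 0 → ℤ), ?_⟩
      rw [iN0 h]
      congr 1 <;> push_cast at * <;> lia
    · rintro ⟨w, hw⟩
      obtain ⟨a, b, rfl⟩ : ∃ a b, w = (e0 a b : Dι 0 → ℤ) := e0_surj w
      rw [iN0 h] at hw
      have h1 := congrArg (qy' 0) hw
      change -2 * b = y' at h1
      exact ⟨-b, by push_cast; lia⟩

lemma HN2 (h : Sg D (-1)) : HIs (cD D) ℤ 2 (ZMod 4) := by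
  refine ⟨(rd 4).comp (qx' 1 - qs - qs), fun q => ?_, ?_⟩
  · obtain ⟨a, ha⟩ := rd_surj q
    refine ⟨v2 0 a a (-a) 0 0, ?_, ?_⟩
    · rw [iN2 h, v3_zero]; lia
    · show rd 4 (a - 0 - 0) = q
      rw [sub_zero, sub_zero, ha]
  · intro x hx
    obtain ⟨x, y, x', y', z, s, rfl⟩ := v2_surj x
    rw [iN2 h, v3_zero] at hx
    show rd 4 (x' - s - s) = 0 ↔ _
    rw [rd_zero]
    constructor
    · rintro ⟨k, hk⟩
      push_cast at hk
      refine ⟨v1 (-k) (s + 2 * k - z) (s + 2 * k) 0 0, ?_⟩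
      rw [iN1 h]
      congr 1 <;> lia
    · rintro ⟨w, hw⟩
      obtain ⟨a, b, a', b', m, rfl⟩ := v1_surj w
      rw [iN1 h] at hw
      have h1 := congrArg (qx' 1) hw
      have h2 := congrArg qs hw
      change 2 * a' = x' at h1
      change 2 * a + a' - 2 * b' - 4 * m = s at h2
      exact ⟨-a + b' + 2 * m, by push_cast; lia⟩

lemma HN3 (h : Sg D (-1)) : HIs (cD D) ℤ 3 (ZMod 2 × ZMod 2) := by
  refine ⟨((rd 2).comp (qx 2)).prod ((rd 2).comp (qy' 2)), fun q => ?_, ?_⟩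
  · obtain ⟨a, ha⟩ := rd_surj q.1
    obtain ⟨b, hb⟩ := rd_surj q.2
    refine ⟨v3 a 0 0 b 0, ?_, Prod.ext ha hb⟩
    rw [iN3 h, v4_zero]; lia
  · intro x hx
    obtain ⟨x, y, x', y', t, rfl⟩ := v3_surj x
    rw [iN3 h, v4_zero] at hx
    refine Prod.mk_eq_zero.trans ?_
    show rd 2 x = 0 ∧ rd 2 y' = 0 ↔ _
    rw [rd_zero, rd_zero]
    constructor
    · rintro ⟨⟨k, hk⟩, ⟨l, hl⟩⟩
      refine ⟨v2 (-k) (l - t) 0 (-l) 0 0, ?_⟩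
      rw [iN2 h]
      congr 1 <;> push_cast at * <;> lia
    · rintro ⟨w, hw⟩
      obtain ⟨a, b, a', b', z, s, rfl⟩ := v2_surj w
      rw [iN2 h] at hw
      have h1 := congrArg (qx 2) hw
      have h2 := congrArg (qy' 2) hw
      change -2 * a = x at h1
      change -2 * a' - 2 * b' = y' at h2
      exact ⟨⟨-a, by push_cast; lia⟩, ⟨-a' - b', by push_cast; lia⟩⟩

end IntSec
end Crx

namespace Crx
set_option linter.unusedSectionVars false
set_option linter.unusedSimpArgs false
set_option linter.unusedVariables false

section Fin
open CategoryTheory CategoryTheory.Limits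

lemma equiv_of_ker {A B C : Type} [AddCommGroup A] [AddCommGroup B] [AddCommGroup C]
    (f : A →+ B) (g : A →+ C) (hf : Function.Surjective f) (hg : Function.Surjective g)
    (h : ∀ x, f x = 0 ↔ g x = 0) : Nonempty (B ≃+ C) := by
  have hk : f.ker = g.ker := by
    ext x; exact h x
  exact ⟨((QuotientAddGroup.quotientKerEquivOfSurjective f hf).symm.trans
    (QuotientAddGroup.quotientAddEquivOfEq hk)).trans
    (QuotientAddGroup.quotientKerEquivOfSurjective g hg)⟩

lemma sc_homology {k : Type} [CommRing k] (S : ShortComplex (ModuleCat.{0} k)) {Q : Type}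
    [AddCommGroup Q] (φ : S.X₂ →+ Q) (h1 : ∀ q, ∃ x, S.g.hom x = 0 ∧ φ x = q)
    (h2 : ∀ x, S.g.hom x = 0 → (φ x = 0 ↔ ∃ y, S.f.hom y = x)) :
    Nonempty (S.homology ≃+ Q) := by
  have e := S.moduleCatHomologyIso.toLinearEquiv.toAddEquiv
  let f : LinearMap.ker S.g.hom →+ S.moduleCatLeftHomologyData.H :=
    (Submodule.mkQ (LinearMap.range S.moduleCatToCycles)).toAddMonoidHom
  let g : LinearMap.ker S.g.hom →+ Q := φ.comp (LinearMap.ker S.g.hom).subtype.toAddMonoidHom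
  obtain ⟨e'⟩ := equiv_of_ker f g (Submodule.mkQ_surjective _)
    (fun q => by
      obtain ⟨x, hx, hq⟩ := h1 q
      exact ⟨⟨x, hx⟩, hq⟩)
    (fun x => by
      refine (Submodule.Quotient.mk_eq_zero _).trans ?_
      refine Iff.trans ?_ (h2 x.1 x.2).symm
      constructor
      · rintro ⟨y, hy⟩
        exact ⟨y, congrArg Subtype.val hy⟩
      · rintro ⟨y, hy⟩
        exact ⟨y, Subtype.ext hy⟩)
  exact ⟨e.trans e'⟩

/-- trivial coefficients -/
noncomputable abbrev ZA : Rep.{0} ℤ Gam := Rep.trivial ℤ Gam ℤ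

/-- the action on the integers -/
noncomputable instance modZ : Module RG ℤ := modRG ZA

lemma modZ_smul (g : Gam) (c x : ℤ) : (MonoidAlgebra.single g c : RG) • x = c * x :=
  modRG_smul ZA g c x

lemma T_homology {n : ℕ} {Q : Type} [AddCommGroup Q] (h : HIs CX ℤ (n + 1) Q) :
    Nonempty ((Tobj ZA).homology (n + 1) ≃+ Q) := by
  obtain ⟨φ, h1, h2⟩ := h
  have e := ((ShortComplex.homologyMapIso ((Tobj ZA).isoSc' n (n + 1) (n + 2)
    (by simp) (by simp)))).toLinearEquiv.toAddEquiv
  obtain ⟨e'⟩ := sc_homology ((Tobj ZA).sc' n (n + 1) (n + 2)) (Q := Q) φ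
    (fun q => by
      obtain ⟨x, hx, hq⟩ := h1 q
      exact ⟨x, (Tker ZA (n + 1) x).trans hx, hq⟩)
    (fun x hx => by
      refine (h2 x ((Tker ZA (n + 1) x).symm.trans hx)).trans ?_
      constructor
      · rintro ⟨y, hy⟩
        exact ⟨y, (Tker ZA n y).trans hy⟩
      · rintro ⟨y, hy⟩
        exact ⟨y, (Tker ZA n y).symm.trans hy⟩)
  exact ⟨e.trans e'⟩

lemma gc_of_HIs {n : ℕ} {Q Q' : Type} [AddCommGroup Q] [AddCommGroup Q'] (h : HIs CX ℤ (n + 1) Q)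
    (e : Q ≃+ Q') : Nonempty (groupCohomology ZA (n + 1) ≃+ Q') := by
  obtain ⟨i⟩ := gc_iso ZA (n + 1)
  obtain ⟨e'⟩ := T_homology h
  exact ⟨(i.toLinearEquiv.toAddEquiv.trans e').trans e⟩

lemma sg_toDat (g : GDat) (ε : ℤ) (hε : ε * ε = 1) : Sg (g.toDat ε hε) ε where
  σ := modZ_smul _ _
  σi := modZ_smul _ _
  τ := modZ_smul _ _
  s := fun x => (modZ_smul _ _ x).trans (one_mul x)
  p := fun x => (modZ_smul _ _ x).trans (one_mul x)
  r := fun x => (modZ_smul _ _ x).trans (one_mul x)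

lemma s00 : Sg D₀₀ 1 := sg_toDat _ _ _
lemma s11 : Sg D₁₁ 1 := sg_toDat _ _ _
lemma s10 : Sg D₁₀ (-1) := sg_toDat _ _ _
lemma s01 : Sg D₀₁ (-1) := sg_toDat _ _ _

lemma c_smul (g : Gam) (x : ℤ) : (1 - MonoidAlgebra.single g 1 : RG) • x = 0 := by
  rw [sub_smul, one_smul, modZ_smul, one_mul, sub_self]

lemma scal_c₁ {α : Type} [Fintype α] (x : α → ℤ) : act (scal c₁ α) x = 0 := by
  rw [act_scal]; funext i; exact c_smul _ _
lemma scal_c₂ {α : Type} [Fintype α] (x : α → ℤ) : act (scal c₂ α) x = 0 := by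
  rw [act_scal]; funext i; exact c_smul _ _

lemma HX1 {Q₁ Q₂ Q₃ : Type} [AddCommGroup Q₁] [AddCommGroup Q₂] [AddCommGroup Q₃]
    (h1 : HIs (cD D₀₀) ℤ 1 Q₁) (h2 : HIs (cD D₁₀) ℤ 0 Q₂) (h3 : HIs (cD D₀₁) ℤ 0 Q₃) :
    HIs CX ℤ 1 ((Q₁ × Q₂) × Q₃) :=
  HIs.cone_succ (fun n x => scal_c₂ x) (HIs.cone_succ (fun n x => scal_c₁ x) h1 h2)
    (HIs.cone_zero (fun n x => scal_c₁ x) h3)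

lemma HX2 {n : ℕ} {Q₁ Q₂ Q₃ Q₄ : Type} [AddCommGroup Q₁] [AddCommGroup Q₂] [AddCommGroup Q₃]
    [AddCommGroup Q₄]
    (h1 : HIs (cD D₀₀) ℤ (n + 2) Q₁) (h2 : HIs (cD D₁₀) ℤ (n + 1) Q₂)
    (h3 : HIs (cD D₀₁) ℤ (n + 1) Q₃) (h4 : HIs (cD D₁₁) ℤ n Q₄) :
    HIs CX ℤ (n + 2) ((Q₁ × Q₂) × (Q₃ × Q₄)) :=
  HIs.cone_succ (fun n x => scal_c₂ x) (HIs.cone_succ (fun n x => scal_c₁ x) h1 h2)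
    (HIs.cone_succ (fun n x => scal_c₁ x) h3 h4)

/-- rearrangement -/
def eq1 : (ℤ × PUnit) × PUnit ≃+ ℤ where
  toFun x := x.1.1
  invFun x := ((x, ⟨⟩), ⟨⟩)
  left_inv _ := rfl
  right_inv _ := rfl
  map_add' _ _ := rfl

lemma fin2 {A : Type} [AddCommGroup A] (x : Fin 2 → A) : ![x 0, x 1] = x := by
  funext i; fin_cases i <;> rfl
lemma fin5 {A : Type} [AddCommGroup A] (x : Fin 5 → A) : ![x 0, x 1, x 2, x 3, x 4] = x := by
  funext i; fin_cases i <;> rfl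
lemma fin6 {A : Type} [AddCommGroup A] (x : Fin 6 → A) : ![x 0, x 1, x 2, x 3, x 4, x 5] = x := by
  funext i; fin_cases i <;> rfl

/-- rearrangement -/
def eq2 {A B C : Type} [AddCommGroup A] [AddCommGroup B] [AddCommGroup C] :
    ((A × B) × C) × (C × A) ≃+ (Fin 2 → A) × B × (Fin 2 → C) where
  toFun x := (![x.1.1.1, x.2.2], x.1.1.2, ![x.1.2, x.2.1])
  invFun y := (((y.1 0, y.2.1), y.2.2 0), (y.2.2 1, y.1 1))
  left_inv _ := rfl
  right_inv y := Prod.ext (fin2 _) (Prod.ext rfl (fin2 _))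
  map_add' x y := by
    refine Prod.ext ?_ (Prod.ext rfl ?_) <;> funext i <;> fin_cases i <;> rfl

/-- rearrangement -/
def eq3 {A B C : Type} [AddCommGroup A] [AddCommGroup B] [AddCommGroup C] :
    ((A × C) × B) × (B × A) ≃+ (Fin 2 → A) × (Fin 2 → B) × C where
  toFun x := (![x.1.1.1, x.2.2], ![x.1.2, x.2.1], x.1.1.2)
  invFun y := (((y.1 0, y.2.2), y.2.1 0), (y.2.1 1, y.1 1))
  left_inv _ := rfl
  right_inv y := Prod.ext (fin2 _) (Prod.ext (fin2 _) rfl)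
  map_add' x y := by
    refine Prod.ext ?_ (Prod.ext ?_ rfl) <;> funext i <;> fin_cases i <;> rfl

/-- rearrangement -/
def eq4 {A B C : Type} [AddCommGroup A] [AddCommGroup B] [AddCommGroup C] :
    ((B × C) × (C × C)) × ((C × C) × (A × B)) ≃+ A × (Fin 2 → B) × (Fin 5 → C) where
  toFun x := (x.2.2.1, ![x.1.1.1, x.2.2.2], ![x.1.1.2, x.1.2.1, x.1.2.2, x.2.1.1, x.2.1.2])
  invFun y := (((y.2.1 0, y.2.2 0), (y.2.2 1, y.2.2 2)), ((y.2.2 3, y.2.2 4), (y.1, y.2.1 1)))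
  left_inv _ := rfl
  right_inv y := Prod.ext rfl (Prod.ext (fin2 _) (fin5 _))
  map_add' x y := by
    refine Prod.ext rfl (Prod.ext ?_ ?_) <;> funext i <;> fin_cases i <;> rfl

/-- rearrangement -/
def eq5 {A B C : Type} [AddCommGroup A] [AddCommGroup B] [AddCommGroup C] :
    ((B × C) × (C × C)) × ((C × C) × (A × C)) ≃+ A × B × (Fin 6 → C) where
  toFun x := (x.2.2.1, x.1.1.1,
    ![x.1.1.2, x.1.2.1, x.1.2.2, x.2.1.1, x.2.1.2, x.2.2.2])
  invFun y := (((y.2.1, y.2.2 0), (y.2.2 1, y.2.2 2)), ((y.2.2 3, y.2.2 4), (y.1, y.2.2 5)))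
  left_inv _ := rfl
  right_inv y := Prod.ext rfl (Prod.ext rfl (fin6 _))
  map_add' x y := by
    refine Prod.ext rfl (Prod.ext rfl ?_) <;> funext i <;> fin_cases i <;> rfl

/-- rearrangement -/
def eq6 {B C : Type} [AddCommGroup B] [AddCommGroup C] :
    ((B × C) × (C × C)) × ((C × C) × (B × C)) ≃+ (Fin 2 → B) × (Fin 6 → C) where
  toFun x := (![x.1.1.1, x.2.2.1],
    ![x.1.1.2, x.1.2.1, x.1.2.2, x.2.1.1, x.2.1.2, x.2.2.2])
  invFun y := (((y.1 0, y.2 0), (y.2 1, y.2 2)), ((y.2 3, y.2 4), (y.1 1, y.2 5)))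
  left_inv _ := rfl
  right_inv y := Prod.ext (fin2 _) (fin6 _)
  map_add' x y := by
    refine Prod.ext ?_ ?_ <;> funext i <;> fin_cases i <;> rfl

lemma main1 : Nonempty (groupCohomology ZA 1 ≃+ ℤ) :=
  gc_of_HIs (n := 0) (HX1 (HP1 s00) (HN0 s10) (HN0 s01)) eq1
lemma main2 : Nonempty (groupCohomology ZA 2 ≃+ (Fin 2 → ℤ) × ZMod 4 × (Fin 2 → ZMod 2)) :=
  gc_of_HIs (n := 1) (HX2 (HP2 s00) (HN1 s10) (HN1 s01) (HP0 s11)) eq2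
lemma main3 : Nonempty (groupCohomology ZA 3 ≃+ (Fin 2 → ℤ) × (Fin 2 → ZMod 4) × ZMod 2) :=
  gc_of_HIs (n := 2) (HX2 (HP3 s00) (HN2 s10) (HN2 s01) (HP1 s11)) eq3
lemma main4 : Nonempty (groupCohomology ZA 4 ≃+ ℤ × (Fin 2 → ZMod 4) × (Fin 5 → ZMod 2)) :=
  gc_of_HIs (n := 3) (HX2 (HP4 s00 0) (HN3 s10) (HN3 s01) (HP2 s11)) eq4
lemma main5 : Nonempty (groupCohomology ZA 5 ≃+ ℤ × ZMod 4 × (Fin 6 → ZMod 2)) :=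
  gc_of_HIs (n := 4) (HX2 (HP4 s00 1) (HN4 s10 0) (HN4 s01 0) (HP3 s11)) eq5
lemma main6 (n : ℕ) :
    Nonempty (groupCohomology ZA (n + 6) ≃+ (Fin 2 → ZMod 4) × (Fin 6 → ZMod 2)) :=
  gc_of_HIs (n := n + 5) (HX2 (n := n + 4) (HP4 s00 (n + 2)) (HN4 s10 (n + 1)) (HN4 s01 (n + 1))
    (HP4 s11 n)) eq6

end Fin
end Crx

theorem cohomology_min81_1_2 :
    Nonempty (H 1 ≃+ ℤ) ∧
    Nonempty (H 2 ≃+ ((Fin 2 → ℤ) × ZMod 4 × (Fin 2 → ZMod 2))) ∧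
    Nonempty (H 3 ≃+ ((Fin 2 → ℤ) × (Fin 2 → ZMod 4) × ZMod 2)) ∧
    Nonempty (H 4 ≃+ (ℤ × (Fin 2 → ZMod 4) × (Fin 5 → ZMod 2))) ∧
    Nonempty (H 5 ≃+ (ℤ × ZMod 4 × (Fin 6 → ZMod 2))) ∧
    (∀ i, 6 ≤ i → Nonempty (H i ≃+ ((Fin 2 → ZMod 4) × (Fin 6 → ZMod 2)))) := by
  refine ⟨Crx.main1, Crx.main2, Crx.main3, Crx.main4, Crx.main5, fun i hi => ?_⟩
  obtain ⟨n, rfl⟩ := Nat.exists_eq_add_of_le' hi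
  exact Crx.main6 n
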